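/- arXiv:1003.3852 — 6 statements merged into one kernel-verified Lean document; each statement's English description precedes it below -/
import Mathlib

section
/- (Talagrand's transport inequality for the Gaussian measure) Let γ be the standard Gaussian measure N(0,1) on ℝ. Then for every Borel probability measure ν on ℝ, W₂²(ν, γ) ≤ 2 H(ν|γ), where W₂ is the Wasserstein distance of order 2 for the distance d(x,y) = |x − y|. -/
open MeasureTheory ENNReal

/-- The optimal transport cost `𝒯_c(ν, μ)` associated with the cost function `c`:
the infimum of `∫ c dπ` over all couplings `π` of `ν` and `μ`. -/
noncomputable def optCost {X : Type*} [MeasurableSpace X] (c : X → X → ℝ)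
    (ν μ : Measure X) : ℝ≥0∞ :=
  ⨅ (π : Measure (X × X)) (_ : π.map Prod.fst = ν ∧ π.map Prod.snd = μ),
    ∫⁻ p, ENNReal.ofReal (c p.1 p.2) ∂π

open Classical in
/-- The relative entropy `H(ν|μ)`: it equals `∫ h(dν/dμ) dμ` with
`h(t) = t log t - t + 1 ≥ 0` if `ν ≪ μ`, and `+∞` otherwise.  For probability
measures `ν ≪ μ` this coincides with `∫ log (dν/dμ) dν`. -/
noncomputable def relEntropy {X : Type*} [MeasurableSpace X] (ν μ : Measure X) : ℝ≥0∞ :=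
  if ν ≪ μ then
    ∫⁻ x, ENNReal.ofReal ((ν.rnDeriv μ x).toReal * Real.log (ν.rnDeriv μ x).toReal
      - (ν.rnDeriv μ x).toReal + 1) ∂μ
  else ∞


open ProbabilityTheory Set Filter Topology

/-- The cdf of an atomless probability measure is continuous. -/
lemma tal_cdf_continuous (μ : Measure ℝ) [IsProbabilityMeasure μ] (h : ∀ x, μ {x} = 0) :
    Continuous (cdf μ) := by
  rw [continuous_iff_continuousAt]
  intro x
  have h1 := StieltjesFunction.measure_singleton (cdf μ) x
  rw [measure_cdf, h x] at h1
  have h2 : cdf μ x - Function.leftLim (cdf μ) x ≤ 0 := ENNReal.ofReal_eq_zero.1 h1.symm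
  have h3 := (monotone_cdf μ).leftLim_le (le_refl x)
  rw [(monotone_cdf μ).continuousAt_iff_leftLim_eq_rightLim, StieltjesFunction.rightLim_eq]
  linarith

lemma tal_cdf_surj (μ : Measure ℝ) [IsProbabilityMeasure μ] (h : ∀ x, μ {x} = 0)
    {u : ℝ} (h0 : 0 < u) (h1 : u < 1) : ∃ x, cdf μ x = u := by
  have hc := tal_cdf_continuous μ h
  obtain ⟨a, ha⟩ := ((tendsto_cdf_atBot μ).eventually (gt_mem_nhds h0)).exists
  obtain ⟨b, hb⟩ := ((tendsto_cdf_atTop μ).eventually (lt_mem_nhds h1)).exists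
  exact mem_range_of_exists_le_of_exists_ge hc ⟨a, ha.le⟩ ⟨b, hb.le⟩

/-- The cdf pushes an atomless measure to the uniform distribution. -/
lemma tal_cdf_sublevel (μ : Measure ℝ) [IsProbabilityMeasure μ] (h : ∀ x, μ {x} = 0)
    {u : ℝ} (h0 : 0 < u) (h1 : u < 1) : μ {z | cdf μ z ≤ u} = ENNReal.ofReal u := by
  have hc := tal_cdf_continuous μ h
  obtain ⟨x1, hx1⟩ := tal_cdf_surj μ h h0 h1
  obtain ⟨b, hb⟩ := ((tendsto_cdf_atTop μ).eventually (lt_mem_nhds h1)).exists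
  have hcl : IsClosed {z | cdf μ z ≤ u} := isClosed_le hc continuous_const
  have hbd : BddAbove {z | cdf μ z ≤ u} := by
    refine ⟨b, fun z hz => ?_⟩
    by_contra hlt
    have := monotone_cdf μ (not_le.1 hlt).le
    have hz' : cdf μ z ≤ u := hz
    linarith
  have hx1m : x1 ∈ {z | cdf μ z ≤ u} := hx1.le
  have hmem := hcl.csSup_mem ⟨x1, hx1m⟩ hbd
  set x0 := sSup {z | cdf μ z ≤ u}
  have hx0 : cdf μ x0 = u := by
    apply le_antisymm hmem
    rw [← hx1]
    exact monotone_cdf μ (le_csSup hbd hx1m)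
  have : {z | cdf μ z ≤ u} = Iic x0 := by
    ext z
    constructor
    · intro hz; exact le_csSup hbd hz
    · intro hz
      have := monotone_cdf μ (show z ≤ x0 from hz)
      show cdf μ z ≤ u
      linarith
  rw [this, ← ofReal_cdf, hx0]

lemma tal_gauss_atom (x : ℝ) : gaussianReal 0 1 {x} = 0 := by
  have := nullSingletonClass_gaussianReal (μ := 0) (v := 1) one_ne_zero
  exact measure_singleton x

lemma tal_gauss_cdf_strictMono : StrictMono (cdf (gaussianReal 0 1)) := by
  intro a b hab
  have h1 := StieltjesFunction.measure_Ioc (cdf (gaussianReal 0 1)) a b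
  rw [measure_cdf] at h1
  by_contra hle
  rw [ENNReal.ofReal_of_nonpos (by linarith)] at h1
  have := gaussianReal_absolutelyContinuous' 0 (v := 1) one_ne_zero h1
  simp at this
  linarith

lemma tal_gauss_cdf_pos (x : ℝ) : 0 < cdf (gaussianReal 0 1) x :=
  (cdf_nonneg _ (x-1)).trans_lt (tal_gauss_cdf_strictMono (by linarith))

lemma tal_gauss_cdf_lt_one (x : ℝ) : cdf (gaussianReal 0 1) x < 1 :=
  (tal_gauss_cdf_strictMono (show x < x+1 by linarith)).trans_le (cdf_le_one _ _)

/-- Monotone transport of an atomless measure onto the Gaussian. -/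
lemma tal_transport (ν : Measure ℝ) [IsProbabilityMeasure ν] (h : ∀ x, ν {x} = 0) :
    ∃ (s : ℝ → ℝ) (A : Set ℝ), Measurable s ∧ MeasurableSet A ∧ ν Aᶜ = 0 ∧
      ν.map s = gaussianReal 0 1 ∧
      (∀ x ∈ A, {z | z ≤ x} =ᵐ[ν] {z | s z ≤ s x}) ∧
      (∀ x, x ∉ A → ν (Iic x) = 0 ∨ ν (Iic x)ᶜ = 0) := by
  classical
  have hc := tal_cdf_continuous ν h
  set γ := gaussianReal 0 1 with hγ
  set A : Set ℝ := {x | 0 < cdf ν x ∧ cdf ν x < 1} with hA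
  have hAm : MeasurableSet A :=
    ((isOpen_lt continuous_const hc).inter (isOpen_lt hc continuous_const)).measurableSet
  have hex : ∀ x ∈ A, ∃ y, cdf γ y = cdf ν x := fun x hx =>
    tal_cdf_surj γ tal_gauss_atom hx.1 hx.2
  set s : ℝ → ℝ := fun x => if hx : x ∈ A then (hex x hx).choose else 0 with hs
  have hsA : ∀ x ∈ A, cdf γ (s x) = cdf ν x := by
    intro x hx
    simp only [hs, dif_pos hx]
    exact (hex x hx).choose_spec
  have hs0 : ∀ x, x ∉ A → s x = 0 := fun x hx => by simp only [hs, dif_neg hx]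
  have hle : ∀ x ∈ A, ∀ y, s x ≤ y ↔ cdf ν x ≤ cdf γ y := by
    intro x hx y
    rw [← hsA x hx, tal_gauss_cdf_strictMono.le_iff_le]
  have hAc : ν Aᶜ = 0 := by
    have h0 : ν {z | cdf ν z ≤ 0} = 0 := by
      refine le_antisymm (ENNReal.le_of_forall_pos_le_add ?_) (zero_le)
      intro ε hε _
      set u : ℝ := min ε (1/2)
      have hu0 : 0 < u := lt_min hε (by norm_num)
      have hu1 : u < 1 := (min_le_right _ _).trans_lt (by norm_num)
      calc ν {z | cdf ν z ≤ 0} ≤ ν {z | cdf ν z ≤ u} :=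
            measure_mono fun z hz => le_trans hz hu0.le
        _ = ENNReal.ofReal u := tal_cdf_sublevel ν h hu0 hu1
        _ ≤ ENNReal.ofReal ε := ENNReal.ofReal_le_ofReal (min_le_left _ _)
        _ = 0 + ε := by simp
    have h1 : ν {z | 1 ≤ cdf ν z} = 0 := by
      refine le_antisymm (ENNReal.le_of_forall_pos_le_add ?_) (zero_le)
      intro ε hε _
      set u : ℝ := min ε (1/2)
      have hu0 : 0 < u := lt_min hε (by norm_num)
      have hu1 : u < 1 := (min_le_right _ _).trans_lt (by norm_num)
      calc ν {z | 1 ≤ cdf ν z} ≤ ν {z | cdf ν z ≤ 1 - u}ᶜ :=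
            measure_mono fun z hz => by
              simp only [mem_compl_iff, mem_ofPred_eq] at hz ⊢; linarith
        _ = 1 - ENNReal.ofReal (1 - u) := by
            rw [prob_compl_eq_one_sub (isClosed_le hc continuous_const).measurableSet,
              tal_cdf_sublevel ν h (by linarith) (by linarith)]
        _ = ENNReal.ofReal u := by
            rw [← ENNReal.ofReal_one, ← ENNReal.ofReal_sub _ (by linarith)]; congr 1; ring
        _ ≤ ENNReal.ofReal ε := ENNReal.ofReal_le_ofReal (min_le_left _ _)
        _ = 0 + ε := by simp
    refine measure_mono_null ?_ (measure_union_null h0 h1)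
    intro z hz
    by_cases h : cdf ν z ≤ 0
    · exact Or.inl h
    · right
      by_contra h'
      exact hz ⟨not_le.1 h, not_le.1 h'⟩
  have haeA : ∀ᵐ z ∂ν, z ∈ A := hAc
  have hsm : Measurable s := by
    apply measurable_of_Iic
    intro y
    have : s ⁻¹' Iic y = (A ∩ {z | cdf ν z ≤ cdf γ y}) ∪ (Aᶜ ∩ {_z | 0 ≤ y}) := by
      ext z
      by_cases hz : z ∈ A
      · simp [hz, hle z hz]
      · simp [hz, hs0 z hz]
    rw [this]
    exact (hAm.inter (isClosed_le hc continuous_const).measurableSet).union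
      (hAm.compl.inter (MeasurableSet.const _))
  have hsub : ∀ y, ν {z | s z ≤ y} = ENNReal.ofReal (cdf γ y) := by
    intro y
    rw [← tal_cdf_sublevel ν h (tal_gauss_cdf_pos y) (tal_gauss_cdf_lt_one y)]
    apply measure_congr
    filter_upwards [haeA] with z hz
    exact propext (hle z hz y)
  refine ⟨s, A, hsm, hAm, hAc, ?_, ?_, ?_⟩
  · have : IsProbabilityMeasure (ν.map s) := Measure.isProbabilityMeasure_map hsm.aemeasurable
    apply Measure.ext_of_Iic
    intro y
    rw [Measure.map_apply hsm measurableSet_Iic, ← ofReal_cdf]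
    exact hsub y
  · intro x hx
    have hsubset : ({z | z ≤ x} : Set ℝ) ≤ᵐ[ν] {z | s z ≤ s x} := by
      filter_upwards [haeA] with z hz hzx
      show s z ≤ s x
      rw [hle z hz, hsA x hx]
      exact monotone_cdf ν hzx
    refine ae_eq_of_ae_subset_of_measure_ge hsubset ?_ measurableSet_Iic.nullMeasurableSet
      (measure_ne_top _ _)
    rw [hsub, hsA x hx, ofReal_cdf]; rfl
  · intro x hx
    by_cases h0 : cdf ν x ≤ 0
    · left
      rw [← ofReal_cdf, ENNReal.ofReal_of_nonpos h0]
    · right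
      have h1 : cdf ν x = 1 := by
        apply le_antisymm (cdf_le_one _ _)
        by_contra h'
        exact hx ⟨not_le.1 h0, not_le.1 h'⟩
      rw [prob_compl_eq_zero_iff measurableSet_Iic, ← ofReal_cdf, h1, ENNReal.ofReal_one]

lemma tal_pdf (x : ℝ) : gaussianPDFReal 0 1 x = (√(2 * Real.pi))⁻¹ * Real.exp (-(1/2) * x ^ 2) := by
  rw [gaussianPDFReal]
  simp
  left
  ring

lemma tal_gauss_Iic (a : ℝ) :
    ∫ y in Iic a, y ∂(gaussianReal 0 1) = - gaussianPDFReal 0 1 a := by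
  rw [← integral_indicator measurableSet_Iic, integral_gaussianReal_eq_integral_smul one_ne_zero]
  have : (fun x => gaussianPDFReal 0 1 x • (Iic a).indicator (fun y : ℝ => y) x)
      = (Iic a).indicator (fun y => gaussianPDFReal 0 1 y * y) := by
    ext x; by_cases hx : x ∈ Iic a <;> simp [hx]
  rw [this, integral_indicator measurableSet_Iic]
  have hI : Integrable (fun y => gaussianPDFReal 0 1 y * y) := by
    have := (integrable_mul_exp_neg_mul_sq (b := 1/2) (by norm_num)).const_mul (√(2 * Real.pi))⁻¹
    refine this.congr (ae_of_all _ fun x => ?_)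
    simp only [tal_pdf]; ring
  have hd : ∀ x ∈ Iic a, HasDerivAt (fun y => - gaussianPDFReal 0 1 y)
      (gaussianPDFReal 0 1 x * x) x := by
    intro x _
    simp only [tal_pdf]
    have h1 : HasDerivAt (fun y : ℝ => -(1/2) * y ^ 2) (-x) x := by
      have h2 := (hasDerivAt_pow 2 x).const_mul (-(1/2) : ℝ)
      refine h2.congr_deriv ?_
      push_cast; ring
    refine (h1.exp.const_mul (√(2 * Real.pi))⁻¹).neg.congr_deriv ?_
    ring
  have ht : Tendsto (fun y => - gaussianPDFReal 0 1 y) atBot (𝓝 0) := by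
    simp only [funext tal_pdf]
    have h1 : Tendsto (fun y : ℝ => -(1/2) * y ^ 2) atBot atBot := by
      apply Tendsto.const_mul_atTop_of_neg (by norm_num)
      have h3 := (tendsto_pow_atTop (α := ℝ) two_ne_zero).comp tendsto_abs_atBot_atTop
      refine h3.congr fun y => ?_
      simp
    have h2 := ((Real.tendsto_exp_atBot.comp h1).const_mul (√(2 * Real.pi))⁻¹).neg
    simpa using h2
  rw [integral_Iic_of_hasDerivAt_of_tendsto' hd hI.integrableOn ht]
  simp

/-- Layer-cake kernel. -/
noncomputable def talK (z x : ℝ) : ℝ :=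
  if 0 ≤ x then (if x < z then 1 else 0) else (if z ≤ x then -1 else 0)

lemma talK_meas : Measurable (fun p : ℝ × ℝ => talK p.1 p.2) := by
  unfold talK
  refine Measurable.ite (measurableSet_le measurable_const measurable_snd) ?_ ?_
  · exact Measurable.ite (measurableSet_lt measurable_snd measurable_fst) measurable_const
      measurable_const
  · exact Measurable.ite (measurableSet_le measurable_fst measurable_snd) measurable_const
      measurable_const

lemma talK_norm (z : ℝ) : (fun x => ‖talK z x‖) = (Ico (min 0 z) (max 0 z)).indicator 1 := by
  ext x
  simp only [talK, indicator, mem_Ico, min_le_iff, lt_max_iff, Pi.one_apply]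
  by_cases h0 : 0 ≤ x <;> by_cases h1 : x < z <;>
    simp [h0, h1, not_lt.1, not_le.1] <;> grind

lemma talK_integrable (z : ℝ) : Integrable (talK z) := by
  have hm : Measurable (talK z) := talK_meas.comp measurable_prodMk_left
  rw [← integrable_norm_iff hm.aestronglyMeasurable, talK_norm,
    integrable_indicator_iff measurableSet_Ico]
  exact integrableOn_const (by simp)

lemma talK_integral (z : ℝ) : ∫ x, talK z x = z := by
  rcases le_total 0 z with hz | hz
  · have : talK z = (Ico 0 z).indicator 1 := by
      ext x
      simp only [talK, indicator, mem_Ico, Pi.one_apply]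
      grind
    rw [this, integral_indicator measurableSet_Ico]
    simp [hz]
  · have : talK z = (Ico z 0).indicator (fun _ => -1) := by
      ext x
      simp only [talK, indicator, mem_Ico]
      grind
    rw [this, integral_indicator measurableSet_Ico]
    simp [hz]

lemma talK_norm_integral (z : ℝ) : ∫ x, ‖talK z x‖ = |z| := by
  rw [talK_norm, integral_indicator measurableSet_Ico]
  rcases le_total 0 z with hz | hz <;> simp [hz, abs_of_nonneg, abs_of_nonpos]

/-- Integration by parts, through Fubini. -/
lemma tal_parts (ν : Measure ℝ) [IsProbabilityMeasure ν] (s : ℝ → ℝ) (A : Set ℝ)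
    (hs : Measurable s) (hmap : ν.map s = gaussianReal 0 1)
    (hA : ∀ x ∈ A, {z | z ≤ x} =ᵐ[ν] {z | s z ≤ s x})
    (hAc : ∀ x, x ∉ A → ν (Iic x) = 0 ∨ ν (Iic x)ᶜ = 0)
    (hzs : Integrable (fun z => z * s z) ν) :
    Integrable (A.indicator (fun x => gaussianPDFReal 0 1 (s x))) ∧
      ∫ x, A.indicator (fun x => gaussianPDFReal 0 1 (s x)) x = ∫ z, z * s z ∂ν := by
  have hsint : Integrable s ν := by
    have : Integrable id (ν.map s) := by
      rw [hmap]; exact (memLp_id_gaussianReal 1).integrable le_rfl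
    exact this.comp_measurable hs
  have hs0 : ∫ z, s z ∂ν = 0 := by
    have h := integral_map hs.aemeasurable (μ := ν) (f := fun y : ℝ => y)
      measurable_id.aestronglyMeasurable
    rw [hmap, integral_id_gaussianReal] at h
    exact h.symm
  have hcompl : ∀ x, ∫ z in (Iic x)ᶜ, s z ∂ν = - ∫ z in Iic x, s z ∂ν := by
    intro x
    have := integral_add_compl (measurableSet_Iic (a := x)) hsint
    linarith
  have hIic : ∀ x, ∫ z in Iic x, s z ∂ν
      = - A.indicator (fun x => gaussianPDFReal 0 1 (s x)) x := by
    intro x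
    by_cases hx : x ∈ A
    · rw [indicator_of_mem hx, ← tal_gauss_Iic, ← hmap,
        setIntegral_map (f := fun y : ℝ => y) measurableSet_Iic measurable_id.aestronglyMeasurable hs.aemeasurable]
      exact setIntegral_congr_set (hA x hx)
    · rw [indicator_of_notMem hx, neg_zero]
      rcases hAc x hx with h | h
      · exact setIntegral_measure_zero _ h
      · have h2 := setIntegral_measure_zero s h
        rw [hcompl] at h2
        linarith
  have hG : ∀ x, ∫ z, s z * talK z x ∂ν
      = A.indicator (fun x => gaussianPDFReal 0 1 (s x)) x := by
    intro x
    by_cases h0 : 0 ≤ x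
    · have : (fun z => s z * talK z x) = ((Iic x)ᶜ).indicator s := by
        ext z; by_cases hz : x < z <;> simp [talK, h0, hz, indicator]
      rw [this, integral_indicator measurableSet_Iic.compl, hcompl, hIic, neg_neg]
    · have : (fun z => s z * talK z x) = (Iic x).indicator (fun z => - s z) := by
        ext z; by_cases hz : z ≤ x <;> simp [talK, h0, hz, indicator]
      rw [this, integral_indicator measurableSet_Iic, integral_neg, hIic, neg_neg]
  have hprod : Integrable (Function.uncurry fun z x => s z * talK z x) (ν.prod volume) := by
    rw [integrable_prod_iff]
    · constructor
      · exact ae_of_all _ fun z => (talK_integrable z).const_mul (s z)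
      · refine hzs.norm.congr (ae_of_all _ fun z => ?_)
        simp only [Function.uncurry_apply_pair, norm_mul, integral_const_mul, talK_norm_integral]
        rw [mul_comm, Real.norm_eq_abs z]
    · exact ((hs.comp measurable_fst).mul talK_meas).aestronglyMeasurable
  constructor
  · have := hprod.integral_prod_right
    refine this.congr (ae_of_all _ fun x => ?_)
    exact hG x
  · rw [← integral_congr_ae (ae_of_all _ hG), ← integral_integral_swap hprod]
    refine integral_congr_ae (ae_of_all _ fun z => ?_)
    simp only [integral_const_mul, talK_integral, mul_comm]

lemma tal_young (f t : ℝ) (hf : 0 ≤ f) : f * t ≤ f * Real.log f - f + Real.exp t := by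
  rcases hf.eq_or_lt with rfl | hf
  · simp [Real.exp_nonneg]
  · have h := Real.add_one_le_exp (t - Real.log f)
    rw [Real.exp_sub, Real.exp_log hf, le_div_iff₀ hf] at h
    nlinarith

lemma tal_exp_integrable : Integrable (fun x : ℝ => Real.exp (x ^ 2 / 4)) (gaussianReal 0 1) := by
  rw [gaussianReal_of_var_ne_zero _ one_ne_zero, integrable_withDensity_iff_integrable_smul'
    (measurable_gaussianPDF _ _) (ae_of_all _ fun x => gaussianPDF_lt_top)]
  refine ((integrable_exp_neg_mul_sq (b := 1/4) (by norm_num)).const_mul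
    (√(2 * Real.pi))⁻¹).congr (ae_of_all _ fun x => ?_)
  simp only [toReal_gaussianPDF, tal_pdf, smul_eq_mul]
  rw [mul_assoc, ← Real.exp_add]
  congr 2; ring

/-- Talagrand's transport inequality for the standard Gaussian measure on `ℝ`:
`W₂²(ν, γ) ≤ 2 H(ν|γ)` for every Borel probability measure `ν` on `ℝ`, where
`W₂² = 𝒯_{d²}` is the squared Wasserstein distance of order 2 for `d(x,y) = |x − y|`. -/
theorem talagrand_T2_gaussian (ν : Measure ℝ) [IsProbabilityMeasure ν] :
    optCost (fun x y => |x - y| ^ 2) ν (ProbabilityTheory.gaussianReal 0 1) ≤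
      2 * relEntropy ν (ProbabilityTheory.gaussianReal 0 1) := by
  set γ := gaussianReal 0 1 with hγ
  by_cases hac : ν ≪ γ
  swap
  · simp [relEntropy, hac]
  rw [relEntropy, if_pos hac]
  set f : ℝ → ℝ := fun x => (ν.rnDeriv γ x).toReal with hf
  have hfm : Measurable f := (Measure.measurable_rnDeriv ν γ).ennreal_toReal
  have hf0 : ∀ x, 0 ≤ f x := fun x => ENNReal.toReal_nonneg
  set E : ℝ → ℝ := fun x => f x * Real.log (f x) - f x + 1 with hE
  change _ ≤ 2 * ∫⁻ x, ENNReal.ofReal (E x) ∂γ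
  have hE0 : ∀ x, 0 ≤ E x := by
    intro x
    have := tal_young (f x) 0 (hf0 x)
    simp only [mul_zero, Real.exp_zero] at this
    exact this
  have hEm : Measurable E := ((hfm.mul hfm.log).sub hfm).add_const 1
  by_cases htop : ∫⁻ x, ENNReal.ofReal (E x) ∂γ = ∞
  · simp [htop]
  have hEi : Integrable E γ := by
    refine ⟨hEm.aestronglyMeasurable, ?_⟩
    rw [hasFiniteIntegral_iff_ofReal (ae_of_all _ hE0)]
    exact lt_top_iff_ne_top.2 htop
  obtain ⟨s, A, hs, hAm, hAc, hmap, hA, hA'⟩ :=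
    tal_transport ν (fun x => hac (tal_gauss_atom x))
  -- second moments
  have hX2 : Integrable (fun x : ℝ => x ^ 2) ν := by
    rw [← integrable_rnDeriv_smul_iff hac]
    refine ((hEi.const_mul 4).add (tal_exp_integrable.const_mul 4)).mono'
      (hfm.mul (measurable_id.pow_const 2)).aestronglyMeasurable (ae_of_all _ fun x => ?_)
    have := tal_young (f x) (x ^ 2 / 4) (hf0 x)
    change ‖f x * x ^ 2‖ ≤ 4 * E x + 4 * Real.exp (x ^ 2 / 4)
    rw [Real.norm_of_nonneg (mul_nonneg (hf0 x) (sq_nonneg x))]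
    simp only [hE]
    linarith
  have hXL : MemLp (fun x : ℝ => x) 2 ν :=
    (memLp_two_iff_integrable_sq measurable_id.aestronglyMeasurable).2 hX2
  have hSL : MemLp s 2 ν := by
    have : MemLp id 2 (ν.map s) := by rw [hmap]; exact memLp_id_gaussianReal 2
    exact this.comp_of_map hs.aemeasurable
  have hS2 : Integrable (fun x => s x ^ 2) ν := hSL.integrable_sq
  have hS2v : ∫ x, s x ^ 2 ∂ν = 1 := by
    have h := integral_map hs.aemeasurable (μ := ν) (f := fun y : ℝ => y ^ 2)
      (measurable_id.pow_const 2).aestronglyMeasurable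
    rw [← h, hmap]
    have hv := variance_fun_id_gaussianReal (μ := 0) (v := 1)
    rw [variance_of_integral_eq_zero (X := fun x : ℝ => x) measurable_id.aemeasurable integral_id_gaussianReal] at hv
    simpa using hv
  have hXS : Integrable (fun x => x * s x) ν := hXL.integrable_mul hSL
  obtain ⟨hQi, hQv⟩ := tal_parts ν s A hs hmap hA hA' hXS
  set t : ℝ → ℝ := fun x => (x ^ 2 - s x ^ 2) / 2 with ht
  have hti : Integrable t ν := (hX2.sub hS2).div_const 2
  have hft : Integrable (fun x => f x * t x) γ := (integrable_rnDeriv_smul_iff hac).2 hti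
  have hftv : ∫ x, f x * t x ∂γ = ∫ x, t x ∂ν := integral_rnDeriv_smul hac
  have htv : ∫ x, t x ∂ν = (∫ x, x ^ 2 ∂ν - 1) / 2 := by
    simp only [ht]
    rw [integral_div, integral_sub hX2 hS2, hS2v]
  set q : ℝ → ℝ := A.indicator (fun x => Real.exp (t x)) with hq
  have hqQ : ∀ x, gaussianPDFReal 0 1 x * q x
      = A.indicator (fun x => gaussianPDFReal 0 1 (s x)) x := by
    intro x
    by_cases hx : x ∈ A
    · simp only [hq, indicator_of_mem hx, tal_pdf, ht]
      rw [mul_assoc, ← Real.exp_add]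
      congr 2; ring
    · simp [hq, hx]
  have hqi : Integrable q γ := by
    rw [hγ, gaussianReal_of_var_ne_zero _ one_ne_zero, integrable_withDensity_iff_integrable_smul'
      (measurable_gaussianPDF _ _) (ae_of_all _ fun x => gaussianPDF_lt_top)]
    refine hQi.congr (ae_of_all _ fun x => ?_)
    simp only [toReal_gaussianPDF, smul_eq_mul, hqQ]
  have hqv : ∫ x, q x ∂γ = ∫ x, x * s x ∂ν := by
    rw [hγ, integral_gaussianReal_eq_integral_smul one_ne_zero, ← hQv]
    simp only [smul_eq_mul, hqQ]
  have hfA : ∀ᵐ x ∂γ, x ∉ A → f x = 0 := by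
    have h1 : ∫⁻ x in Aᶜ, ν.rnDeriv γ x ∂γ = 0 := by
      rw [Measure.setLIntegral_rnDeriv hac, hAc]
    rw [lintegral_eq_zero_iff (Measure.measurable_rnDeriv ν γ)] at h1
    have h2 := (ae_restrict_iff' hAm.compl).1 h1
    filter_upwards [h2] with x hx hxA
    simp only [hf, hx hxA]; simp
  have key : ∫ x, f x * t x ∂γ ≤ ∫ x, (E x - 1 + q x) ∂γ := by
    refine integral_mono_ae hft ((hEi.sub (integrable_const 1)).add hqi) ?_
    filter_upwards [hfA] with x hx
    by_cases hxA : x ∈ A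
    · have := tal_young (f x) (t x) (hf0 x)
      simp only [hq, indicator_of_mem hxA, hE]
      linarith
    · simp [hq, hxA, hE, hx hxA]
  rw [integral_add (f := fun x => E x - 1) (hEi.sub (integrable_const 1)) hqi,
    integral_sub hEi (integrable_const 1), hqv, hftv, htv] at key
  simp only [integral_const, probReal_univ, smul_eq_mul, mul_one] at key
  have hD : Integrable (fun x => |x - s x| ^ 2) ν := by
    simp only [sq_abs]
    exact (hXL.sub hSL).integrable_sq
  have hDv : ∫ x, |x - s x| ^ 2 ∂ν = ∫ x, x ^ 2 ∂ν - 2 * ∫ x, x * s x ∂ν + 1 := by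
    rw [← hS2v, ← integral_const_mul, ← integral_sub hX2 (hXS.const_mul 2),
      ← integral_add (f := fun a => a ^ 2 - 2 * (a * s a)) (hX2.sub (hXS.const_mul 2)) hS2]
    refine integral_congr_ae (ae_of_all _ fun x => ?_)
    simp only [sq_abs]; ring
  have hpm : Measurable (fun x => (x, s x)) := measurable_id.prodMk hs
  have hcost : Measurable (fun p : ℝ × ℝ => ENNReal.ofReal (|p.1 - p.2| ^ 2)) := by fun_prop
  calc optCost (fun x y => |x - y| ^ 2) ν γ
      ≤ ∫⁻ p, ENNReal.ofReal (|p.1 - p.2| ^ 2) ∂(ν.map fun x => (x, s x)) := by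
        refine iInf₂_le (ν.map fun x => (x, s x)) ⟨?_, ?_⟩
        · rw [Measure.map_map measurable_fst hpm]; exact Measure.map_id
        · rw [Measure.map_map measurable_snd hpm]; exact hmap
    _ = ∫⁻ x, ENNReal.ofReal (|x - s x| ^ 2) ∂ν := lintegral_map hcost hpm
    _ = ENNReal.ofReal (∫ x, |x - s x| ^ 2 ∂ν) :=
        (ofReal_integral_eq_lintegral_ofReal hD (ae_of_all _ fun x => sq_nonneg _)).symm
    _ ≤ ENNReal.ofReal (2 * ∫ x, E x ∂γ) := ENNReal.ofReal_le_ofReal (by rw [hDv]; linarith)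
    _ = 2 * ∫⁻ x, ENNReal.ofReal (E x) ∂γ := by
        rw [ENNReal.ofReal_mul (by norm_num),
          ofReal_integral_eq_lintegral_ofReal hEi (ae_of_all _ hE0)]
        simp
end

section
/- (Kantorovich dual equality) Let c : 𝒳 × 𝒳 → [0,∞) be a lower semicontinuous cost function on a Polish space 𝒳. Then for all ν, μ ∈ P(𝒳), 𝒯_c(ν,μ) = sup { ∫_𝒳 u dν + ∫_𝒳 v dμ : u, v bounded continuous real functions on 𝒳 with u(x) + v(y) ≤ c(x,y) for all x,y ∈ 𝒳 }. -/
open MeasureTheory ENNReal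

theorem kd_sublinear {E : Type*} [AddCommGroup E] [Module ℝ E] (N : E → ℝ)
    (N_hom : ∀ c : ℝ, 0 < c → ∀ x, N (c • x) = c * N x)
    (N_add : ∀ x y, N (x + y) ≤ N x + N y) (x₀ : E) :
    ∃ g : E →ₗ[ℝ] ℝ, g x₀ = N x₀ ∧ ∀ x, g x ≤ N x := by
  have N0 : N 0 = 0 := by
    have := N_hom 2 (by norm_num) 0
    rw [smul_zero] at this
    linarith
  have key : ∀ t : ℝ, t * N x₀ ≤ N (t • x₀) := by
    intro t
    rcases lt_trichotomy t 0 with h | h | h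
    · have h1 := N_hom (-t) (by linarith) x₀
      have h2 := N_add (t • x₀) ((-t) • x₀)
      rw [← add_smul, add_neg_cancel, zero_smul, N0, h1] at h2
      linarith
    · simp [h, N0]
    · rw [N_hom t h]
  by_cases hx : x₀ = 0
  · obtain ⟨g, -, hg⟩ := exists_extension_of_le_sublinear (⊥ : E →ₗ.[ℝ] ℝ) N N_hom N_add (by
      rintro ⟨x, hx⟩
      have hx' : x = 0 := (Submodule.mem_bot ℝ).1 hx
      subst hx'
      have : (⟨0, hx⟩ : (⊥ : E →ₗ.[ℝ] ℝ).domain) = 0 := rfl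
      rw [this, LinearPMap.map_zero]
      simp [N0])
    exact ⟨g, by simp [hx, N0], hg⟩
  · let f : E →ₗ.[ℝ] ℝ := LinearPMap.mkSpanSingleton x₀ (N x₀) hx
    obtain ⟨g, hg1, hg⟩ := exists_extension_of_le_sublinear f N N_hom N_add (by
      rintro ⟨x, hx'⟩
      obtain ⟨t, rfl⟩ := Submodule.mem_span_singleton.1 hx'
      have : f ⟨t • x₀, hx'⟩ = t * N x₀ := by
        exact LinearPMap.mkSpanSingleton'_apply x₀ (N x₀) _ t hx'
      rw [this]
      exact key t)
    refine ⟨g, ?_, hg⟩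
    have h := hg1 ⟨x₀, Submodule.mem_span_singleton_self x₀⟩
    rw [LinearPMap.mkSpanSingleton_apply] at h
    exact h

theorem kd_approx {Z W : Type*} [MetricSpace Z] [TopologicalSpace W] [Nonempty W]
    (j : W → Z) (hj : Topology.IsEmbedding j) (c : W → ℝ) (hc0 : ∀ w, 0 ≤ c w)
    (hc : LowerSemicontinuous c) :
    ∃ φ : ℕ → C(Z, ℝ), Monotone (fun n z => φ n z) ∧ (∀ n z, 0 ≤ φ n z) ∧
      (∀ n w, φ n (j w) ≤ c w) ∧ ∀ w, ∀ a < c w, ∃ n, a < φ n (j w) := by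
  have hbdd : ∀ (n : ℕ) (z : Z), BddBelow (Set.range fun w => c w + n * dist z (j w)) := by
    intro n z
    refine ⟨0, ?_⟩
    rintro _ ⟨w, rfl⟩
    have := hc0 w
    positivity
  let g : ℕ → Z → ℝ := fun n z => ⨅ w, (c w + n * dist z (j w))
  have hg0 : ∀ n z, 0 ≤ g n z := fun n z => le_ciInf fun w => by
    have := hc0 w
    positivity
  have hgl : ∀ n : ℕ, LipschitzWith n (g n) := by
    intro n
    refine LipschitzWith.of_le_add_mul _ fun x y => ?_
    rw [← sub_le_iff_le_add]
    refine le_ciInf fun w => ?_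
    have h1 : g n x ≤ c w + n * dist x (j w) := ciInf_le (hbdd n x) w
    have h2 := mul_le_mul_of_nonneg_left (dist_triangle x y (j w)) (Nat.cast_nonneg (α := ℝ) n)
    simp only [NNReal.coe_natCast]
    linarith
  refine ⟨fun n => ⟨fun z => min n (g n z), continuous_const.min (hgl n).continuous⟩, ?_, ?_, ?_, ?_⟩
  · intro m n hmn z
    have hmn' : (m : ℝ) ≤ n := by exact_mod_cast hmn
    refine min_le_min hmn' (le_ciInf fun w => (ciInf_le (hbdd m z) w).trans ?_)
    gcongr
  · intro n z
    exact le_min (Nat.cast_nonneg n) (hg0 n z)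
  · intro n w
    refine (min_le_right _ _).trans ((ciInf_le (hbdd n (j w)) w).trans ?_)
    simp
  · intro w a ha
    obtain ⟨b, hab, hb⟩ := exists_between ha
    have h1 := hc w b hb
    rw [hj.isInducing.nhds_eq_comap, Filter.Eventually, Filter.mem_comap] at h1
    obtain ⟨t, ht, hts⟩ := h1
    obtain ⟨ε, hε, hball⟩ := Metric.mem_nhds_iff.1 ht
    obtain ⟨n, hn⟩ := exists_nat_gt (max b (b / ε))
    have hn1 : b < n := (le_max_left _ _).trans_lt hn
    have hn2 : b < n * ε := by
      rw [← div_lt_iff₀ hε]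
      exact (le_max_right _ _).trans_lt hn
    refine ⟨n, hab.trans_le (le_min hn1.le (le_ciInf fun w' => ?_))⟩
    by_cases hd : dist (j w) (j w') < ε
    · have : b < c w' := hts (hball (by rwa [Metric.mem_ball, dist_comm]))
      have h3 : 0 ≤ (n : ℝ) * dist (j w) (j w') := by positivity
      linarith
    · push Not at hd
      have h3 := mul_le_mul_of_nonneg_left hd (Nat.cast_nonneg (α := ℝ) n)
      have := hc0 w'
      linarith

theorem kd_compact {K : Type*} [TopologicalSpace K] [CompactSpace K]
    [TopologicalSpace.MetrizableSpace K] [MeasurableSpace K] [BorelSpace K]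
    (ν μ : Measure K) [IsProbabilityMeasure ν] [IsProbabilityMeasure μ] (φ : C(K × K, ℝ)) :
    ∃ π : Measure (K × K), IsProbabilityMeasure π ∧ π.map Prod.fst = ν ∧ π.map Prod.snd = μ ∧
      ∀ D : ℝ, (∀ u v : C(K, ℝ), (∀ x y, u x + v y ≤ φ (x, y)) → ∫ x, u x ∂ν + ∫ y, v y ∂μ ≤ D) →
        ∫ z, φ z ∂π ≤ D := by
  let : MetricSpace K := TopologicalSpace.metrizableSpaceMetric K
  have hintg : ∀ (m : Measure K) [IsProbabilityMeasure m] (u : C(K, ℝ)), Integrable u m :=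
    fun m _ u => u.continuous.integrable_of_hasCompactSupport (HasCompactSupport.of_compactSpace _)
  let J : C(K, ℝ) → C(K, ℝ) → ℝ := fun u v => ∫ x, u x ∂ν + ∫ y, v y ∂μ
  have hJmono : ∀ (M : ℝ) (u v : C(K, ℝ)), (∀ x y, M ≤ u x + v y) → M ≤ J u v := by
    intro M u v h
    have h1 : ∀ y, M - v y ≤ ∫ x, u x ∂ν := by
      intro y
      have : ∫ _, (M - v y) ∂ν ≤ ∫ x, u x ∂ν :=
        integral_mono (integrable_const _) (hintg ν u) fun x => by
          have := h x y
          simp only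
          linarith
      simpa using this
    have h2 : ∫ _, (M - ∫ x, u x ∂ν) ∂μ ≤ ∫ y, v y ∂μ :=
      integral_mono (integrable_const _) (hintg μ v) fun y => by
        have := h1 y
        simp only
        linarith
    have h3 : M - ∫ x, u x ∂ν ≤ ∫ y, v y ∂μ := by simpa using h2
    simp only [J]
    linarith
  have hJadd : ∀ u v u' v', J (u + u') (v + v') = J u v + J u' v' := by
    intro u v u' v'
    simp only [J, ContinuousMap.add_apply]
    rw [integral_add (hintg ν u) (hintg ν u'), integral_add (hintg μ v) (hintg μ v')]
    ring
  have hJsmul : ∀ (t : ℝ) u v, J (t • u) (t • v) = t * J u v := by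
    intro t u v
    simp only [J, ContinuousMap.smul_apply, smul_eq_mul, integral_const_mul]
    ring
  let S : C(K × K, ℝ) → Set ℝ := fun ψ => {r | ∃ u v : C(K, ℝ), (∀ x y, ψ (x, y) ≤ u x + v y) ∧ r = J u v}
  have hSbdd : ∀ ψ, BddBelow (S ψ) := by
    intro ψ
    refine ⟨-‖ψ‖, ?_⟩
    rintro _ ⟨u, v, h, rfl⟩
    refine hJmono _ _ _ fun x y => le_trans ?_ (h x y)
    exact neg_le_of_abs_le (ψ.norm_coe_le_norm (x, y))
  have hSne : ∀ ψ, (S ψ).Nonempty := by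
    intro ψ
    refine ⟨_, ContinuousMap.const K ‖ψ‖, 0, fun x y => ?_, rfl⟩
    simpa using le_of_abs_le (ψ.norm_coe_le_norm (x, y))
  let p : C(K × K, ℝ) → ℝ := fun ψ => sInf (S ψ)
  have hle : ∀ (ψ : C(K × K, ℝ)) (u v : C(K, ℝ)), (∀ x y, ψ (x, y) ≤ u x + v y) → p ψ ≤ J u v :=
    fun ψ u v h => csInf_le (hSbdd ψ) ⟨u, v, h, rfl⟩
  have hge : ∀ (ψ : C(K × K, ℝ)) (D : ℝ), (∀ u v : C(K, ℝ), (∀ x y, ψ (x, y) ≤ u x + v y) → D ≤ J u v) → D ≤ p ψ := by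
    intro ψ D h
    refine le_csInf (hSne ψ) ?_
    rintro _ ⟨u, v, h', rfl⟩
    exact h u v h'
  have phom1 : ∀ t : ℝ, 0 < t → ∀ ψ, p (t • ψ) ≤ t * p ψ := by
    intro t ht ψ
    rw [← div_le_iff₀' ht]
    refine hge _ _ fun u v h => ?_
    rw [div_le_iff₀' ht, ← hJsmul]
    refine hle _ _ _ fun x y => ?_
    have := mul_le_mul_of_nonneg_left (h x y) ht.le
    simp only [ContinuousMap.smul_apply, smul_eq_mul]
    linarith
  have phom : ∀ t : ℝ, 0 < t → ∀ ψ, p (t • ψ) = t * p ψ := by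
    intro t ht ψ
    refine le_antisymm (phom1 t ht ψ) ?_
    have := phom1 t⁻¹ (inv_pos.2 ht) (t • ψ)
    rw [smul_smul, inv_mul_cancel₀ ht.ne', one_smul] at this
    rwa [← div_eq_inv_mul, le_div_iff₀' ht] at this
  have padd : ∀ ψ ψ', p (ψ + ψ') ≤ p ψ + p ψ' := by
    intro ψ ψ'
    rw [← sub_le_iff_le_add']
    refine hge _ _ fun u' v' h' => ?_
    rw [sub_le_iff_le_add, ← sub_le_iff_le_add']
    refine hge _ _ fun u v h => ?_
    rw [sub_le_iff_le_add, ← hJadd]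
    refine hle _ _ _ fun x y => ?_
    have h1 := h x y
    have h2 := h' x y
    simp only [ContinuousMap.add_apply]
    linarith
  obtain ⟨L, hL0, hLp⟩ := kd_sublinear p phom padd (-φ)
  have hLpos : ∀ ψ : C(K × K, ℝ), (∀ z, ψ z ≤ 0) → L ψ ≤ 0 := by
    intro ψ h
    have := (hLp ψ).trans (hle ψ 0 0 fun x y => by simpa using h (x, y))
    simpa [J] using this
  have hLmono : ∀ ψ ψ' : C(K × K, ℝ), (∀ z, ψ z ≤ ψ' z) → L ψ ≤ L ψ' := by
    intro ψ ψ' h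
    have := hLpos (ψ - ψ') fun z => by simpa using h z
    rw [map_sub] at this
    linarith
  have hLfst : ∀ u : C(K, ℝ), L (u.comp ContinuousMap.fst) = ∫ x, u x ∂ν := by
    have h : ∀ u : C(K, ℝ), L (u.comp ContinuousMap.fst) ≤ ∫ x, u x ∂ν := by
      intro u
      have := (hLp _).trans (hle (u.comp ContinuousMap.fst) u 0 fun x y => by simp)
      simpa [J] using this
    intro u
    refine le_antisymm (h u) ?_
    have h2 := h (-u)
    have h3 : (-u).comp (ContinuousMap.fst : C(K × K, K)) = -(u.comp ContinuousMap.fst) := rfl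
    rw [h3, map_neg] at h2
    simp only [ContinuousMap.neg_apply, integral_neg] at h2
    linarith
  have hLsnd : ∀ u : C(K, ℝ), L (u.comp ContinuousMap.snd) = ∫ x, u x ∂μ := by
    have h : ∀ u : C(K, ℝ), L (u.comp ContinuousMap.snd) ≤ ∫ x, u x ∂μ := by
      intro u
      have := (hLp _).trans (hle (u.comp ContinuousMap.snd) 0 u fun x y => by simp)
      simpa [J] using this
    intro u
    refine le_antisymm (h u) ?_
    have h2 := h (-u)
    have h3 : (-u).comp (ContinuousMap.snd : C(K × K, K)) = -(u.comp ContinuousMap.snd) := rfl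
    rw [h3, map_neg] at h2
    simp only [ContinuousMap.neg_apply, integral_neg] at h2
    linarith
  let Λ : CompactlySupportedContinuousMap (K × K) ℝ →ₚ[ℝ] ℝ :=
    { toFun := fun f => L f.toContinuousMap
      map_add' := fun f g => L.map_add f.toContinuousMap g.toContinuousMap
      map_smul' := fun t f => L.map_smul t f.toContinuousMap
      monotone' := fun f g h => hLmono _ _ h }
  let π : Measure (K × K) := RealRMK.rieszMeasure Λ
  have hπ : ∀ ψ : C(K × K, ℝ), ∫ z, ψ z ∂π = L ψ := fun ψ =>
    RealRMK.integral_rieszMeasure Λ (CompactlySupportedContinuousMap.continuousMapEquiv ψ)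
  have hfin : IsFiniteMeasure π := by
    refine ⟨lt_of_le_of_lt (RealRMK.rieszMeasure_le_of_eq_one Λ
      (f := CompactlySupportedContinuousMap.continuousMapEquiv 1) (fun x => by simp)
      isCompact_univ (fun x _ => by simp)) (by simp)⟩
  have hfst : π.map Prod.fst = ν := by
    refine ext_of_forall_integral_eq_of_IsFiniteMeasure fun f => ?_
    rw [integral_map measurable_fst.aemeasurable f.continuous.aestronglyMeasurable]
    exact (hπ (f.toContinuousMap.comp ContinuousMap.fst)).trans (hLfst _)
  have hsnd : π.map Prod.snd = μ := by
    refine ext_of_forall_integral_eq_of_IsFiniteMeasure fun f => ?_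
    rw [integral_map measurable_snd.aemeasurable f.continuous.aestronglyMeasurable]
    exact (hπ (f.toContinuousMap.comp ContinuousMap.snd)).trans (hLsnd _)
  refine ⟨π, ?_, hfst, hsnd, ?_⟩
  · refine ⟨?_⟩
    have : (π.map Prod.fst) Set.univ = 1 := by rw [hfst]; simp
    rwa [Measure.map_apply measurable_fst MeasurableSet.univ] at this
  · intro D hD
    rw [hπ]
    have h1 : -D ≤ p (-φ) := by
      refine hge _ _ fun u v h => ?_
      have h2 := hD (-u) (-v) fun x y => by
        have := h x y
        simp only [ContinuousMap.neg_apply] at this ⊢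
        linarith
      simp only [ContinuousMap.neg_apply, integral_neg] at h2
      simp only [J]
      linarith
    rw [← hL0, map_neg] at h1
    linarith

/-- Kantorovich dual equality: the optimal transport cost equals the supremum of
`∫ u dν + ∫ v dμ` over bounded continuous `u, v` with `u(x) + v(y) ≤ c(x,y)`. -/
theorem kantorovich_duality {X : Type*} [TopologicalSpace X] [PolishSpace X]
    [MeasurableSpace X] [BorelSpace X]
    (c : X → X → ℝ) (hc_nonneg : ∀ x y, 0 ≤ c x y)
    (hc_lsc : LowerSemicontinuous fun p : X × X => c p.1 p.2)
    (ν μ : Measure X) [IsProbabilityMeasure ν] [IsProbabilityMeasure μ] :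
    optCost c ν μ =
      ⨆ (u : BoundedContinuousFunction X ℝ) (v : BoundedContinuousFunction X ℝ)
        (_ : ∀ x y, u x + v y ≤ c x y),
        ENNReal.ofReal (∫ x, u x ∂ν + ∫ y, v y ∂μ) := by
  let : MetricSpace X := TopologicalSpace.metrizableSpaceMetric X
  have : SecondCountableTopology X := inferInstance
  refine le_antisymm ?_ ?_
  · set D : ℝ≥0∞ := ⨆ (u : BoundedContinuousFunction X ℝ) (v : BoundedContinuousFunction X ℝ)
        (_ : ∀ x y, u x + v y ≤ c x y),
        ENNReal.ofReal (∫ x, u x ∂ν + ∫ y, v y ∂μ) with hD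
    obtain ⟨F, hF⟩ := Metric.PiNatEmbed.exists_embedding_to_hilbert_cube (X := X)
    let : MetricSpace (ℕ → unitInterval) := TopologicalSpace.metrizableSpaceMetric _
    have hX : Nonempty X := by
      by_contra h
      rw [not_nonempty_iff] at h
      have := measure_univ (μ := ν)
      simp [Set.univ_eq_empty_iff.2 h] at this
    have hFm : MeasurableEmbedding F := hF.continuous.measurable.measurableEmbedding hF.injective
    let j : X × X → (ℕ → unitInterval) × (ℕ → unitInterval) := Prod.map F F
    have hj : Topology.IsEmbedding j := hF.prodMap hF
    have hjm : MeasurableEmbedding j :=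
      hj.continuous.measurable.measurableEmbedding hj.injective
    obtain ⟨φ, hφmono, hφ0, hφc, hφsup⟩ :=
      kd_approx j hj (fun p : X × X => c p.1 p.2) (fun p => hc_nonneg _ _) hc_lsc
    have hν' : IsProbabilityMeasure (ν.map F) := Measure.isProbabilityMeasure_map hFm.measurable.aemeasurable
    have hμ' : IsProbabilityMeasure (μ.map F) := Measure.isProbabilityMeasure_map hFm.measurable.aemeasurable
    let P := ProbabilityMeasure ((ℕ → unitInterval) × (ℕ → unitInterval))
    let A : ℕ → Set P := fun n => {π : P |
      (∀ f : C(ℕ → unitInterval, ℝ), ∫ z, f z.1 ∂(π : Measure ((ℕ → unitInterval) × (ℕ → unitInterval))) = ∫ x, f x ∂(ν.map F)) ∧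
      (∀ f : C(ℕ → unitInterval, ℝ), ∫ z, f z.2 ∂(π : Measure ((ℕ → unitInterval) × (ℕ → unitInterval))) = ∫ x, f x ∂(μ.map F)) ∧
      ENNReal.ofReal (∫ z, φ n z ∂(π : Measure ((ℕ → unitInterval) × (ℕ → unitInterval)))) ≤ D}
    have hcont : ∀ f : C((ℕ → unitInterval) × (ℕ → unitInterval), ℝ),
        Continuous fun π : P => ∫ z, f z ∂(π : Measure ((ℕ → unitInterval) × (ℕ → unitInterval))) := fun f =>
      ProbabilityMeasure.continuous_integral_boundedContinuousFunction
        (BoundedContinuousFunction.mkOfCompact f)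
    have hintg : ∀ (f : C((ℕ → unitInterval) × (ℕ → unitInterval), ℝ)) (π : P),
        Integrable f (π : Measure ((ℕ → unitInterval) × (ℕ → unitInterval))) := fun f π =>
      (BoundedContinuousFunction.mkOfCompact f).integrable _
    have hAclosed : ∀ n, IsClosed (A n) := by
      intro n
      refine IsClosed.inter (s₁ := {π : P | ∀ f : C(ℕ → unitInterval, ℝ), ∫ z, f z.1 ∂(π : Measure ((ℕ → unitInterval) × (ℕ → unitInterval))) = ∫ x, f x ∂(ν.map F)}) ?_ (IsClosed.inter (s₁ := {π : P | ∀ f : C(ℕ → unitInterval, ℝ), ∫ z, f z.2 ∂(π : Measure ((ℕ → unitInterval) × (ℕ → unitInterval))) = ∫ x, f x ∂(μ.map F)}) ?_ ?_)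
      · rw [show {π : P | ∀ f : C(ℕ → unitInterval, ℝ), ∫ z, f z.1 ∂(π : Measure ((ℕ → unitInterval) × (ℕ → unitInterval))) = ∫ x, f x ∂(ν.map F)} = ⋂ f : C(ℕ → unitInterval, ℝ), {π : P | ∫ z, f z.1 ∂(π : Measure ((ℕ → unitInterval) × (ℕ → unitInterval))) = ∫ x, f x ∂(ν.map F)} by ext; simp]
        exact isClosed_iInter fun f =>
          isClosed_eq (hcont (f.comp ContinuousMap.fst)) continuous_const
      · rw [show {π : P | ∀ f : C(ℕ → unitInterval, ℝ), ∫ z, f z.2 ∂(π : Measure ((ℕ → unitInterval) × (ℕ → unitInterval))) = ∫ x, f x ∂(μ.map F)} = ⋂ f : C(ℕ → unitInterval, ℝ), {π : P | ∫ z, f z.2 ∂(π : Measure ((ℕ → unitInterval) × (ℕ → unitInterval))) = ∫ x, f x ∂(μ.map F)} by ext; simp]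
        exact isClosed_iInter fun f =>
          isClosed_eq (hcont (f.comp ContinuousMap.snd)) continuous_const
      · exact isClosed_le (ENNReal.continuous_ofReal.comp (hcont (φ n))) continuous_const
    have hAne : ∀ n, (A n).Nonempty := by
      intro n
      obtain ⟨π, hπ, hfst, hsnd, hπD⟩ := kd_compact (ν.map F) (μ.map F) (φ n)
      refine ⟨⟨π, hπ⟩, ?_, ?_, ?_⟩
      · intro f
        rw [← hfst, integral_map measurable_fst.aemeasurable f.continuous.aestronglyMeasurable]
        rfl
      · intro f
        rw [← hsnd, integral_map measurable_snd.aemeasurable f.continuous.aestronglyMeasurable]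
        rfl
      · change ENNReal.ofReal (∫ z, φ n z ∂π) ≤ D
        by_cases hDtop : D = ∞
        · simp [hDtop]
        refine ENNReal.ofReal_le_of_le_toReal (hπD _ fun u v huv => ?_)
        rw [← ENNReal.ofReal_le_iff_le_toReal hDtop,
          integral_map hFm.measurable.aemeasurable u.continuous.aestronglyMeasurable,
          integral_map hFm.measurable.aemeasurable v.continuous.aestronglyMeasurable]
        have hadm : ∀ x y, (BoundedContinuousFunction.mkOfCompact u).compContinuous ⟨F, hF.continuous⟩ x
            + (BoundedContinuousFunction.mkOfCompact v).compContinuous ⟨F, hF.continuous⟩ y ≤ c x y := by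
          intro x y
          exact (huv (F x) (F y)).trans (hφc n (x, y))
        exact le_iSup_of_le _ (le_iSup_of_le _ (le_iSup_of_le hadm le_rfl))
    have hAanti : ∀ n, A (n + 1) ⊆ A n := by
      rintro n π ⟨h1, h2, h3⟩
      refine ⟨h1, h2, le_trans ?_ h3⟩
      exact ENNReal.ofReal_le_ofReal (integral_mono (hintg _ _) (hintg _ _) (hφmono n.le_succ))
    obtain ⟨π, hπ⟩ := IsCompact.nonempty_iInter_of_sequence_nonempty_isCompact_isClosed A hAanti hAne
      (hAclosed 0).isCompact hAclosed
    rw [Set.mem_iInter] at hπ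
    have hfst : (π : Measure ((ℕ → unitInterval) × (ℕ → unitInterval))).map Prod.fst = ν.map F := by
      have := Measure.isProbabilityMeasure_map (μ := (π : Measure ((ℕ → unitInterval) × (ℕ → unitInterval)))) measurable_fst.aemeasurable
      refine ext_of_forall_integral_eq_of_IsFiniteMeasure fun f => ?_
      rw [integral_map measurable_fst.aemeasurable f.continuous.aestronglyMeasurable]
      exact (hπ 0).1 f.toContinuousMap
    have hsnd : (π : Measure ((ℕ → unitInterval) × (ℕ → unitInterval))).map Prod.snd = μ.map F := by
      have := Measure.isProbabilityMeasure_map (μ := (π : Measure ((ℕ → unitInterval) × (ℕ → unitInterval)))) measurable_snd.aemeasurable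
      refine ext_of_forall_integral_eq_of_IsFiniteMeasure fun f => ?_
      rw [integral_map measurable_snd.aemeasurable f.continuous.aestronglyMeasurable]
      exact (hπ 0).2.1 f.toContinuousMap
    let π' : Measure (X × X) := (π : Measure ((ℕ → unitInterval) × (ℕ → unitInterval))).comap j
    have h1 : ∀ᵐ z ∂(π : Measure ((ℕ → unitInterval) × (ℕ → unitInterval))), z.1 ∈ Set.range F := by
      refine ae_of_ae_map (p := fun x => x ∈ Set.range F) measurable_fst.aemeasurable ?_
      rw [hfst, hFm.ae_map_iff]
      exact ae_of_all _ fun x => ⟨x, rfl⟩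
    have h2 : ∀ᵐ z ∂(π : Measure ((ℕ → unitInterval) × (ℕ → unitInterval))), z.2 ∈ Set.range F := by
      refine ae_of_ae_map (p := fun x => x ∈ Set.range F) measurable_snd.aemeasurable ?_
      rw [hsnd, hFm.ae_map_iff]
      exact ae_of_all _ fun x => ⟨x, rfl⟩
    have hmap : π'.map j = (π : Measure ((ℕ → unitInterval) × (ℕ → unitInterval))) := by
      rw [hjm.map_comap]
      refine Measure.restrict_eq_self_of_ae_mem ?_
      filter_upwards [h1, h2] with z hz1 hz2
      obtain ⟨x, hx⟩ := hz1
      obtain ⟨y, hy⟩ := hz2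
      exact ⟨(x, y), Prod.ext hx hy⟩
    have hinj : ∀ m m' : Measure X, m.map F = m'.map F → m = m' := by
      intro m m' h
      rw [← hFm.comap_map m, h, hFm.comap_map]
    have hfst' : π'.map Prod.fst = ν := by
      apply hinj
      rw [Measure.map_map hFm.measurable measurable_fst, ← hfst, ← hmap,
        Measure.map_map measurable_fst hjm.measurable]
      rfl
    have hsnd' : π'.map Prod.snd = μ := by
      apply hinj
      rw [Measure.map_map hFm.measurable measurable_snd, ← hsnd, ← hmap,
        Measure.map_map measurable_snd hjm.measurable]
      rfl
    refine (iInf₂_le π' ⟨hfst', hsnd'⟩).trans ?_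
    have hsup : ∀ p : X × X, ENNReal.ofReal (c p.1 p.2) = ⨆ n, ENNReal.ofReal (φ n (j p)) := by
      intro p
      refine le_antisymm ?_ (iSup_le fun n => ENNReal.ofReal_le_ofReal (hφc n p))
      refine le_of_forall_lt fun b hb => ?_
      have hb' : b ≠ ∞ := hb.ne_top
      obtain ⟨n, hn⟩ := hφsup p b.toReal ((ENNReal.lt_ofReal_iff_toReal_lt hb').1 hb)
      exact lt_of_lt_of_le ((ENNReal.lt_ofReal_iff_toReal_lt hb').2 hn)
        (le_iSup (fun n => ENNReal.ofReal (φ n (j p))) n)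
    simp_rw [hsup]
    rw [lintegral_iSup (f := fun n p => ENNReal.ofReal (φ n (j p)))
      (fun n => ENNReal.measurable_ofReal.comp ((φ n).continuous.measurable.comp hjm.measurable))
      (fun m n hmn p => ENNReal.ofReal_le_ofReal (hφmono hmn (j p)))]
    refine iSup_le fun n => ?_
    rw [← hjm.lintegral_map (f := fun z => ENNReal.ofReal (φ n z)), hmap,
      ← ofReal_integral_eq_lintegral_ofReal (hintg _ _) (ae_of_all _ (hφ0 n))]
    exact (hπ n).2.2
  · refine iSup_le fun u => iSup_le fun v => iSup_le fun huv => le_iInf₂ fun π hπ => ?_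
    obtain ⟨rfl, rfl⟩ := hπ
    have hfin : IsProbabilityMeasure π := by
      refine ⟨?_⟩
      have := measure_univ (μ := π.map Prod.fst)
      rwa [Measure.map_apply measurable_fst MeasurableSet.univ] at this
    rw [integral_map measurable_fst.aemeasurable u.continuous.aestronglyMeasurable,
      integral_map measurable_snd.aemeasurable v.continuous.aestronglyMeasurable]
    have hu : Integrable (fun p : X × X => u p.1) π :=
      (u.compContinuous ContinuousMap.fst).integrable π
    have hv : Integrable (fun p : X × X => v p.2) π :=
      (v.compContinuous ContinuousMap.snd).integrable π
    rw [← integral_add hu hv]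
    have h1 : ∫ p : X × X, (u p.1 + v p.2) ∂π ≤ ∫ p : X × X, max (u p.1 + v p.2) 0 ∂π :=
      integral_mono (hu.add hv) (hu.add hv).pos_part fun p => le_max_left _ _
    refine (ENNReal.ofReal_le_ofReal h1).trans ?_
    have h2 : Integrable (fun p : X × X => max (u p.1 + v p.2) 0) π := (hu.add hv).pos_part
    rw [ofReal_integral_eq_lintegral_ofReal h2
      (ae_of_all _ fun p => le_max_right _ _)]
    exact lintegral_mono fun p => ENNReal.ofReal_le_ofReal (max_le (huv _ _) (hc_nonneg _ _))
end

section
/- (Kantorovich–Rubinstein theorem) Let d be a lower semicontinuous metric on a Polish space 𝒳 (possibly different from the metric turning 𝒳 into a Polish space), and let μ, ν ∈ P₁, i.e. ∫ d(x₀,x) dν(x) < ∞ and ∫ d(x₀,x) dμ(x) < ∞ for some x₀ ∈ 𝒳. Then 𝒯_d(ν,μ) = sup { ∫_𝒳 u dν − ∫_𝒳 u dμ : u Borel measurable with |u(x) − u(y)| ≤ d(x,y) for all x,y ∈ 𝒳 }. -/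
open MeasureTheory ENNReal

open Filter Topology in
lemma KR_approx {Z Y : Type*} [TopologicalSpace Z] [Nonempty Z] [PseudoMetricSpace Y]
    (ι : Z → Y) (hι : IsInducing ι) (c : Z → ℝ) (hc0 : ∀ z, 0 ≤ c z)
    (hc : LowerSemicontinuous c) :
    ∃ g : ℕ → C(Y, ℝ), (∀ n y, 0 ≤ g n y) ∧ (∀ n z, g n (ι z) ≤ c z) ∧
      ∀ z, Tendsto (fun n => g n (ι z)) atTop (𝓝 (c z)) := by
  have hbdd : ∀ (n : ℕ) (y : Y), BddBelow (Set.range fun z => c z + n * dist (ι z) y) := by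
    intro n y
    refine ⟨0, ?_⟩
    rintro _ ⟨z, rfl⟩
    have := hc0 z
    positivity
  have hcont : ∀ n : ℕ, Continuous fun y : Y => ⨅ z, c z + n * dist (ι z) y := by
    intro n
    refine (LipschitzWith.of_le_add_mul (n : NNReal) fun x y => ?_).continuous
    rw [← sub_le_iff_le_add]
    refine le_ciInf fun z => ?_
    have h1 := ciInf_le (hbdd n x) z
    have h2 : dist (ι z) x ≤ dist (ι z) y + dist x y := by
      rw [dist_comm x y]; exact dist_triangle _ _ _
    have h3 : (n : ℝ) * dist (ι z) x ≤ n * (dist (ι z) y + dist x y) := by gcongr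
    push_cast
    linarith
  refine ⟨fun n => ⟨_, hcont n⟩, fun n y => ?_, fun n z => ?_, fun z => ?_⟩
  · refine le_ciInf fun z => ?_
    have := hc0 z
    positivity
  · refine (ciInf_le (hbdd n _) z).trans ?_
    simp
  · rw [tendsto_order]
    constructor
    · intro a ha
      obtain ⟨b, hab, hb⟩ := exists_between ha
      have h1 : {w | b < c w} ∈ 𝓝 z := hc z b hb
      rw [hι.nhds_eq_comap, (Metric.nhds_basis_ball.comap ι).mem_iff] at h1
      obtain ⟨r, hr, hsub⟩ := h1
      obtain ⟨N, hN⟩ := exists_nat_ge (b / r)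
      filter_upwards [eventually_ge_atTop N] with n hn
      refine hab.trans_le (le_ciInf fun w => ?_)
      by_cases hw : dist (ι w) (ι z) < r
      · have h2 : b < c w := hsub hw
        have : 0 ≤ (n : ℝ) * dist (ι w) (ι z) := by positivity
        linarith
      · push Not at hw
        have h3 : b ≤ N * r := by rwa [div_le_iff₀ hr] at hN
        have h4 : (N : ℝ) ≤ n := by exact_mod_cast hn
        have h5 : (N : ℝ) * r ≤ n * dist (ι w) (ι z) := by gcongr
        linarith [hc0 w]
    · intro a ha
      refine Eventually.of_forall fun n => lt_of_le_of_lt ?_ ha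
      refine (ciInf_le (hbdd n _) z).trans ?_
      simp

lemma KR_functional {X K : Type*} [MeasurableSpace X] [TopologicalSpace K] [CompactSpace K]
    [TopologicalSpace.MetrizableSpace K] [SecondCountableTopology K]
    [MeasurableSpace K] [BorelSpace K]
    (ι : X → K) (hι : Measurable ι) (c : X → X → ℝ)
    (ν μ : Measure X) [IsProbabilityMeasure ν] [IsProbabilityMeasure μ] (S : ℝ)
    (hS : ∀ φ ψ : C(K, ℝ), (∀ x y, φ (ι x) - ψ (ι y) ≤ c x y) →
      ∫ x, φ (ι x) ∂ν - ∫ x, ψ (ι x) ∂μ ≤ S) :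
    ∃ π : Measure (K × K), IsFiniteMeasure π ∧ π.map Prod.fst = ν.map ι ∧
      π.map Prod.snd = μ.map ι ∧
      ∀ g : C(K × K, ℝ), (∀ x y, g (ι x, ι y) ≤ c x y) → ∫ p, g p ∂π ≤ S := by
  have hint : ∀ (ρ : Measure X) [IsProbabilityMeasure ρ] (φ : C(K, ℝ)),
      Integrable (fun x => φ (ι x)) ρ := by
    intro ρ _ φ
    refine Integrable.of_bound (φ.continuous.measurable.comp hι).aestronglyMeasurable ‖φ‖
      (Filter.Eventually.of_forall fun x => φ.norm_coe_le_norm _)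
  have hce : ∀ (f : C(K × K, ℝ)) (p : K × K),
      CompactlySupportedContinuousMap.continuousMapEquiv f p = f p := fun _ _ => rfl
  -- zero-domain nonnegativity
  have key : ∀ t : ℝ, 0 ≤ t → ∀ φ ψ : C(K, ℝ), (∀ x y, φ (ι x) - ψ (ι y) ≤ t * c x y) →
      ∫ x, φ (ι x) ∂ν - ∫ x, ψ (ι x) ∂μ ≤ t * S := by
    intro t ht φ ψ h
    rcases ht.eq_or_lt with rfl | ht
    · have h1 : ∀ y, ∫ x, φ (ι x) ∂ν ≤ ψ (ι y) := by
        intro y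
        calc ∫ x, φ (ι x) ∂ν ≤ ∫ x, ψ (ι y) ∂ν :=
              integral_mono (hint ν φ) (integrable_const _) fun x => by
                have := h x y
                simp only [zero_mul] at this
                simp only
                linarith
          _ = ψ (ι y) := by simp
      have h2 : ∫ x, φ (ι x) ∂ν ≤ ∫ y, ψ (ι y) ∂μ := by
        calc ∫ x, φ (ι x) ∂ν = ∫ y, (∫ x, φ (ι x) ∂ν) ∂μ := by simp
          _ ≤ _ := integral_mono (integrable_const _) (hint μ ψ) h1
      linarith
    · have h1 := hS (t⁻¹ • φ) (t⁻¹ • ψ) (fun x y => by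
        have := h x y
        simp only [ContinuousMap.smul_apply, smul_eq_mul]
        rw [← mul_sub, inv_mul_le_iff₀ ht]
        exact this)
      simp only [ContinuousMap.smul_apply, smul_eq_mul, integral_const_mul] at h1
      rwa [← mul_sub, inv_mul_le_iff₀ ht] at h1
  let s : PointedCone ℝ ((CompactlySupportedContinuousMap (K × K) ℝ) × ℝ) :=
    { carrier := {q | ∃ t : ℝ, 0 ≤ t ∧ ∃ φ ψ : C(K, ℝ),
        (∀ x y, φ (ι x) - ψ (ι y) ≤ q.1 (ι x, ι y) + t * c x y) ∧
        t * S ≤ q.2 + (∫ x, φ (ι x) ∂ν - ∫ x, ψ (ι x) ∂μ)}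
      add_mem' := by
        rintro ⟨f, r⟩ ⟨f', r'⟩ ⟨t, ht, φ, ψ, h1, h2⟩ ⟨t', ht', φ', ψ', h1', h2'⟩
        refine ⟨t + t', by positivity, φ + φ', ψ + ψ', fun x y => ?_, ?_⟩
        · have := h1 x y
          have := h1' x y
          simp only [ContinuousMap.add_apply, Prod.mk_add_mk,
            CompactlySupportedContinuousMap.add_apply] at *
          linarith
        · simp only [ContinuousMap.add_apply, Prod.mk_add_mk] at *
          rw [integral_add (hint _ _) (hint _ _), integral_add (hint _ _) (hint _ _)]
          linarith
      zero_mem' := ⟨0, le_rfl, 0, 0, by simp, by simp⟩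
      smul_mem' := by
        rintro ⟨a, ha⟩ ⟨f, r⟩ ⟨t, ht, φ, ψ, h1, h2⟩
        refine ⟨a * t, by positivity, a • φ, a • ψ, fun x y => ?_, ?_⟩
        · have := mul_le_mul_of_nonneg_left (h1 x y) ha
          simp [ContinuousMap.smul_apply, smul_eq_mul, NNReal.smul_def] at *
          linarith
        · have := mul_le_mul_of_nonneg_left h2 ha
          simp [ContinuousMap.smul_apply, smul_eq_mul, integral_const_mul,
            NNReal.smul_def] at *
          linarith }
  have hs : ∀ q : (CompactlySupportedContinuousMap (K × K) ℝ) × ℝ, q ∈ s ↔ ∃ t : ℝ, 0 ≤ t ∧ ∃ φ ψ : C(K, ℝ),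
        (∀ x y, φ (ι x) - ψ (ι y) ≤ q.1 (ι x, ι y) + t * c x y) ∧
        t * S ≤ q.2 + (∫ x, φ (ι x) ∂ν - ∫ x, ψ (ι x) ∂μ) := fun q => Iff.rfl
  let D : (CompactlySupportedContinuousMap (K × K) ℝ) × ℝ →ₗ.[ℝ] ℝ :=
    { domain := LinearMap.ker (LinearMap.fst ℝ (CompactlySupportedContinuousMap (K × K) ℝ) ℝ)
      toFun := (LinearMap.snd ℝ (CompactlySupportedContinuousMap (K × K) ℝ) ℝ).comp (Submodule.subtype _) }
  have hDm : ∀ r : ℝ, ((0 : (CompactlySupportedContinuousMap (K × K) ℝ)), r) ∈ D.domain := fun r => by simp [D]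
  obtain ⟨G, hG1, hG2⟩ := riesz_extension s D (by
      rintro ⟨⟨f, r⟩, hf⟩ hx
      have hf' : f = 0 := by simpa [D] using hf
      subst hf'
      obtain ⟨t, ht, φ, ψ, h1, h2⟩ := (hs _).1 hx
      have := key t ht φ ψ (fun x y => by simpa using h1 x y)
      have e : D ⟨((0 : (CompactlySupportedContinuousMap (K × K) ℝ)), r), hf⟩ = r := rfl
      rw [e]
      simp only at h2
      linarith) (by
      rintro ⟨f, r⟩
      have hb : ∃ C, ∀ p, -C ≤ f p := by
        obtain ⟨C, hC⟩ := (isCompact_range f.continuous).bddBelow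
        exact ⟨-C, fun p => by simpa using hC ⟨p, rfl⟩⟩
      obtain ⟨C, hC⟩ := hb
      refine ⟨⟨((0 : (CompactlySupportedContinuousMap (K × K) ℝ)), C - r), hDm _⟩, (hs _).2 ⟨0, le_rfl, ContinuousMap.const _ (-C), 0, ?_, ?_⟩⟩
      · intro x y
        simpa using hC (ι x, ι y)
      · simp)
  have hG0 : ∀ r : ℝ, G (0, r) = r := fun r => hG1 ⟨_, hDm r⟩
  have hGs : ∀ (f : (CompactlySupportedContinuousMap (K × K) ℝ)) (r : ℝ), G (f, r) = G (f, 0) + r := by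
    intro f r
    rw [← hG0 r, ← map_add]
    simp [hG0]
  let L : (CompactlySupportedContinuousMap (K × K) ℝ) →ₗ[ℝ] ℝ := G.comp (LinearMap.inl ℝ (CompactlySupportedContinuousMap (K × K) ℝ) ℝ)
  have hL : ∀ f, L f = G (f, 0) := fun f => rfl
  let Λ : (CompactlySupportedContinuousMap (K × K) ℝ) →ₚ[ℝ] ℝ := PositiveLinearMap.mk₀ L (by
    intro f hf
    rw [hL]
    refine hG2 _ ((hs _).2 ⟨0, le_rfl, 0, 0, fun x y => ?_, by simp⟩)
    simpa using hf (ι x, ι y))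
  have hΛ : ∀ f, Λ f = G (f, 0) := fun f => rfl
  let _ : MeasurableSpace (K × K) := Prod.instMeasurableSpace
  have : BorelSpace (K × K) := Prod.borelSpace
  let π := RealRMK.rieszMeasure Λ
  have hπ : ∀ f : C(K × K, ℝ), ∫ p, f p ∂π =
      G (CompactlySupportedContinuousMap.continuousMapEquiv f, 0) := by
    intro f
    rw [← hΛ, ← RealRMK.integral_rieszMeasure]
    rfl
  have hfin : IsFiniteMeasure π := inferInstance
  have hmarg : ∀ φ ψ : C(K, ℝ), ∀ f : C(K × K, ℝ), (∀ p, f p = φ p.1 - ψ p.2) →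
      ∫ x, φ (ι x) ∂ν - ∫ x, ψ (ι x) ∂μ ≤ ∫ p, f p ∂π := by
    intro φ ψ f hf
    rw [hπ]
    have := hG2 (CompactlySupportedContinuousMap.continuousMapEquiv f,
      -(∫ x, φ (ι x) ∂ν - ∫ x, ψ (ι x) ∂μ)) ((hs _).2 ⟨0, le_rfl, φ, ψ, fun x y => by
        simp [hf, hce], by simp⟩)
    rw [hGs] at this
    linarith
  refine ⟨π, hfin, ?_, ?_, ?_⟩
  · have : IsFiniteMeasure (π.map Prod.fst) := inferInstance
    have : IsFiniteMeasure (ν.map ι) := inferInstance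
    refine ext_of_forall_integral_eq_of_IsFiniteMeasure fun φ => ?_
    rw [integral_map measurable_fst.aemeasurable φ.continuous.measurable.aestronglyMeasurable,
      integral_map hι.aemeasurable φ.continuous.measurable.aestronglyMeasurable]
    have h1 := hmarg φ.toContinuousMap 0 (φ.toContinuousMap.comp ContinuousMap.fst)
      (fun p => by simp)
    have h2 := hmarg (-φ.toContinuousMap) 0 (-(φ.toContinuousMap.comp ContinuousMap.fst))
      (fun p => by simp)
    simp [integral_neg] at h1 h2
    linarith
  · have : IsFiniteMeasure (π.map Prod.snd) := inferInstance
    have : IsFiniteMeasure (μ.map ι) := inferInstance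
    refine ext_of_forall_integral_eq_of_IsFiniteMeasure fun φ => ?_
    rw [integral_map measurable_snd.aemeasurable φ.continuous.measurable.aestronglyMeasurable,
      integral_map hι.aemeasurable φ.continuous.measurable.aestronglyMeasurable]
    have h1 := hmarg 0 (-φ.toContinuousMap) (φ.toContinuousMap.comp ContinuousMap.snd)
      (fun p => by simp)
    have h2 := hmarg 0 (φ.toContinuousMap) (-(φ.toContinuousMap.comp ContinuousMap.snd))
      (fun p => by simp)
    simp [integral_neg] at h1 h2
    linarith
  · intro g hg
    rw [hπ]
    have := hG2 (-CompactlySupportedContinuousMap.continuousMapEquiv g, S)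
      ((hs _).2 ⟨1, zero_le_one, 0, 0, fun x y => by
        simpa [hce] using hg x y, by simp⟩)
    rw [hGs] at this
    have e : G (-CompactlySupportedContinuousMap.continuousMapEquiv g, 0) =
      - G (CompactlySupportedContinuousMap.continuousMapEquiv g, 0) := by
      rw [← map_neg G]; simp
    linarith

open Filter Topology in
lemma KR_primal {X : Type*} [TopologicalSpace X] [PolishSpace X]
    [MeasurableSpace X] [BorelSpace X] [Nonempty X]
    (c : X → X → ℝ) (hc0 : ∀ x y, 0 ≤ c x y)
    (hc : LowerSemicontinuous fun p : X × X => c p.1 p.2)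
    (ν μ : Measure X) [IsProbabilityMeasure ν] [IsProbabilityMeasure μ] (S : ℝ)
    (hS : ∀ φ ψ : BoundedContinuousFunction X ℝ, (∀ x y, φ x - ψ y ≤ c x y) →
      ∫ x, φ x ∂ν - ∫ x, ψ x ∂μ ≤ S) :
    ∃ π : Measure (X × X), (π.map Prod.fst = ν ∧ π.map Prod.snd = μ) ∧
      ∫⁻ p, ENNReal.ofReal (c p.1 p.2) ∂π ≤ ENNReal.ofReal S := by
  let _ := TopologicalSpace.upgradeIsCompletelyMetrizable X
  obtain ⟨ι, hι⟩ := Metric.PiNatEmbed.exists_embedding_to_hilbert_cube (X := X)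
  let _ : MetricSpace (ℕ → unitInterval) := TopologicalSpace.metrizableSpaceMetric _
  obtain ⟨π', hfin, h1, h2, h3⟩ := KR_functional ι hι.continuous.measurable c ν μ S (by
    intro φ ψ h
    exact hS ((BoundedContinuousFunction.mkOfCompact φ).compContinuous ⟨ι, hι.continuous⟩)
      ((BoundedContinuousFunction.mkOfCompact ψ).compContinuous ⟨ι, hι.continuous⟩) h)
  have hιm : MeasurableEmbedding ι := hι.continuous.measurableEmbedding hι.injective
  have hem : MeasurableEmbedding (Prod.map ι ι) := hιm.prodMap hιm
  have hnull : ∀ (ρ : Measure X), (ρ.map ι) (Set.range ι)ᶜ = 0 := by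
    intro ρ
    rw [hιm.map_apply]
    simp
  have hr : π' (Set.range (Prod.map ι ι))ᶜ = 0 := by
    have hsub : (Set.range (Prod.map ι ι))ᶜ ⊆
        Prod.fst ⁻¹' (Set.range ι)ᶜ ∪ Prod.snd ⁻¹' (Set.range ι)ᶜ := by
      rintro ⟨a, b⟩ hab
      by_contra hcon
      simp only [Set.mem_union, Set.mem_preimage, Set.mem_compl_iff, not_or, not_not] at hcon
      obtain ⟨⟨x, hx⟩, ⟨y, hy⟩⟩ := hcon
      exact hab ⟨(x, y), by simp_all⟩
    refine measure_mono_null hsub (measure_union_null ?_ ?_)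
    · rw [← Measure.map_apply measurable_fst hιm.measurableSet_range.compl, h1, hnull]
    · rw [← Measure.map_apply measurable_snd hιm.measurableSet_range.compl, h2, hnull]
  let π := π'.comap (Prod.map ι ι)
  have hπ : π.map (Prod.map ι ι) = π' := by
    rw [hem.map_comap]
    exact Measure.restrict_eq_self_of_ae_mem (by rw [ae_iff]; exact hr)
  refine ⟨π, ⟨?_, ?_⟩, ?_⟩
  · have : (π.map Prod.fst).map ι = ν.map ι := by
      rw [← h1, ← hπ, Measure.map_map hιm.measurable measurable_fst,
        Measure.map_map measurable_fst hem.measurable]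
      rfl
    rw [← hιm.comap_map (π.map Prod.fst), this, hιm.comap_map]
  · have : (π.map Prod.snd).map ι = μ.map ι := by
      rw [← h2, ← hπ, Measure.map_map hιm.measurable measurable_snd,
        Measure.map_map measurable_snd hem.measurable]
      rfl
    rw [← hιm.comap_map (π.map Prod.snd), this, hιm.comap_map]
  · obtain ⟨g, hg0, hg1, hg2⟩ := KR_approx (Prod.map ι ι) (hι.isInducing.prodMap hι.isInducing)
      (fun p : X × X => c p.1 p.2) (fun p => hc0 _ _) hc
    have hm : ∀ n, Measurable fun p : X × X => ENNReal.ofReal (g n (Prod.map ι ι p)) := fun n =>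
      ((g n).continuous.measurable.comp hem.measurable).ennreal_ofReal
    calc ∫⁻ p, ENNReal.ofReal (c p.1 p.2) ∂π
        = ∫⁻ p, liminf (fun n => ENNReal.ofReal (g n (Prod.map ι ι p))) atTop ∂π := by
          refine lintegral_congr fun p => ?_
          exact ((ENNReal.tendsto_ofReal (hg2 p)).liminf_eq).symm
      _ ≤ liminf (fun n => ∫⁻ p, ENNReal.ofReal (g n (Prod.map ι ι p)) ∂π) atTop :=
          lintegral_liminf_le hm
      _ ≤ liminf (fun n : ℕ => ENNReal.ofReal S) atTop := by
          refine liminf_le_liminf (Eventually.of_forall fun n => ?_)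
          have e : ∫⁻ p, ENNReal.ofReal (g n (Prod.map ι ι p)) ∂π
              = ∫⁻ q, ENNReal.ofReal (g n q) ∂π' := by
            rw [← hπ, lintegral_map (g n).continuous.measurable.ennreal_ofReal hem.measurable]
          rw [e, ← ofReal_integral_eq_lintegral_ofReal]
          · exact ENNReal.ofReal_le_ofReal (h3 (g n) fun x y => hg1 n (x, y))
          · exact Integrable.of_bound (g n).continuous.measurable.aestronglyMeasurable ‖g n‖
              (Eventually.of_forall fun x => (g n).norm_coe_le_norm _)
          · exact Eventually.of_forall (hg0 n)
      _ = ENNReal.ofReal S := by simp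

open Filter Topology in
lemma KR_lsc {X : Type*} [TopologicalSpace X]
    (d : X → X → ℝ) (hd_lsc : LowerSemicontinuous fun p : X × X => d p.1 p.2)
    (ψ : X → ℝ) (hψ : Continuous ψ) (K : Set X) (hK : IsCompact K) (hne : K.Nonempty) :
    LowerSemicontinuous fun x => ⨅ y : K, (ψ y + d x y) := by
  have hlsc : LowerSemicontinuous fun p : X × X => ψ p.2 + d p.1 p.2 :=
    (hψ.comp continuous_snd).lowerSemicontinuous.add hd_lsc
  intro x a ha
  have : Nonempty K := hne.to_subtype
  obtain ⟨b, hab, hb⟩ := exists_between ha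
  have hbdd : BddBelow (Set.range fun y : K => ψ y + d x y) := by
    have h0 : LowerSemicontinuousOn (fun y => ψ y + d x y) K :=
      fun y _ => LowerSemicontinuousAt.lowerSemicontinuousWithinAt _ (fun b hb =>
        (Continuous.prodMk_right x).continuousAt.eventually (hlsc (x, y) b hb))
    have := h0.bddBelow_of_isCompact hK
    rwa [Set.image_eq_range] at this
  have hev : ∀ᶠ z in 𝓝 x, ∀ y ∈ K, b < ψ y + d z y := by
    refine hK.eventually_forall_of_forall_eventually fun y hy => ?_
    exact hlsc (x, y) b (hb.trans_le (ciInf_le hbdd ⟨y, hy⟩))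
  filter_upwards [hev] with z hz
  exact hab.trans_le (le_ciInf fun y => (hz y y.2).le)

/-- Kantorovich–Rubinstein theorem: for a lower semicontinuous metric `d` on a Polish
space (possibly different from the Polish metric) and probability measures with finite
first `d`-moment, `𝒯_d(ν,μ)` equals the supremum of `∫ u dν − ∫ u dμ` over Borel
measurable `d`-Lipschitz(1) functions `u`. -/
theorem kantorovich_rubinstein {X : Type*} [TopologicalSpace X] [PolishSpace X]
    [MeasurableSpace X] [BorelSpace X]
    (d : X → X → ℝ)
    (hd_self : ∀ x, d x x = 0) (hd_eq : ∀ x y, d x y = 0 → x = y)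
    (hd_symm : ∀ x y, d x y = d y x) (hd_triangle : ∀ x y z, d x z ≤ d x y + d y z)
    (hd_lsc : LowerSemicontinuous fun p : X × X => d p.1 p.2)
    (ν μ : Measure X) [IsProbabilityMeasure ν] [IsProbabilityMeasure μ]
    (x₀ : X)
    (hν₁ : ∫⁻ x, ENNReal.ofReal (d x₀ x) ∂ν ≠ ∞)
    (hμ₁ : ∫⁻ x, ENNReal.ofReal (d x₀ x) ∂μ ≠ ∞) :
    optCost d ν μ =
      ⨆ (u : X → ℝ) (_ : Measurable u ∧ ∀ x y, |u x - u y| ≤ d x y),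
        ENNReal.ofReal (∫ x, u x ∂ν - ∫ x, u x ∂μ) := by
  have hd0 : ∀ x y, 0 ≤ d x y := by
    intro x y
    have h1 := hd_triangle x y x
    rw [hd_self, hd_symm y x] at h1
    linarith
  have hdm : Measurable fun p : X × X => d p.1 p.2 := hd_lsc.measurable
  have hdm0 : Measurable fun x => d x₀ x := hdm.comp (measurable_const.prodMk measurable_id)
  have hdint : ∀ ρ : Measure X, ∫⁻ x, ENNReal.ofReal (d x₀ x) ∂ρ ≠ ∞ →
      Integrable (fun x => d x₀ x) ρ := by
    intro ρ h
    refine (lintegral_ofReal_ne_top_iff_integrable hdm0.aestronglyMeasurable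
      (Filter.Eventually.of_forall fun x => hd0 _ _)).1 h
  have hdν := hdint ν hν₁
  have hdμ := hdint μ hμ₁
  have huint : ∀ (ρ : Measure X) [IsProbabilityMeasure ρ], Integrable (fun x => d x₀ x) ρ →
      ∀ u : X → ℝ, Measurable u → (∀ x y, |u x - u y| ≤ d x y) → Integrable u ρ := by
    intro ρ _ hρ u hu hl
    refine ((integrable_const |u x₀|).add hρ).mono' hu.aestronglyMeasurable
      (Filter.Eventually.of_forall fun x => ?_)
    have h1 := hl x x₀
    rw [hd_symm] at h1
    have h2 : |u x| ≤ |u x₀| + |u x - u x₀| := by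
      have := abs_add_le (u x₀) (u x - u x₀)
      simpa using this
    simp only [Real.norm_eq_abs, Pi.add_apply]
    linarith
  apply le_antisymm
  · by_cases htop : (⨆ (u : X → ℝ) (_ : Measurable u ∧ ∀ x y, |u x - u y| ≤ d x y),
        ENNReal.ofReal (∫ x, u x ∂ν - ∫ x, u x ∂μ)) = ∞
    · rw [htop]; exact le_top
    set T := (⨆ (u : X → ℝ) (_ : Measurable u ∧ ∀ x y, |u x - u y| ≤ d x y),
        ENNReal.ofReal (∫ x, u x ∂ν - ∫ x, u x ∂μ)) with hT
    have hTu : ∀ u : X → ℝ, Measurable u → (∀ x y, |u x - u y| ≤ d x y) →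
        ∫ x, u x ∂ν - ∫ x, u x ∂μ ≤ T.toReal := by
      intro u hu hl
      rw [← ENNReal.ofReal_le_iff_le_toReal htop]
      exact le_iSup₂_of_le u ⟨hu, hl⟩ le_rfl
    have : Nonempty X := ⟨x₀⟩
    obtain ⟨π, hπ, hle⟩ := KR_primal d hd0 hd_lsc ν μ T.toReal (by
      intro φ ψ hφψ
      refine le_of_forall_pos_le_add fun ε hε => ?_
      let h : X → ℝ := fun x => 2 * ‖ψ‖ + d x₀ x
      have hh0 : ∀ x, 0 ≤ h x := fun x => by
        have := hd0 x₀ x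
        simp only [h]
        positivity
      have hhm : Measurable h := measurable_const.add hdm0
      have hhint : Integrable h μ := (integrable_const _).add hdμ
      let P : Measure X := μ.withDensity fun x => ENNReal.ofReal (h x)
      have hPfin : IsFiniteMeasure P := isFiniteMeasure_withDensity_ofReal hhint.2
      obtain ⟨K₀, hK₀, hPK⟩ := exists_isCompact_closure_measure_compl_lt P (ENNReal.ofReal ε)
        (by simpa using hε)
      let K : Set X := closure K₀ ∪ {x₀}
      have hK : IsCompact K := hK₀.union isCompact_singleton
      have hKm : MeasurableSet K := hK.isClosed.measurableSet
      have hx₀ : x₀ ∈ K := Or.inr rfl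
      have : Nonempty K := ⟨⟨x₀, hx₀⟩⟩
      have hPK' : ∫ x in Kᶜ, h x ∂μ ≤ ε := by
        rw [integral_eq_lintegral_of_nonneg_ae (Filter.Eventually.of_forall hh0)
          hhm.aestronglyMeasurable]
        refine ENNReal.toReal_le_of_le_ofReal hε.le ?_
        rw [← withDensity_apply _ hKm.compl]
        refine (measure_mono ?_).trans hPK.le
        exact Set.compl_subset_compl.2 (subset_closure.trans Set.subset_union_left)
      let u : X → ℝ := fun x => ⨅ y : K, (ψ y + d x y)
      have hum : Measurable u :=
        (KR_lsc d hd_lsc ψ ψ.continuous K hK ⟨x₀, hx₀⟩).measurable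
      have hbdd : ∀ x, BddBelow (Set.range fun y : K => ψ y + d x y) := by
        intro x
        refine ⟨φ x, ?_⟩
        rintro _ ⟨y, rfl⟩
        have := hφψ x y
        simp only
        linarith
      have hul1 : ∀ x y, u x - u y ≤ d x y := by
        intro x y
        rw [sub_le_comm]
        refine le_ciInf fun z => ?_
        have h1 : u x ≤ ψ z + d x z := ciInf_le (hbdd x) z
        have := hd_triangle x y z
        linarith
      have hul : ∀ x y, |u x - u y| ≤ d x y := by
        intro x y
        rw [abs_le]
        have h1 := hul1 x y
        have h2 := hul1 y x
        rw [hd_symm] at h2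
        constructor <;> linarith
      have hφu : ∀ x, φ x ≤ u x := fun x => le_ciInf fun y => by
        have := hφψ x y
        linarith
      have huψ : ∀ x, u x ≤ ψ x + Kᶜ.indicator h x := by
        intro x
        by_cases hx : x ∈ K
        · have h1 : u x ≤ ψ x + d x x := ciInf_le (hbdd x) ⟨x, hx⟩
          rw [hd_self] at h1
          simpa [hx] using h1
        · have h1 : u x ≤ ψ x₀ + d x x₀ := ciInf_le (hbdd x) ⟨x₀, hx₀⟩
          rw [Set.indicator_of_mem (by exact hx)]
          have h2 := (abs_le.1 (ψ.norm_coe_le_norm x)).1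
          have h3 := (abs_le.1 (ψ.norm_coe_le_norm x₀)).2
          rw [hd_symm] at h1
          simp only [h]
          linarith
      have hui := huint ν hdν u hum hul
      have hui' := huint μ hdμ u hum hul
      have i1 : ∫ x, φ x ∂ν ≤ ∫ x, u x ∂ν := integral_mono (φ.integrable ν) hui hφu
      have i2 : ∫ x, u x ∂μ ≤ ∫ x, (ψ x + Kᶜ.indicator h x) ∂μ :=
        integral_mono hui' ((ψ.integrable μ).add (hhint.indicator hKm.compl)) huψ
      rw [integral_add (ψ.integrable μ) (hhint.indicator hKm.compl),
        integral_indicator hKm.compl] at i2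
      have i3 := hTu u hum hul
      linarith)
    rw [ENNReal.ofReal_toReal htop] at hle
    exact (iInf₂_le π hπ).trans hle
  · refine iSup₂_le fun u hu => le_iInf₂ fun π hπ => ?_
    obtain ⟨hum, hul⟩ := hu
    have hui := huint ν hdν u hum hul
    have hui' := huint μ hdμ u hum hul
    rw [← hπ.1] at hui
    rw [← hπ.2] at hui'
    have j1 : Integrable (fun p : X × X => u p.1) π := hui.comp_measurable measurable_fst
    have j2 : Integrable (fun p : X × X => u p.2) π := hui'.comp_measurable measurable_snd
    have e1 : ∫ x, u x ∂ν = ∫ p, u p.1 ∂π := by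
      rw [← hπ.1, integral_map measurable_fst.aemeasurable hum.aestronglyMeasurable]
    have e2 : ∫ x, u x ∂μ = ∫ p, u p.2 ∂π := by
      rw [← hπ.2, integral_map measurable_snd.aemeasurable hum.aestronglyMeasurable]
    rw [e1, e2, ← integral_sub j1 j2]
    refine (ENNReal.ofReal_le_ofReal (le_abs_self _)).trans ?_
    rw [← Real.norm_eq_abs, ofReal_norm_eq_enorm]
    refine (enorm_integral_le_lintegral_enorm _).trans (lintegral_mono fun p => ?_)
    rw [← ofReal_norm_eq_enorm]
    exact ENNReal.ofReal_le_ofReal (hul p.1 p.2)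
end

section
/- (Marton's concentration theorem) Let (𝒳,d) be a Polish metric space, let α : [0,∞) → [0,∞) be an increasing bijection, and suppose μ ∈ P(𝒳) satisfies α(𝒯_d(ν,μ)) ≤ H(ν|μ) for all ν ∈ P(𝒳). Then for every Borel set A ⊆ 𝒳 with μ(A) ≥ 1/2 and every r ≥ r₀ := α⁻¹(log 2), one has μ(A^r) ≥ 1 − e^{−α(r − r₀)}. -/
open MeasureTheory ENNReal

/-- The natural extension to `ℝ≥0∞` of a function `α : [0,∞) → [0,∞)`.
For an increasing `α` and `x < ∞` it equals `ENNReal.ofReal (α x.toReal)`,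
and at `x = ∞` it is the limit of `α` at `+∞` (so `∞` when `α` is unbounded). -/
noncomputable def extRealFun (α : ℝ → ℝ) (x : ℝ≥0∞) : ℝ≥0∞ :=
  ⨆ (t : ℝ) (_ : 0 ≤ t ∧ ENNReal.ofReal t ≤ x), ENNReal.ofReal (α t)

lemma relEntropy_cond_le {X : Type*} [MeasurableSpace X] (μ : Measure X)
    [IsProbabilityMeasure μ] (S : Set X) (hS : MeasurableSet S) (h0 : μ S ≠ 0) :
    relEntropy (ProbabilityTheory.cond μ S) μ ≤ ENNReal.ofReal (-Real.log (μ S).toReal) := by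
  have hac : ProbabilityTheory.cond μ S ≪ μ := ProbabilityTheory.cond_absolutelyContinuous
  have hw : ProbabilityTheory.cond μ S = μ.withDensity (S.indicator (fun _ => (μ S)⁻¹)) := by
    rw [withDensity_indicator hS, withDensity_const]; rfl
  have hrn : (ProbabilityTheory.cond μ S).rnDeriv μ =ᵐ[μ] S.indicator (fun _ => (μ S)⁻¹) := by
    rw [hw]
    exact Measure.rnDeriv_withDensity μ (measurable_const.indicator hS)
  unfold relEntropy
  rw [if_pos hac]
  have hp0 : 0 < (μ S).toReal := ENNReal.toReal_pos h0 (measure_ne_top _ _)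
  set p := (μ S).toReal with hp
  have hμS : μ S = ENNReal.ofReal p := (ENNReal.ofReal_toReal (measure_ne_top _ _)).symm
  have hp1 : p ≤ 1 := by
    have := ENNReal.toReal_mono ENNReal.one_ne_top (prob_le_one (μ := μ) (s := S))
    simpa using this
  have hlog := Real.log_le_sub_one_of_pos hp0
  calc _ = ∫⁻ x, (S.indicator (fun _ => ENNReal.ofReal (p⁻¹ * Real.log p⁻¹ - p⁻¹ + 1)) x
            + Sᶜ.indicator (fun _ => 1) x) ∂μ := by
        apply lintegral_congr_ae
        filter_upwards [hrn] with x hx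
        rw [hx]
        by_cases hxS : x ∈ S
        · simp [hxS, hp]
        · simp [hxS]
    _ = ENNReal.ofReal (p⁻¹ * Real.log p⁻¹ - p⁻¹ + 1) * ENNReal.ofReal p
          + ENNReal.ofReal (1 - p) := by
        rw [lintegral_add_left (measurable_const.indicator hS), lintegral_indicator_const hS,
          lintegral_indicator_const hS.compl, hμS, prob_compl_eq_one_sub hS, hμS, one_mul,
          ENNReal.ofReal_sub _ hp0.le, ENNReal.ofReal_one]
    _ = ENNReal.ofReal (-Real.log p) := by
        have h1 : 0 ≤ p⁻¹ * Real.log p⁻¹ - p⁻¹ + 1 := by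
          have : Real.log p ≤ p - 1 := hlog
          rw [Real.log_inv]
          have h2 : p⁻¹ * -Real.log p - p⁻¹ + 1 = p⁻¹ * (p - 1 - Real.log p) := by
            field_simp
            ring
          rw [h2]
          exact mul_nonneg (inv_nonneg.2 hp0.le) (by linarith)
        rw [← ENNReal.ofReal_mul h1, ← ENNReal.ofReal_add (mul_nonneg h1 hp0.le) (by linarith)]
        congr 1
        rw [Real.log_inv]
        field_simp
        ring
    _ ≤ _ := le_rfl

lemma lintegral_le_add_optCost {X : Type*} [MetricSpace X]
    [TopologicalSpace.SeparableSpace X] [MeasurableSpace X] [BorelSpace X]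
    (f : X → ℝ≥0∞) (hf : Measurable f) (hL : ∀ x y, f x ≤ f y + edist x y)
    (ν μ : Measure X) :
    (∫⁻ x, f x ∂ν ≤ ∫⁻ x, f x ∂μ + optCost (fun x y => dist x y) ν μ) ∧
    (∫⁻ x, f x ∂μ ≤ ∫⁻ x, f x ∂ν + optCost (fun x y => dist x y) ν μ) := by
  have : SecondCountableTopology X := UniformSpace.secondCountable_of_separable X
  unfold optCost
  simp only [ENNReal.add_iInf, ← edist_dist]
  constructor
  · refine le_iInf fun π => le_iInf fun h => ?_
    rw [← h.1, ← h.2, lintegral_map hf measurable_fst, lintegral_map hf measurable_snd,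
      ← lintegral_add_left (show Measurable fun p : X × X => f p.2 from hf.comp measurable_snd)]
    exact lintegral_mono fun p => hL p.1 p.2
  · refine le_iInf fun π => le_iInf fun h => ?_
    rw [← h.1, ← h.2, lintegral_map hf measurable_fst, lintegral_map hf measurable_snd,
      ← lintegral_add_left (show Measurable fun p : X × X => f p.1 from hf.comp measurable_fst)]
    exact lintegral_mono fun p => by
      have := hL p.2 p.1
      rwa [edist_comm] at this

/-- Marton's concentration theorem: if `μ` satisfies the transport-entropy inequality
`α(𝒯_d(ν,μ)) ≤ H(ν|μ)` for all `ν`, where `α : [0,∞) → [0,∞)` is an increasing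
bijection, then for any Borel set `A` with `μ(A) ≥ 1/2` and any `r ≥ r₀ = α⁻¹(log 2)`,
one has `μ(Aʳ) ≥ 1 − exp(−α(r − r₀))`, where `Aʳ = {x | d(x, A) ≤ r}`. -/
theorem marton_concentration {X : Type*} [MetricSpace X] [CompleteSpace X]
    [TopologicalSpace.SeparableSpace X] [MeasurableSpace X] [BorelSpace X]
    (α : ℝ → ℝ) (hα_mono : StrictMonoOn α (Set.Ici 0))
    (hα_bij : Set.BijOn α (Set.Ici 0) (Set.Ici 0))
    (μ : Measure X) [IsProbabilityMeasure μ]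
    (hT : ∀ ν : Measure X, IsProbabilityMeasure ν →
      extRealFun α (optCost (fun x y => dist x y) ν μ) ≤ relEntropy ν μ)
    (r₀ : ℝ) (hr₀_nonneg : 0 ≤ r₀) (hr₀ : α r₀ = Real.log 2)
    (A : Set X) (hA : MeasurableSet A) (hAμ : (1 / 2 : ℝ≥0∞) ≤ μ A)
    (r : ℝ) (hr : r₀ ≤ r) :
    1 - ENNReal.ofReal (Real.exp (-α (r - r₀))) ≤ μ {x | Metric.infDist x A ≤ r} := by
  have hA0 : μ A ≠ 0 := by
    intro h
    rw [h] at hAμ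
    simp at hAμ
  have hAne : A.Nonempty := nonempty_of_measure_ne_zero hA0
  have hr0 : 0 ≤ r := hr₀_nonneg.trans hr
  set C : Set X := {x | Metric.infDist x A ≤ r} with hC
  have hCm : MeasurableSet C :=
    measurableSet_le (Metric.continuous_infDist_pt A).measurable measurable_const
  by_cases hB0 : μ Cᶜ = 0
  · rw [(prob_compl_eq_zero_iff hCm).1 hB0]
    exact tsub_le_self
  have hprobA : IsProbabilityMeasure (ProbabilityTheory.cond μ A) :=
    ProbabilityTheory.cond_isProbabilityMeasure hA0
  have hprobB : IsProbabilityMeasure (ProbabilityTheory.cond μ Cᶜ) :=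
    ProbabilityTheory.cond_isProbabilityMeasure hB0
  set TA := optCost (fun x y => dist x y) (ProbabilityTheory.cond μ A) μ with hTA
  set TB := optCost (fun x y => dist x y) (ProbabilityTheory.cond μ Cᶜ) μ with hTB
  have hEA := (hT _ hprobA).trans (relEntropy_cond_le μ A hA hA0)
  have hEB := (hT _ hprobB).trans (relEntropy_cond_le μ Cᶜ hCm.compl hB0)
  rw [← hTA] at hEA
  rw [← hTB] at hEB
  -- the test function
  let f : X → ℝ≥0∞ := fun x => min (Metric.infEDist x A) (ENNReal.ofReal r)
  have hf : Measurable f := (Metric.continuous_infEDist.measurable).min measurable_const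
  have hL : ∀ x y, f x ≤ f y + edist x y := by
    intro x y
    have h1 : Metric.infEDist x A ≤ Metric.infEDist y A + edist x y :=
      Metric.infEDist_le_infEDist_add_edist
    simp only [f]
    rw [min_add]
    exact min_le_min h1 le_self_add
  have hfA : ∫⁻ x, f x ∂(ProbabilityTheory.cond μ A) = 0 := by
    rw [lintegral_eq_zero_iff hf]
    filter_upwards [ProbabilityTheory.ae_cond_mem hA] with x hx
    simp [f, Metric.infEDist_zero_of_mem hx]
  have hfB : ∫⁻ x, f x ∂(ProbabilityTheory.cond μ Cᶜ) = ENNReal.ofReal r := by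
    have : f =ᵐ[ProbabilityTheory.cond μ Cᶜ] fun _ => ENNReal.ofReal r := by
      filter_upwards [ProbabilityTheory.ae_cond_mem hCm.compl] with x hx
      have hx' : r < Metric.infDist x A := by simpa [hC] using hx
      apply min_eq_right
      exact (ENNReal.ofReal_le_iff_le_toReal (Metric.infEDist_ne_top hAne)).2 hx'.le
    rw [lintegral_congr_ae this]
    simp
  have key : ENNReal.ofReal r ≤ TA + TB := by
    have h1 := (lintegral_le_add_optCost f hf hL (ProbabilityTheory.cond μ A) μ).2
    have h2 := (lintegral_le_add_optCost f hf hL (ProbabilityTheory.cond μ Cᶜ) μ).1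
    rw [hfA, zero_add] at h1
    rw [hfB] at h2
    exact h2.trans (by gcongr)
  have hTA_le : TA ≤ ENNReal.ofReal r₀ := by
    by_contra! hlt
    obtain ⟨t, ht1, ht2⟩ := ENNReal.lt_iff_exists_nnreal_btwn.1 hlt
    have ht : r₀ < t := by
      rw [← ENNReal.ofReal_coe_nnreal] at ht1
      exact (ENNReal.ofReal_lt_ofReal_iff_of_nonneg hr₀_nonneg).1 ht1
    have h1 : ENNReal.ofReal (α t) ≤ extRealFun α TA := by
      unfold extRealFun
      refine le_iSup₂_of_le (t : ℝ) ⟨t.2, ?_⟩ le_rfl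
      rw [ENNReal.ofReal_coe_nnreal]
      exact ht2.le
    have h2 : α r₀ < α t := hα_mono hr₀_nonneg t.2 ht
    have hhalf : (1 / 2 : ℝ) ≤ (μ A).toReal := by
      have := ENNReal.toReal_mono (measure_ne_top μ A) hAμ
      simpa using this
    have hlog : -Real.log (μ A).toReal ≤ Real.log 2 := by
      have := Real.log_le_log (by norm_num) hhalf
      rw [one_div, Real.log_inv] at this
      linarith
    have h3 := h1.trans (hEA.trans (ENNReal.ofReal_le_ofReal hlog))
    rw [ENNReal.ofReal_le_ofReal_iff (Real.log_nonneg (by norm_num))] at h3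
    linarith
  have hTB_ge : ENNReal.ofReal (r - r₀) ≤ TB := by
    rw [ENNReal.ofReal_sub _ hr₀_nonneg, tsub_le_iff_left]
    exact key.trans (by gcongr)
  have h1 : ENNReal.ofReal (α (r - r₀)) ≤ extRealFun α TB := by
    unfold extRealFun
    exact le_iSup₂_of_le (r - r₀) ⟨sub_nonneg.2 hr, hTB_ge⟩ le_rfl
  have hp0 : 0 < (μ Cᶜ).toReal := ENNReal.toReal_pos hB0 (measure_ne_top _ _)
  have hp1 : (μ Cᶜ).toReal ≤ 1 := by
    have := ENNReal.toReal_mono ENNReal.one_ne_top (prob_le_one (μ := μ) (s := Cᶜ))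
    simpa using this
  have h2 := h1.trans hEB
  rw [ENNReal.ofReal_le_ofReal_iff (by linarith [Real.log_nonpos hp0.le hp1])] at h2
  have h3 : μ Cᶜ ≤ ENNReal.ofReal (Real.exp (-α (r - r₀))) := by
    rw [← ENNReal.ofReal_toReal (measure_ne_top μ Cᶜ)]
    apply ENNReal.ofReal_le_ofReal
    rw [← Real.log_le_iff_le_exp hp0]
    linarith
  calc _ ≤ 1 - μ Cᶜ := tsub_le_tsub_left h3 1
    _ = μ C := by rw [← prob_compl_eq_one_sub hCm.compl, compl_compl]
end

section
/- (Tensorization of transport-entropy inequalities) Let 𝒳₁, 𝒳₂ be Polish spaces with lower semicontinuous cost functions c₁ on 𝒳₁×𝒳₁ and c₂ on 𝒳₂×𝒳₂, let α₁, α₂ ∈ 𝒜, and suppose μ₁ ∈ P(𝒳₁), μ₂ ∈ P(𝒳₂) satisfy α₁(𝒯_{c₁}(ν₁,μ₁)) ≤ H(ν₁|μ₁) for all ν₁ ∈ P(𝒳₁) and α₂(𝒯_{c₂}(ν₂,μ₂)) ≤ H(ν₂|μ₂) for all ν₂ ∈ P(𝒳₂). Then for every ν ∈ P(𝒳₁×𝒳₂),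 (α₁ □ α₂)(𝒯_{c₁⊕c₂}(ν, μ₁⊗μ₂)) ≤ H(ν | μ₁⊗μ₂). -/
open MeasureTheory ENNReal

/-- The inf-convolution `α₁ □ α₂ (t) = inf {α₁(t₁) + α₂(t₂) : t₁, t₂ ≥ 0, t₁ + t₂ = t}`. -/
noncomputable def infConv (α₁ α₂ : ℝ → ℝ) (t : ℝ) : ℝ :=
  sInf {s : ℝ | ∃ t₁ t₂ : ℝ, 0 ≤ t₁ ∧ 0 ≤ t₂ ∧ t₁ + t₂ = t ∧ s = α₁ t₁ + α₂ t₂}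

open ProbabilityTheory InformationTheory Filter Topology
open scoped BoundedContinuousFunction

lemma relEntropy_eq_klDiv {X : Type*} [MeasurableSpace X] (ν μ : Measure X)
    [IsFiniteMeasure ν] [IsFiniteMeasure μ] : relEntropy ν μ = klDiv ν μ := by
  classical
  rw [relEntropy, klDiv_eq_lintegral_klFun]
  congr 1
  simp only [klFun_apply]
  refine lintegral_congr fun x => ?_
  congr 1
  ring

lemma klDiv_restrict {X : Type*} [MeasurableSpace X] (ν μ : Measure X)
    [IsFiniteMeasure ν] [IsFiniteMeasure μ] (h : ν ≪ μ) {A : Set X} (hA : MeasurableSet A) :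
    klDiv (ν.restrict A) (μ.restrict A) =
      ∫⁻ x in A, ENNReal.ofReal (klFun (ν.rnDeriv μ x).toReal) ∂μ := by
  rw [klDiv_eq_lintegral_klFun_of_ac (h.restrict A)]
  have h1 : ν.restrict A = (μ.restrict A).withDensity (ν.rnDeriv μ) := by
    rw [← restrict_withDensity hA, Measure.withDensity_rnDeriv_eq _ _ h]
  have h2 : (ν.restrict A).rnDeriv (μ.restrict A) =ᵐ[μ.restrict A] ν.rnDeriv μ := by
    conv_lhs => rw [h1]
    exact Measure.rnDeriv_withDensity _ (Measure.measurable_rnDeriv _ _)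
  refine lintegral_congr_ae ?_
  filter_upwards [h2] with x hx
  rw [hx]

lemma sum_klDiv_restrict_le {X Y : Type*} [MeasurableSpace X] (ν μ : Measure X)
    [IsFiniteMeasure ν] [IsFiniteMeasure μ] (F : Finset Y) (A : Y → Set X)
    (hA : ∀ a, MeasurableSet (A a)) (hd : Pairwise (Function.onFun Disjoint A)) :
    ∑ a ∈ F, klDiv (ν.restrict (A a)) (μ.restrict (A a)) ≤ klDiv ν μ := by
  by_cases h : ν ≪ μ
  swap; · simp [klDiv_of_not_ac h]
  rw [klDiv_eq_lintegral_klFun_of_ac h]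
  simp_rw [klDiv_restrict ν μ h (hA _)]
  rw [← lintegral_biUnion_finset (fun a _ b _ hab => hd hab) (fun a _ => hA a)]
  exact setLIntegral_le_lintegral _ _

lemma lintegral_le_of_lsc {Ω : Type*} [MeasurableSpace Ω] [TopologicalSpace Ω]
    [OpensMeasurableSpace Ω] [HasOuterApproxClosed Ω]
    {P : ProbabilityMeasure Ω} {Ps : ℕ → ProbabilityMeasure Ω} (hP : Tendsto Ps atTop (𝓝 P))
    {f : Ω → ℝ} (hf : LowerSemicontinuous f) (f_nn : 0 ≤ f) {M : ℝ≥0∞}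
    (hM : ∀ n, ∫⁻ x, ENNReal.ofReal (f x) ∂(Ps n : Measure Ω) ≤ M) :
    ∫⁻ x, ENNReal.ofReal (f x) ∂(P : Measure Ω) ≤ M := by
  simp_rw [lintegral_eq_lintegral_meas_lt _ (Eventually.of_forall f_nn)
    hf.measurable.aemeasurable] at hM ⊢
  calc ∫⁻ (t : ℝ) in Set.Ioi 0, (P : Measure Ω) {a | t < f a}
      ≤ ∫⁻ (t : ℝ) in Set.Ioi 0, atTop.liminf (fun i ↦ (Ps i : Measure Ω) {a | t < f a}) :=
        lintegral_mono fun t => ProbabilityMeasure.le_liminf_measure_open_of_tendsto hP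
          (hf.isOpen_preimage t)
    _ ≤ atTop.liminf (fun i ↦ ∫⁻ (t : ℝ) in Set.Ioi 0, (Ps i : Measure Ω) {a | t < f a}) :=
        lintegral_liminf_le (fun n ↦ Antitone.measurable (fun s t hst ↦
            measure_mono (fun ω hω ↦ lt_of_le_of_lt hst hω)))
    _ ≤ M := by
        refine (liminf_le_liminf (Eventually.of_forall hM)).trans ?_
        simp

/-- Compactness of couplings. -/
lemma optCost_le_of_approx
    {X₁ : Type*} [TopologicalSpace X₁] [PolishSpace X₁] [MeasurableSpace X₁] [BorelSpace X₁]
    {X₂ : Type*} [TopologicalSpace X₂] [PolishSpace X₂] [MeasurableSpace X₂] [BorelSpace X₂]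
    (c : X₁ × X₂ → X₁ × X₂ → ℝ) (hc : ∀ x y, 0 ≤ c x y)
    (hl : LowerSemicontinuous fun p : (X₁ × X₂) × (X₁ × X₂) => c p.1 p.2)
    (ν μ : Measure (X₁ × X₂)) [IsProbabilityMeasure ν] [IsProbabilityMeasure μ]
    (P : ℕ → Measure ((X₁ × X₂) × (X₁ × X₂))) [hP : ∀ n, IsProbabilityMeasure (P n)]
    (h1 : ∀ n, (P n).fst.fst = ν.fst) (h2 : ∀ n, (P n).fst.snd = ν.snd)
    (hlim : ∀ (f : X₁ →ᵇ ℝ) (g : X₂ →ᵇ ℝ), Tendsto (fun n => ∫ p, f p.1 * g p.2 ∂(P n).fst)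
      atTop (𝓝 (∫ p, f p.1 * g p.2 ∂ν)))
    (hs : ∀ n, (P n).snd = μ) {M : ℝ≥0∞}
    (hM : ∀ n, ∫⁻ p, ENNReal.ofReal (c p.1 p.2) ∂(P n) ≤ M) :
    optCost c ν μ ≤ M := by
  let Q : ℕ → ProbabilityMeasure ((X₁ × X₂) × (X₁ × X₂)) := fun n => ⟨P n, hP n⟩
  have htight : IsTightMeasureSet
      ((fun m : ProbabilityMeasure ((X₁ × X₂) × (X₁ × X₂)) =>
        (m : Measure ((X₁ × X₂) × (X₁ × X₂)))) '' Set.range Q) := by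
    apply IsTightMeasureSet.prodMk
    · apply IsTightMeasureSet.prodMk
      · refine (isTightMeasureSet_singleton (μ := ν.fst)).subset ?_
        rintro _ ⟨_, ⟨_, ⟨_, ⟨n, rfl⟩, rfl⟩, rfl⟩, rfl⟩
        exact h1 n
      · refine (isTightMeasureSet_singleton (μ := ν.snd)).subset ?_
        rintro _ ⟨_, ⟨_, ⟨_, ⟨n, rfl⟩, rfl⟩, rfl⟩, rfl⟩
        exact h2 n
    · refine (isTightMeasureSet_singleton (μ := μ)).subset ?_
      rintro _ ⟨_, ⟨_, ⟨n, rfl⟩, rfl⟩, rfl⟩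
      exact hs n
  obtain ⟨R, -, φ, hφ, hR⟩ := (isCompact_closure_of_isTightMeasureSet htight).tendsto_subseq
    (x := Q) (fun n => subset_closure ⟨n, rfl⟩)
  have hfst : (R : Measure ((X₁ × X₂) × (X₁ × X₂))).map Prod.fst = ν := by
    have := Measure.isProbabilityMeasure_map (μ := (R : Measure ((X₁ × X₂) × (X₁ × X₂))))
      measurable_fst.aemeasurable
    refine Measure.ext_of_integral_mul_boundedContinuousFunction fun f g => ?_
    have e1 := (hlim f g).comp hφ.tendsto_atTop
    let F : ((X₁ × X₂) × (X₁ × X₂)) →ᵇ ℝ :=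
      f.compContinuous ⟨fun p => p.1.1, by fun_prop⟩ *
      g.compContinuous ⟨fun p => p.1.2, by fun_prop⟩
    have e2 := (ProbabilityMeasure.tendsto_iff_forall_integral_tendsto.1 hR) F
    have e3 : Tendsto (fun i => ∫ ω, F ω ∂((Q ∘ φ) i : Measure ((X₁ × X₂) × (X₁ × X₂)))) atTop
        (𝓝 (∫ p, f p.1 * g p.2 ∂ν)) := by
      refine e1.congr fun n => ?_
      simp only [Function.comp, Measure.fst]
      rw [integral_map measurable_fst.aemeasurable (by fun_prop)]
      rfl
    rw [integral_map measurable_fst.aemeasurable (by fun_prop), ← tendsto_nhds_unique e2 e3]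
    rfl
  have hsnd : (R : Measure ((X₁ × X₂) × (X₁ × X₂))).map Prod.snd = μ := by
    have e := ProbabilityMeasure.tendsto_map_of_tendsto_of_continuous _ _ hR
      (continuous_snd : Continuous (Prod.snd : (X₁ × X₂) × (X₁ × X₂) → X₁ × X₂))
    let μ0 : ProbabilityMeasure (X₁ × X₂) := ⟨μ, inferInstance⟩
    have e' : Tendsto (fun _ : ℕ => μ0) atTop
        (𝓝 (R.map continuous_snd.measurable.aemeasurable)) := by
      refine e.congr fun n => ?_
      apply Subtype.ext
      exact hs (φ n)
    have := tendsto_nhds_unique e' tendsto_const_nhds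
    exact congrArg Subtype.val this
  refine (iInf₂_le (R : Measure ((X₁ × X₂) × (X₁ × X₂))) ⟨hfst, hsnd⟩).trans ?_
  exact lintegral_le_of_lsc hR hl (fun p => hc _ _) (fun n => hM (φ n))

section Partition

variable {X₁ : Type*} [MeasurableSpace X₁] {X₂ : Type*} [MeasurableSpace X₂]

open Classical in
/-- The conditional law of the second coordinate given that the first one lies in the cell
`s = a` (and `μ₂` if this cell is negligible). -/
noncomputable def cellLaw (ν : Measure (X₁ × X₂)) (μ₂ : Measure X₂) (s : SimpleFunc X₁ X₁)
    (a : X₁) : Measure X₂ :=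
  if ν.fst (s ⁻¹' {a}) = 0 then μ₂ else
    (ν.fst (s ⁻¹' {a}))⁻¹ • (ν.restrict ((s ⁻¹' {a}) ×ˢ Set.univ)).snd

lemma restrict_snd_univ (ν : Measure (X₁ × X₂)) {A : Set X₁} (hA : MeasurableSet A) :
    (ν.restrict (A ×ˢ Set.univ)).snd Set.univ = ν.fst A := by
  rw [Measure.snd_univ, Measure.restrict_apply_univ, Measure.fst_apply hA, Set.prod_univ]

lemma smul_cellLaw (ν : Measure (X₁ × X₂)) [IsProbabilityMeasure ν] (μ₂ : Measure X₂)
    (s : SimpleFunc X₁ X₁) (a : X₁) :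
    ν.fst (s ⁻¹' {a}) • cellLaw ν μ₂ s a = (ν.restrict ((s ⁻¹' {a}) ×ˢ Set.univ)).snd := by
  unfold cellLaw
  split_ifs with h
  · rw [h, zero_smul, eq_comm, ← Measure.measure_univ_eq_zero,
      restrict_snd_univ ν (s.measurableSet_fiber a), h]
  · rw [smul_smul, ENNReal.mul_inv_cancel h (measure_ne_top _ _), one_smul]

instance cellLaw_prob (ν : Measure (X₁ × X₂)) [IsProbabilityMeasure ν] (μ₂ : Measure X₂)
    [IsProbabilityMeasure μ₂] (s : SimpleFunc X₁ X₁) (a : X₁) :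
    IsProbabilityMeasure (cellLaw ν μ₂ s a) := by
  unfold cellLaw
  split_ifs with h
  · infer_instance
  · constructor
    rw [Measure.smul_apply, restrict_snd_univ ν (s.measurableSet_fiber a), smul_eq_mul,
      ENNReal.inv_mul_cancel h (measure_ne_top _ _)]

/-- Entropy decomposition along a finite partition. -/
lemma entropy_partition [StandardBorelSpace X₂] [Nonempty X₂]
    (ν : Measure (X₁ × X₂)) [IsProbabilityMeasure ν] (μ₁ : Measure X₁) (μ₂ : Measure X₂)
    [IsProbabilityMeasure μ₁] [IsProbabilityMeasure μ₂] (s : SimpleFunc X₁ X₁) :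
    klDiv ν.fst μ₁ + ∑ a ∈ s.range, ν.fst (s ⁻¹' {a}) * klDiv (cellLaw ν μ₂ s a) μ₂ ≤
      klDiv ν (μ₁.prod μ₂) := by
  have key : klDiv ν (μ₁.prod μ₂) = klDiv ν.fst μ₁ + klDiv ν (ν.fst.prod μ₂) := by
    have := klDiv_compProd_eq_add ν.fst μ₁ ν.condKernel (Kernel.const X₁ μ₂)
    rwa [Measure.disintegrate, Measure.compProd_const, Measure.compProd_const] at this
  rw [key]
  gcongr
  refine le_trans ?_ (sum_klDiv_restrict_le ν (ν.fst.prod μ₂) s.range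
    (fun a => (s ⁻¹' {a}) ×ˢ Set.univ) (fun a => (s.measurableSet_fiber a).prod .univ) ?_)
  · refine Finset.sum_le_sum fun a _ => ?_
    have e : (ν.fst (s ⁻¹' {a})) * klDiv (cellLaw ν μ₂ s a) μ₂ =
        klDiv (ν.fst (s ⁻¹' {a}) • cellLaw ν μ₂ s a) (ν.fst (s ⁻¹' {a}) • μ₂) := by
      have := klDiv_smul_same (μ := cellLaw ν μ₂ s a) (ν := μ₂) (ν.fst (s ⁻¹' {a})).toNNReal
      simpa only [ENNReal.smul_def, ENNReal.coe_toNNReal (measure_ne_top ν.fst (s ⁻¹' {a}))]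
        using this.symm
    rw [e, smul_cellLaw]
    have e2 : ν.fst (s ⁻¹' {a}) • μ₂ =
        ((ν.fst.prod μ₂).restrict ((s ⁻¹' {a}) ×ˢ Set.univ)).snd := by
      rw [← Measure.prod_restrict, Measure.restrict_univ]
      ext B hB
      rw [Measure.snd_apply hB, ← Set.univ_prod, Measure.prod_prod]
      simp
    rw [e2]
    exact klDiv_map_le _ _ measurable_snd
  · intro a b hab
    refine Set.disjoint_left.2 fun p hp hq => hab ?_
    simp only [Set.mem_prod, Set.mem_preimage, Set.mem_singleton_iff] at hp hq
    exact hp.1.symm.trans hq.1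

/-- A kernel depending on a point only through its cell. -/
noncomputable def simpleKernel {Z Y : Type*} [MeasurableSpace Z] [MeasurableSpace Y]
    (s : SimpleFunc X₁ X₁) (f : Z → X₁) (hf : Measurable f) (κ : X₁ → Measure Y) : Kernel Z Y :=
  ⟨fun z => κ (s (f z)), (s.map κ).measurable.comp hf⟩

lemma simpleKernel_apply {Z Y : Type*} [MeasurableSpace Z] [MeasurableSpace Y]
    (s : SimpleFunc X₁ X₁) (f : Z → X₁) (hf : Measurable f) (κ : X₁ → Measure Y) (z : Z) :
    simpleKernel s f hf κ z = κ (s (f z)) := rfl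

instance simpleKernel_markov {Z Y : Type*} [MeasurableSpace Z] [MeasurableSpace Y]
    (s : SimpleFunc X₁ X₁) (f : Z → X₁) (hf : Measurable f) (κ : X₁ → Measure Y)
    [h : ∀ a, IsProbabilityMeasure (κ a)] : IsMarkovKernel (simpleKernel s f hf κ) :=
  ⟨fun z => h (s (f z))⟩

/-- The averaged version of `ν`. -/
noncomputable def avgLaw (ν : Measure (X₁ × X₂)) (μ₂ : Measure X₂) (s : SimpleFunc X₁ X₁) :
    Measure (X₁ × X₂) :=
  ν.fst ⊗ₘ (simpleKernel s id measurable_id (cellLaw ν μ₂ s))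

variable (ν : Measure (X₁ × X₂)) [IsProbabilityMeasure ν] (μ₂ : Measure X₂)
    [IsProbabilityMeasure μ₂] (s : SimpleFunc X₁ X₁)

instance avgLaw_prob : IsProbabilityMeasure (avgLaw ν μ₂ s) := by
  unfold avgLaw; infer_instance

lemma avgLaw_fst : (avgLaw ν μ₂ s).fst = ν.fst := by
  simp [avgLaw]

lemma avgLaw_map :
    (avgLaw ν μ₂ s).map (fun p => (s p.1, p.2)) = ν.map (fun p => (s p.1, p.2)) := by
  classical
  have hm : Measurable (fun p : X₁ × X₂ => (s p.1, p.2)) :=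
    (s.measurable.comp measurable_fst).prodMk measurable_snd
  have := Measure.isProbabilityMeasure_map (μ := avgLaw ν μ₂ s) hm.aemeasurable
  have := Measure.isProbabilityMeasure_map (μ := ν) hm.aemeasurable
  refine Measure.ext_prod fun {A B} hA hB => ?_
  rw [Measure.map_apply hm (hA.prod hB), Measure.map_apply hm (hA.prod hB)]
  have hcell : ∀ a, avgLaw ν μ₂ s ((s ⁻¹' {a}) ×ˢ B) = ν ((s ⁻¹' {a}) ×ˢ B) := by
    intro a
    unfold avgLaw
    rw [Measure.compProd_apply_prod (s.measurableSet_fiber a) hB]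
    have : ∫⁻ x in s ⁻¹' {a}, simpleKernel s id measurable_id (cellLaw ν μ₂ s) x B ∂ν.fst
        = ∫⁻ x in s ⁻¹' {a}, cellLaw ν μ₂ s a B ∂ν.fst := by
      refine setLIntegral_congr_fun (s.measurableSet_fiber a) fun x hx => ?_
      have hx' : s x = a := hx
      simp only [simpleKernel_apply, id, hx']
    rw [this, setLIntegral_const, mul_comm, ← smul_eq_mul, ← Measure.smul_apply, smul_cellLaw,
      Measure.snd_apply hB, Measure.restrict_apply (measurable_snd hB)]
    congr 1
    ext p
    simp [and_comm]
  have hdec : (fun p : X₁ × X₂ => (s p.1, p.2)) ⁻¹' (A ×ˢ B) =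
      ⋃ a ∈ s.range.filter (· ∈ A), (s ⁻¹' {a}) ×ˢ B := by
    ext p
    simp
  have hdisj : (↑(s.range.filter (· ∈ A)) : Set X₁).PairwiseDisjoint
      (fun a => (s ⁻¹' {a}) ×ˢ B) := by
    intro a _ b _ hab
    refine Set.disjoint_left.2 fun p hp hq => hab ?_
    simp only [Set.mem_prod, Set.mem_preimage, Set.mem_singleton_iff] at hp hq
    exact hp.1.symm.trans hq.1
  rw [hdec, measure_biUnion_finset hdisj (fun a _ => (s.measurableSet_fiber a).prod hB),
    measure_biUnion_finset hdisj (fun a _ => (s.measurableSet_fiber a).prod hB)]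
  exact Finset.sum_congr rfl fun a _ => hcell a

lemma avgLaw_snd : (avgLaw ν μ₂ s).snd = ν.snd := by
  have hm : Measurable (fun p : X₁ × X₂ => (s p.1, p.2)) :=
    (s.measurable.comp measurable_fst).prodMk measurable_snd
  have := congrArg (Measure.map Prod.snd) (avgLaw_map ν μ₂ s)
  rwa [Measure.map_map measurable_snd hm, Measure.map_map measurable_snd hm] at this

end Partition

lemma abs_integral_sub_le {X₁ X₂ : Type*} [MeasurableSpace X₁] [MeasurableSpace X₂]
    [TopologicalSpace X₁] [OpensMeasurableSpace X₁] [TopologicalSpace X₂]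
    [OpensMeasurableSpace X₂]
    (ρ : Measure (X₁ × X₂)) [IsProbabilityMeasure ρ] (s : SimpleFunc X₁ X₁)
    (f : X₁ →ᵇ ℝ) (g : X₂ →ᵇ ℝ) :
    |∫ p, f p.1 * g p.2 ∂ρ - ∫ p, f (s p.1) * g p.2 ∂ρ| ≤
      ‖g‖ * ∫ x, |f x - f (s x)| ∂ρ.fst := by
  have hfm : Measurable f := f.continuous.measurable
  have hgm : Measurable g := g.continuous.measurable
  have hfs : Measurable (fun x => f (s x)) := hfm.comp s.measurable
  have i1 : Integrable (fun p : X₁ × X₂ => f p.1 * g p.2) ρ :=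
    Integrable.of_bound ((hfm.comp measurable_fst).mul
      (hgm.comp measurable_snd)).aestronglyMeasurable (‖f‖ * ‖g‖) (.of_forall fun p => by
        rw [norm_mul]
        exact mul_le_mul (f.norm_coe_le_norm _) (g.norm_coe_le_norm _) (norm_nonneg _)
          (norm_nonneg _))
  have i2 : Integrable (fun p : X₁ × X₂ => f (s p.1) * g p.2) ρ :=
    Integrable.of_bound ((hfs.comp measurable_fst).mul
      (hgm.comp measurable_snd)).aestronglyMeasurable (‖f‖ * ‖g‖) (.of_forall fun p => by
        rw [norm_mul]
        exact mul_le_mul (f.norm_coe_le_norm _) (g.norm_coe_le_norm _) (norm_nonneg _)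
          (norm_nonneg _))
  have i3 : Integrable (fun x : X₁ => |f x - f (s x)|) ρ.fst :=
    Integrable.of_bound (hfm.sub hfs).abs.aestronglyMeasurable (‖f‖ + ‖f‖)
      (.of_forall fun x => by
        rw [Real.norm_eq_abs, abs_abs, ← Real.norm_eq_abs]
        exact (norm_sub_le _ _).trans (add_le_add (f.norm_coe_le_norm _) (f.norm_coe_le_norm _)))
  have i4 : Integrable (fun p : X₁ × X₂ => |f p.1 - f (s p.1)|) ρ :=
    i3.comp_measurable measurable_fst
  rw [← integral_sub i1 i2, ← Real.norm_eq_abs]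
  refine (norm_integral_le_integral_norm _).trans ?_
  rw [Measure.fst, integral_map measurable_fst.aemeasurable (by
    exact (hfm.sub hfs).abs.aestronglyMeasurable), ← integral_const_mul]
  refine integral_mono (i1.sub i2).norm (i4.const_mul _) fun p => ?_
  simp only
  rw [← sub_mul, norm_mul, mul_comm, Real.norm_eq_abs (f p.1 - _)]
  exact mul_le_mul_of_nonneg_right (g.norm_coe_le_norm _) (abs_nonneg _)

lemma avgLaw_tendsto {X₁ X₂ : Type*} [MeasurableSpace X₁] [MeasurableSpace X₂]
    [TopologicalSpace X₁] [OpensMeasurableSpace X₁] [TopologicalSpace X₂]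
    [OpensMeasurableSpace X₂]
    (ν : Measure (X₁ × X₂)) [IsProbabilityMeasure ν] (μ₂ : Measure X₂)
    [IsProbabilityMeasure μ₂] (s : ℕ → SimpleFunc X₁ X₁)
    (hs : ∀ x, Tendsto (fun n => s n x) atTop (𝓝 x)) (f : X₁ →ᵇ ℝ) (g : X₂ →ᵇ ℝ) :
    Tendsto (fun n => ∫ p, f p.1 * g p.2 ∂(avgLaw ν μ₂ (s n))) atTop
      (𝓝 (∫ p, f p.1 * g p.2 ∂ν)) := by
  have hfm : Measurable f := f.continuous.measurable
  have hgm : Measurable g := g.continuous.measurable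
  have h0 : Tendsto (fun n => ∫ x, |f x - f (s n x)| ∂ν.fst) atTop (𝓝 0) := by
    have := tendsto_integral_of_dominated_convergence (μ := ν.fst)
      (F := fun n x => |f x - f (s n x)|) (f := fun _ => (0 : ℝ)) (fun _ => ‖f‖ + ‖f‖)
      (fun n => (hfm.sub (hfm.comp (s n).measurable)).abs.aestronglyMeasurable)
      (integrable_const _)
      (fun n => .of_forall fun x => by
        rw [Real.norm_eq_abs, abs_abs, ← Real.norm_eq_abs]
        exact (norm_sub_le _ _).trans (add_le_add (f.norm_coe_le_norm _) (f.norm_coe_le_norm _)))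
      (.of_forall fun x => by
        have := ((f.continuous.tendsto x).comp (hs x)).const_sub (f x)
        simpa using this.abs)
    simpa using this
  have h1 : ∀ n, ∫ p, f (s n p.1) * g p.2 ∂(avgLaw ν μ₂ (s n)) = ∫ p, f (s n p.1) * g p.2 ∂ν := by
    intro n
    have hm : Measurable (fun p : X₁ × X₂ => (s n p.1, p.2)) :=
      ((s n).measurable.comp measurable_fst).prodMk measurable_snd
    have hF : Measurable (fun p : X₁ × X₂ => f p.1 * g p.2) :=
      (hfm.comp measurable_fst).mul (hgm.comp measurable_snd)
    have a1 := integral_map (μ := ν) hm.aemeasurable hF.aestronglyMeasurable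
    have a2 := integral_map (μ := avgLaw ν μ₂ (s n)) hm.aemeasurable hF.aestronglyMeasurable
    rw [avgLaw_map, a1] at a2
    exact a2.symm
  rw [tendsto_iff_dist_tendsto_zero]
  have h2 : Tendsto (fun n => 2 * (‖g‖ * ∫ x, |f x - f (s n x)| ∂ν.fst)) atTop (𝓝 0) := by
    simpa using (h0.const_mul ‖g‖).const_mul 2
  refine squeeze_zero (fun n => dist_nonneg) (fun n => ?_) h2
  have b1 := abs_integral_sub_le (avgLaw ν μ₂ (s n)) (s n) f g
  have b2 := abs_integral_sub_le ν (s n) f g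
  rw [avgLaw_fst, h1] at b1
  rw [Real.dist_eq]
  rw [abs_le] at *
  constructor <;> linarith [b1.1, b1.2, b2.1, b2.2]

lemma glue {X₁ X₂ : Type*} [MeasurableSpace X₁] [MeasurableSpace X₂]
    (c₁ : X₁ → X₁ → ℝ) (c₂ : X₂ → X₂ → ℝ)
    (hc₁ : ∀ x y, 0 ≤ c₁ x y) (hc₂ : ∀ x y, 0 ≤ c₂ x y)
    (hm₁ : Measurable fun p : X₁ × X₁ => c₁ p.1 p.2)
    (hm₂ : Measurable fun p : X₂ × X₂ => c₂ p.1 p.2)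
    (ν : Measure (X₁ × X₂)) [IsProbabilityMeasure ν] (μ₁ : Measure X₁) (μ₂ : Measure X₂)
    [IsProbabilityMeasure μ₁] [IsProbabilityMeasure μ₂] (s : SimpleFunc X₁ X₁)
    (π₁ : Measure (X₁ × X₁)) [IsProbabilityMeasure π₁]
    (h11 : π₁.map Prod.fst = ν.fst) (h12 : π₁.map Prod.snd = μ₁)
    (π : X₁ → Measure (X₂ × X₂)) [∀ a, IsProbabilityMeasure (π a)]
    (h21 : ∀ a, (π a).map Prod.fst = cellLaw ν μ₂ s a) (h22 : ∀ a, (π a).map Prod.snd = μ₂) :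
    ∃ P : Measure ((X₁ × X₂) × (X₁ × X₂)), IsProbabilityMeasure P ∧
      P.fst = avgLaw ν μ₂ s ∧ P.snd = μ₁.prod μ₂ ∧
      ∫⁻ p, ENNReal.ofReal (c₁ p.1.1 p.2.1 + c₂ p.1.2 p.2.2) ∂P =
        ∫⁻ p, ENNReal.ofReal (c₁ p.1 p.2) ∂π₁ +
        ∑ a ∈ s.range, ν.fst (s ⁻¹' {a}) * ∫⁻ p, ENNReal.ofReal (c₂ p.1 p.2) ∂(π a) := by
  let K := simpleKernel s (Prod.fst : X₁ × X₁ → X₁) measurable_fst π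
  let T : (X₁ × X₁) × (X₂ × X₂) → (X₁ × X₂) × (X₁ × X₂) :=
    fun q => ((q.1.1, q.2.1), (q.1.2, q.2.2))
  have hT : Measurable T := by fun_prop
  have hK : ∀ p, K p = π (s p.1) := fun p => rfl
  have hP : IsProbabilityMeasure ((π₁ ⊗ₘ K).map T) :=
    Measure.isProbabilityMeasure_map hT.aemeasurable
  refine ⟨(π₁ ⊗ₘ K).map T, hP, ?_, ?_, ?_⟩
  · refine Measure.ext_prod fun {A B} hA hB => ?_
    rw [Measure.fst, Measure.map_map measurable_fst hT,
      Measure.map_apply (measurable_fst.comp hT) (hA.prod hB)]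
    have : Prod.fst ∘ T ⁻¹' (A ×ˢ B) = (Prod.fst ⁻¹' A) ×ˢ (Prod.fst ⁻¹' B) := by
      ext q; simp [T]
    rw [this, Measure.compProd_apply_prod (measurable_fst hA) (measurable_fst hB)]
    unfold avgLaw
    rw [Measure.compProd_apply_prod hA hB, ← h11,
      setLIntegral_map hA (Kernel.measurable_coe _ hB) measurable_fst]
    refine lintegral_congr fun p => ?_
    rw [hK, simpleKernel_apply, ← h21, Measure.map_apply measurable_fst hB]
    rfl
  · refine Measure.ext_prod fun {A B} hA hB => ?_
    rw [Measure.snd, Measure.map_map measurable_snd hT,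
      Measure.map_apply (measurable_snd.comp hT) (hA.prod hB)]
    have : Prod.snd ∘ T ⁻¹' (A ×ˢ B) = (Prod.snd ⁻¹' A) ×ˢ (Prod.snd ⁻¹' B) := by
      ext q; simp [T]
    rw [this, Measure.compProd_apply_prod (measurable_snd hA) (measurable_snd hB),
      Measure.prod_prod, ← h12, Measure.map_apply measurable_snd hA]
    simp_rw [hK, ← Measure.map_apply measurable_snd hB, h22]
    rw [setLIntegral_const, mul_comm]
  · have m1 : Measurable fun p : X₁ × X₁ => ENNReal.ofReal (c₁ p.1 p.2) := hm₁.ennreal_ofReal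
    have m2 : Measurable fun p : X₂ × X₂ => ENNReal.ofReal (c₂ p.1 p.2) := hm₂.ennreal_ofReal
    have m1' : Measurable fun q : (X₁ × X₂) × (X₁ × X₂) => ENNReal.ofReal (c₁ q.1.1 q.2.1) :=
      m1.comp (by fun_prop : Measurable fun q : (X₁ × X₂) × (X₁ × X₂) => (q.1.1, q.2.1))
    have m2' : Measurable fun q : (X₁ × X₂) × (X₁ × X₂) => ENNReal.ofReal (c₂ q.1.2 q.2.2) :=
      m2.comp (by fun_prop : Measurable fun q : (X₁ × X₂) × (X₁ × X₂) => (q.1.2, q.2.2))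
    have m3 : Measurable fun q => ENNReal.ofReal (c₁ (T q).1.1 (T q).2.1) := m1'.comp hT
    have m4 : Measurable fun q => ENNReal.ofReal (c₂ (T q).1.2 (T q).2.2) := m2'.comp hT
    simp_rw [ENNReal.ofReal_add (hc₁ _ _) (hc₂ _ _)]
    rw [lintegral_add_left m1', lintegral_map m1' hT, lintegral_map m2' hT,
      Measure.lintegral_compProd m3, Measure.lintegral_compProd m4]
    congr 1
    · refine lintegral_congr fun p => ?_
      simp [T, hK]
    · have e : ∫⁻ p : X₁ × X₁, (∫⁻ b, ENNReal.ofReal (c₂ b.1 b.2) ∂(π (s p.1))) ∂π₁ =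
          ∫⁻ x, (s.map fun a => ∫⁻ b, ENNReal.ofReal (c₂ b.1 b.2) ∂(π a)) x ∂ν.fst := by
        rw [← h11, lintegral_map (SimpleFunc.measurable _) measurable_fst]
        rfl
      rw [SimpleFunc.lintegral_eq_lintegral, SimpleFunc.map_lintegral] at e
      simp_rw [hK]
      simp only [T]
      rw [e]
      exact Finset.sum_congr rfl fun a _ => mul_comm _ _

lemma optCost_exists {X : Type*} [MeasurableSpace X] (c : X → X → ℝ) (ν μ : Measure X)
    [IsProbabilityMeasure ν] [IsProbabilityMeasure μ]
    {M : ℝ≥0∞} (h : optCost c ν μ < M) :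
    ∃ π : Measure (X × X), IsProbabilityMeasure π ∧ π.map Prod.fst = ν ∧ π.map Prod.snd = μ ∧
      ∫⁻ p, ENNReal.ofReal (c p.1 p.2) ∂π < M := by
  unfold optCost at h
  simp only [iInf_lt_iff] at h
  obtain ⟨π, ⟨h1, h2⟩, h3⟩ := h
  refine ⟨π, ⟨?_⟩, h1, h2, h3⟩
  rw [← measure_univ (μ := ν), ← h1, Measure.map_apply measurable_fst .univ, Set.preimage_univ]

/-- Key transport bound: approximate tensorization of the transport cost. -/
lemma exists_partition
    {X₁ : Type*} [TopologicalSpace X₁] [PolishSpace X₁] [MeasurableSpace X₁] [BorelSpace X₁]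
    {X₂ : Type*} [TopologicalSpace X₂] [PolishSpace X₂] [MeasurableSpace X₂] [BorelSpace X₂]
    (c₁ : X₁ → X₁ → ℝ) (c₂ : X₂ → X₂ → ℝ)
    (hc₁ : ∀ x y, 0 ≤ c₁ x y) (hc₂ : ∀ x y, 0 ≤ c₂ x y)
    (hl₁ : LowerSemicontinuous fun p : X₁ × X₁ => c₁ p.1 p.2)
    (hl₂ : LowerSemicontinuous fun p : X₂ × X₂ => c₂ p.1 p.2)
    (μ₁ : Measure X₁) [IsProbabilityMeasure μ₁] (μ₂ : Measure X₂) [IsProbabilityMeasure μ₂]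
    (ν : Measure (X₁ × X₂)) [IsProbabilityMeasure ν] {M ε : ℝ≥0∞} (hε : 0 < ε)
    (hM : M < optCost (fun p q => c₁ p.1 q.1 + c₂ p.2 q.2) ν (μ₁.prod μ₂))
    (h1 : optCost c₁ ν.fst μ₁ ≠ ∞)
    (h2 : ∀ (s : SimpleFunc X₁ X₁) (a : X₁), ν.fst (s ⁻¹' {a}) ≠ 0 →
      optCost c₂ (cellLaw ν μ₂ s a) μ₂ ≠ ∞) :
    ∃ s : SimpleFunc X₁ X₁, M ≤ (optCost c₁ ν.fst μ₁ + ε) +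
      ∑ a ∈ s.range, ν.fst (s ⁻¹' {a}) * (optCost c₂ (cellLaw ν μ₂ s a) μ₂ + ε) := by
  by_contra! hcon
  refine absurd hM (not_lt.2 ?_)
  have : Nonempty (X₁ × X₂) := nonempty_of_isProbabilityMeasure ν
  have : Nonempty X₁ := Nonempty.map Prod.fst this
  let _ := TopologicalSpace.upgradeIsCompletelyMetrizable X₁
  let s : ℕ → SimpleFunc X₁ X₁ := fun n =>
    SimpleFunc.nearestPt (TopologicalSpace.denseSeq X₁) n
  have hs : ∀ x, Tendsto (fun n => s n x) atTop (𝓝 x) := fun x =>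
    SimpleFunc.tendsto_nearestPt (by
      rw [(TopologicalSpace.denseRange_denseSeq X₁).closure_range]; trivial)
  obtain ⟨π₁, hπ₁, h11, h12, hcost1⟩ := optCost_exists c₁ ν.fst μ₁
    (ENNReal.lt_add_right h1 hε.ne')
  have hex : ∀ n a, ∃ π : Measure (X₂ × X₂), IsProbabilityMeasure π ∧
      π.map Prod.fst = cellLaw ν μ₂ (s n) a ∧ π.map Prod.snd = μ₂ ∧
      (ν.fst (s n ⁻¹' {a}) ≠ 0 → ∫⁻ p, ENNReal.ofReal (c₂ p.1 p.2) ∂π ≤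
        optCost c₂ (cellLaw ν μ₂ (s n) a) μ₂ + ε) := by
    intro n a
    by_cases h : ν.fst (s n ⁻¹' {a}) = 0
    · refine ⟨(cellLaw ν μ₂ (s n) a).prod μ₂, inferInstance, ?_, ?_, fun h' => absurd h h'⟩
      · simp
      · simp
    · obtain ⟨π, a1, a2, a3, a4⟩ := optCost_exists c₂ (cellLaw ν μ₂ (s n) a) μ₂
        (ENNReal.lt_add_right (h2 _ _ h) hε.ne')
      exact ⟨π, a1, a2, a3, fun _ => a4.le⟩
  choose π hπ p1 p2 p3 using hex
  have hgl := fun n => glue c₁ c₂ hc₁ hc₂ hl₁.measurable hl₂.measurable ν μ₁ μ₂ (s n) π₁ h11 h12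
    (π n) (p1 n) (p2 n)
  choose P hP f1 f2 f3 using hgl
  refine optCost_le_of_approx _ (fun x y => add_nonneg (hc₁ _ _) (hc₂ _ _)) ?_ ν (μ₁.prod μ₂) P
    (fun n => by rw [f1, avgLaw_fst]) (fun n => by rw [f1, avgLaw_snd])
    (fun f g => by simp_rw [f1]; exact avgLaw_tendsto ν μ₂ s hs f g) f2 (fun n => ?_)
  · refine LowerSemicontinuous.add ?_ ?_
    · exact hl₁.comp (by fun_prop : Continuous fun q : (X₁ × X₂) × (X₁ × X₂) => (q.1.1, q.2.1))
    · exact hl₂.comp (by fun_prop : Continuous fun q : (X₁ × X₂) × (X₁ × X₂) => (q.1.2, q.2.2))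
  · rw [f3]
    refine le_trans ?_ (hcon (s n)).le
    refine add_le_add hcost1.le (Finset.sum_le_sum fun a _ => ?_)
    by_cases h : ν.fst (s n ⁻¹' {a}) = 0
    · simp [h]
    · gcongr
      exact p3 n a h

lemma exists_lt_of_convex (α : ℝ → ℝ) (hc : ConvexOn ℝ (Set.Ici 0) α) (h0 : α 0 = 0)
    {r : ℝ} (hr : 0 ≤ r) (hp : 0 < α r) (B : ℝ) : ∃ x, 0 ≤ x ∧ B < α x := by
  obtain ⟨k, hk⟩ := exists_nat_gt (B / α r)
  have hk1 : (0 : ℝ) < k + 1 := by positivity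
  refine ⟨(k + 1) * r, by positivity, ?_⟩
  have hle : (1 : ℝ) / (k + 1) ≤ 1 := by
    rw [div_le_one hk1]; linarith [(Nat.cast_nonneg k : (0 : ℝ) ≤ k)]
  have hx : ((k : ℝ) + 1) * r ∈ Set.Ici (0 : ℝ) := by simp only [Set.mem_Ici]; positivity
  have hy : (0 : ℝ) ∈ Set.Ici (0 : ℝ) := by simp
  have ha : (0 : ℝ) ≤ 1 / ((k : ℝ) + 1) := by positivity
  have hb : (0 : ℝ) ≤ 1 - 1 / ((k : ℝ) + 1) := by linarith
  have := hc.2 hx hy ha hb (by ring)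
  simp only [smul_eq_mul, h0, mul_zero, add_zero] at this
  rw [← mul_assoc, one_div_mul_cancel hk1.ne', one_mul, one_div, le_inv_mul_iff₀ hk1] at this
  rw [div_lt_iff₀ hp] at hk
  linarith

lemma extRealFun_ge {α : ℝ → ℝ} {x : ℝ≥0∞} {r : ℝ} (hr : 0 ≤ r) (h : ENNReal.ofReal r ≤ x) :
    ENNReal.ofReal (α r) ≤ extRealFun α x :=
  le_iSup₂_of_le (f := fun (t : ℝ) (_ : 0 ≤ t ∧ ENNReal.ofReal t ≤ x) => ENNReal.ofReal (α t))
    r ⟨hr, h⟩ le_rfl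

lemma infConv_le {α₁ α₂ : ℝ → ℝ} (h₁ : ∀ r, 0 ≤ r → 0 ≤ α₁ r) (h₂ : ∀ r, 0 ≤ r → 0 ≤ α₂ r)
    {x y t : ℝ} (hx : 0 ≤ x) (hy : 0 ≤ y) (h : x + y = t) :
    infConv α₁ α₂ t ≤ α₁ x + α₂ y := by
  refine csInf_le ⟨0, ?_⟩ ⟨x, y, hx, hy, h, rfl⟩
  rintro _ ⟨a, b, ha, hb, -, rfl⟩
  exact add_nonneg (h₁ a ha) (h₂ b hb)

/-- Tensorization of transport-entropy inequalities: if `μᵢ` satisfies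
`αᵢ(𝒯_{cᵢ}) ≤ H` (with `αᵢ` convex increasing, `αᵢ(0) = 0`), then `μ₁ ⊗ μ₂`
satisfies `(α₁ □ α₂)(𝒯_{c₁ ⊕ c₂}) ≤ H`. -/
theorem transport_entropy_tensorization
    {X₁ : Type*} [TopologicalSpace X₁] [PolishSpace X₁] [MeasurableSpace X₁] [BorelSpace X₁]
    {X₂ : Type*} [TopologicalSpace X₂] [PolishSpace X₂] [MeasurableSpace X₂] [BorelSpace X₂]
    (c₁ : X₁ → X₁ → ℝ) (c₂ : X₂ → X₂ → ℝ)
    (hc₁_nonneg : ∀ x y, 0 ≤ c₁ x y) (hc₂_nonneg : ∀ x y, 0 ≤ c₂ x y)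
    (hc₁_lsc : LowerSemicontinuous fun p : X₁ × X₁ => c₁ p.1 p.2)
    (hc₂_lsc : LowerSemicontinuous fun p : X₂ × X₂ => c₂ p.1 p.2)
    (α₁ α₂ : ℝ → ℝ)
    (hα₁_cvx : ConvexOn ℝ (Set.Ici 0) α₁) (hα₁_mono : MonotoneOn α₁ (Set.Ici 0))
    (hα₁_zero : α₁ 0 = 0)
    (hα₂_cvx : ConvexOn ℝ (Set.Ici 0) α₂) (hα₂_mono : MonotoneOn α₂ (Set.Ici 0))
    (hα₂_zero : α₂ 0 = 0)
    (μ₁ : Measure X₁) [IsProbabilityMeasure μ₁] (μ₂ : Measure X₂) [IsProbabilityMeasure μ₂]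
    (h₁ : ∀ ν₁ : Measure X₁, IsProbabilityMeasure ν₁ →
      extRealFun α₁ (optCost c₁ ν₁ μ₁) ≤ relEntropy ν₁ μ₁)
    (h₂ : ∀ ν₂ : Measure X₂, IsProbabilityMeasure ν₂ →
      extRealFun α₂ (optCost c₂ ν₂ μ₂) ≤ relEntropy ν₂ μ₂)
    (ν : Measure (X₁ × X₂)) [IsProbabilityMeasure ν] :
    extRealFun (infConv α₁ α₂)
        (optCost (fun p q => c₁ p.1 q.1 + c₂ p.2 q.2) ν (μ₁.prod μ₂)) ≤
      relEntropy ν (μ₁.prod μ₂) := by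
  have n₁ : ∀ r, 0 ≤ r → 0 ≤ α₁ r := fun r hr => by
    rw [← hα₁_zero]; exact hα₁_mono (by simp) hr hr
  have n₂ : ∀ r, 0 ≤ r → 0 ≤ α₂ r := fun r hr => by
    rw [← hα₂_zero]; exact hα₂_mono (by simp) hr hr
  have hNe : Nonempty (X₁ × X₂) := nonempty_of_isProbabilityMeasure ν
  have hNe₂ : Nonempty X₂ := Nonempty.map Prod.snd hNe
  refine iSup₂_le fun t ht => ?_
  obtain ⟨ht0, htT⟩ := ht
  rw [relEntropy_eq_klDiv]
  have g₁ : ∀ ν₁ : Measure X₁, IsProbabilityMeasure ν₁ → ∀ r, 0 ≤ r →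
      ENNReal.ofReal r ≤ optCost c₁ ν₁ μ₁ → ENNReal.ofReal (α₁ r) ≤ klDiv ν₁ μ₁ := by
    intro ν₁ hν₁ r hr h
    rw [← relEntropy_eq_klDiv]
    exact (extRealFun_ge hr h).trans (h₁ ν₁ hν₁)
  have g₂ : ∀ ν₂ : Measure X₂, IsProbabilityMeasure ν₂ → ∀ r, 0 ≤ r →
      ENNReal.ofReal r ≤ optCost c₂ ν₂ μ₂ → ENNReal.ofReal (α₂ r) ≤ klDiv ν₂ μ₂ := by
    intro ν₂ hν₂ r hr h
    rw [← relEntropy_eq_klDiv]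
    exact (extRealFun_ge hr h).trans (h₂ ν₂ hν₂)
  have hent := entropy_partition ν μ₁ μ₂
  by_cases hH : klDiv ν (μ₁.prod μ₂) = ∞
  · rw [hH]; exact le_top
  -- first coordinate alone is enough
  by_cases htT₁ : ENNReal.ofReal t ≤ optCost c₁ ν.fst μ₁
  · have e : infConv α₁ α₂ t ≤ α₁ t := by
      have := infConv_le n₁ n₂ ht0 le_rfl (add_zero t)
      rwa [hα₂_zero, add_zero] at this
    refine (ENNReal.ofReal_le_ofReal e).trans ((g₁ _ inferInstance t ht0 htT₁).trans ?_)
    exact le_self_add.trans (hent (SimpleFunc.const X₁ (hNe.some.1)))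
  rw [not_le] at htT₁
  have hT₁ : optCost c₁ ν.fst μ₁ ≠ ∞ := htT₁.ne_top
  set t₁ := (optCost c₁ ν.fst μ₁).toReal with ht₁
  have ht₁0 : 0 ≤ t₁ := ENNReal.toReal_nonneg
  have hT₁' : optCost c₁ ν.fst μ₁ = ENNReal.ofReal t₁ := (ENNReal.ofReal_toReal hT₁).symm
  have htt : t₁ < t := by
    rw [hT₁'] at htT₁
    exact (ENNReal.ofReal_lt_ofReal_iff_of_nonneg ht₁0).1 htT₁
  -- degenerate second function
  by_cases hdeg : ∀ r, 0 ≤ r → α₂ r ≤ 0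
  · have e : infConv α₁ α₂ t ≤ 0 := by
      have := infConv_le n₁ n₂ le_rfl ht0 (zero_add t)
      rw [hα₁_zero, zero_add] at this
      exact this.trans (hdeg t ht0)
    rw [ENNReal.ofReal_of_nonpos e]
    exact zero_le
  push Not at hdeg
  obtain ⟨r₀, hr₀, hr₀'⟩ := hdeg
  have hfin : ∀ (s : SimpleFunc X₁ X₁) (a : X₁), ν.fst (s ⁻¹' {a}) ≠ 0 →
      optCost c₂ (cellLaw ν μ₂ s a) μ₂ ≠ ∞ := by
    intro s a ha htop
    have hmem : a ∈ s.range := by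
      obtain ⟨x, hx⟩ := nonempty_of_measure_ne_zero ha
      have hx' : s x = a := hx
      rw [← hx']; exact s.mem_range_self x
    have hk : ν.fst (s ⁻¹' {a}) * klDiv (cellLaw ν μ₂ s a) μ₂ ≤ klDiv ν (μ₁.prod μ₂) :=
      (Finset.single_le_sum (f := fun a => ν.fst (s ⁻¹' {a}) * klDiv (cellLaw ν μ₂ s a) μ₂)
        (fun _ _ => zero_le) hmem).trans (le_add_self.trans (hent s))
    have hk' : klDiv (cellLaw ν μ₂ s a) μ₂ ≠ ∞ := by
      intro h
      rw [h, ENNReal.mul_top ha, top_le_iff] at hk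
      exact hH hk
    obtain ⟨x, hx0, hx⟩ := exists_lt_of_convex α₂ hα₂_cvx hα₂_zero hr₀ hr₀'
      (klDiv (cellLaw ν μ₂ s a) μ₂).toReal
    have := g₂ (cellLaw ν μ₂ s a) inferInstance x hx0 (by rw [htop]; exact le_top)
    rw [ENNReal.ofReal_le_iff_le_toReal hk'] at this
    linarith
  -- main estimate
  have main : ∀ δ : ℝ, 0 < δ → 0 ≤ t - t₁ - 3 * δ →
      α₁ t₁ + α₂ (t - t₁ - 3 * δ) ≤ (klDiv ν (μ₁.prod μ₂)).toReal := by
    intro δ hδ hu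
    have hM : ENNReal.ofReal (t - δ) <
        optCost (fun p q => c₁ p.1 q.1 + c₂ p.2 q.2) ν (μ₁.prod μ₂) :=
      lt_of_lt_of_le ((ENNReal.ofReal_lt_ofReal_iff (by linarith)).2 (by linarith)) htT
    obtain ⟨s, hs⟩ := exists_partition c₁ c₂ hc₁_nonneg hc₂_nonneg hc₁_lsc hc₂_lsc μ₁ μ₂ ν
      (ENNReal.ofReal_pos.2 hδ) hM hT₁ hfin
    set w : X₁ → ℝ := fun a => (ν.fst (s ⁻¹' {a})).toReal with hw
    set τ : X₁ → ℝ := fun a => (optCost c₂ (cellLaw ν μ₂ s a) μ₂).toReal with hτ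
    have hw0 : ∀ a, 0 ≤ w a := fun a => ENNReal.toReal_nonneg
    have hτ0 : ∀ a, 0 ≤ τ a := fun a => ENNReal.toReal_nonneg
    have hwo : ∀ a, ν.fst (s ⁻¹' {a}) = ENNReal.ofReal (w a) := fun a =>
      (ENNReal.ofReal_toReal (measure_ne_top _ _)).symm
    have hsum : ∑ a ∈ s.range, w a = 1 := by
      have := s.sum_range_measure_preimage_singleton ν.fst
      rw [measure_univ] at this
      rw [hw, ← ENNReal.toReal_sum (fun a _ => measure_ne_top _ _), this, ENNReal.toReal_one]
    have hterm : ∀ a, ν.fst (s ⁻¹' {a}) *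
        (optCost c₂ (cellLaw ν μ₂ s a) μ₂ + ENNReal.ofReal δ) =
        ENNReal.ofReal (w a * (τ a + δ)) := by
      intro a
      by_cases h : ν.fst (s ⁻¹' {a}) = 0
      · simp [hw, h]
      · rw [ENNReal.ofReal_mul (hw0 a), ← hwo a, ENNReal.ofReal_add (hτ0 a) hδ.le,
          ENNReal.ofReal_toReal (hfin s a h)]
    simp_rw [hterm] at hs
    rw [← ENNReal.ofReal_sum_of_nonneg
      (fun a _ => mul_nonneg (hw0 a) (add_nonneg (hτ0 a) hδ.le)), hT₁',
      ← ENNReal.ofReal_add ht₁0 hδ.le, ← ENNReal.ofReal_add (add_nonneg ht₁0 hδ.le)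
      (Finset.sum_nonneg fun a _ => mul_nonneg (hw0 a) (add_nonneg (hτ0 a) hδ.le)),
      ENNReal.ofReal_le_ofReal_iff (add_nonneg (add_nonneg ht₁0 hδ.le)
      (Finset.sum_nonneg fun a _ => mul_nonneg (hw0 a) (add_nonneg (hτ0 a) hδ.le)))] at hs
    simp_rw [mul_add] at hs
    rw [Finset.sum_add_distrib, ← Finset.sum_mul, hsum, one_mul] at hs
    have hτle : t - t₁ - 3 * δ ≤ ∑ a ∈ s.range, w a * τ a := by linarith
    have hJ : α₂ (∑ a ∈ s.range, w a * τ a) ≤ ∑ a ∈ s.range, w a * α₂ (τ a) := by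
      have := hα₂_cvx.map_sum_le (t := s.range) (w := w) (p := τ) (fun a _ => hw0 a) hsum
        (fun a _ => hτ0 a)
      simpa only [smul_eq_mul] using this
    have hmon : α₂ (t - t₁ - 3 * δ) ≤ α₂ (∑ a ∈ s.range, w a * τ a) :=
      hα₂_mono hu (hu.trans hτle) hτle
    have hE : ENNReal.ofReal (α₁ t₁ + ∑ a ∈ s.range, w a * α₂ (τ a)) ≤
        klDiv ν (μ₁.prod μ₂) := by
      refine le_trans ?_ (hent s)
      rw [ENNReal.ofReal_add (n₁ _ ht₁0)
        (Finset.sum_nonneg fun a _ => mul_nonneg (hw0 a) (n₂ _ (hτ0 a))),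
        ENNReal.ofReal_sum_of_nonneg (fun a _ => mul_nonneg (hw0 a) (n₂ _ (hτ0 a)))]
      refine add_le_add (g₁ _ inferInstance t₁ ht₁0 hT₁'.ge) (Finset.sum_le_sum fun a _ => ?_)
      rw [ENNReal.ofReal_mul (hw0 a), ← hwo a]
      by_cases h : ν.fst (s ⁻¹' {a}) = 0
      · simp [h]
      · gcongr
        exact g₂ _ inferInstance _ (hτ0 a) (ENNReal.ofReal_toReal (hfin s a h)).le
    rw [ENNReal.ofReal_le_iff_le_toReal hH] at hE
    linarith
  have hu : 0 < t - t₁ := by linarith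
  have hcont : ContinuousAt α₂ (t - t₁) := by
    have := hα₂_cvx.continuousOn_interior
    rw [interior_Ici] at this
    exact this.continuousAt (Ioi_mem_nhds hu)
  have hlim : Tendsto (fun δ : ℝ => α₁ t₁ + α₂ (t - t₁ - 3 * δ)) (𝓝[>] 0)
      (𝓝 (α₁ t₁ + α₂ (t - t₁))) := by
    refine Tendsto.const_add _ ?_
    have h3 : Tendsto (fun δ : ℝ => t - t₁ - 3 * δ) (𝓝 0) (𝓝 (t - t₁)) := by
      have : Continuous fun δ : ℝ => t - t₁ - 3 * δ := by fun_prop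
      simpa using this.tendsto 0
    exact (hcont.tendsto.comp h3).mono_left nhdsWithin_le_nhds
  have hfinal : α₁ t₁ + α₂ (t - t₁) ≤ (klDiv ν (μ₁.prod μ₂)).toReal := by
    refine le_of_tendsto hlim ?_
    have : Set.Ioo (0 : ℝ) ((t - t₁) / 3) ∈ 𝓝[>] (0 : ℝ) := Ioo_mem_nhdsGT (by positivity)
    filter_upwards [this] with δ hδ
    exact main δ hδ.1 (by linarith [hδ.2])
  rw [ENNReal.ofReal_le_iff_le_toReal hH]
  exact (infConv_le n₁ n₂ ht₁0 hu.le (by ring)).trans hfinal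
end

section
/- (n-fold tensorization) Let 𝒳 be a Polish space, c a lower semicontinuous cost function on 𝒳×𝒳, and α ∈ 𝒜. If μ ∈ P(𝒳) satisfies α(𝒯_c(ν,μ)) ≤ H(ν|μ) for all ν ∈ P(𝒳), then for every integer n ≥ 1 the product measure μⁿ on 𝒳ⁿ satisfies n·α(𝒯_{c^{⊕n}}(ν, μⁿ)/n) ≤ H(ν|μⁿ) for all ν ∈ P(𝒳ⁿ), where c^{⊕n}((x₁,…,xₙ),(y₁,…,yₙ)) = Σ_{i=1}^n c(xᵢ,yᵢ). -/
open MeasureTheory ENNReal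

section TEHelpers

open ProbabilityTheory InformationTheory Filter Topology

lemma te_klcond {ι Y : Type*} [MeasurableSpace ι] [MeasurableSpace Y] [Finite ι]
    [MeasurableSingletonClass ι]
    (ρ : Measure ι) [IsProbabilityMeasure ρ] (κ : Kernel ι Y) [IsMarkovKernel κ]
    (μ : Measure Y) [IsProbabilityMeasure μ] :
    ∫⁻ i, klDiv (κ i) μ ∂ρ ≤ klDiv (ρ ⊗ₘ κ) (ρ.prod μ) := by
  by_cases hac : ρ ⊗ₘ κ ≪ ρ.prod μ
  swap
  · rw [klDiv_of_not_ac hac]; exact le_top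
  rw [klDiv_eq_lintegral_klFun_of_ac hac]
  set h := (ρ ⊗ₘ κ).rnDeriv (ρ.prod μ) with hh
  have hhm : Measurable h := Measure.measurable_rnDeriv _ _
  rw [lintegral_prod _ (by fun_prop)]
  apply le_of_eq
  apply lintegral_congr_ae
  rw [Filter.EventuallyEq, ae_iff_of_countable]
  · intro i hi
    have hκ : κ i = μ.withDensity (fun y => h (i, y)) := by
      ext B hB
      have h1 : (ρ ⊗ₘ κ) ({i} ×ˢ B) = ρ {i} * κ i B := by
        rw [Measure.compProd_apply_prod (measurableSet_singleton i) hB, lintegral_singleton, mul_comm]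
      have h2 : (ρ ⊗ₘ κ) ({i} ×ˢ B) = ρ {i} * ∫⁻ y in B, h (i, y) ∂μ := by
        rw [← Measure.withDensity_rnDeriv_eq _ _ hac,
          withDensity_apply _ ((measurableSet_singleton i).prod hB), ← hh,
          ← Measure.prod_restrict, lintegral_prod _ (by fun_prop), lintegral_singleton, mul_comm]
      rw [withDensity_apply _ hB]
      exact (ENNReal.mul_right_inj hi (measure_ne_top _ _)).1 (h1.symm.trans h2)
    have hac' : κ i ≪ μ := by rw [hκ]; exact withDensity_absolutelyContinuous _ _
    rw [klDiv_eq_lintegral_klFun_of_ac hac']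
    apply lintegral_congr_ae
    have := Measure.rnDeriv_withDensity μ (f := fun y => h (i, y)) (by fun_prop)
    rw [← hκ] at this
    filter_upwards [this] with y hy
    rw [hy]

lemma te_lsc {Ω : Type*} [MeasurableSpace Ω] [TopologicalSpace Ω] [OpensMeasurableSpace Ω]
    {μ : Measure Ω} {μs : ℕ → Measure Ω} {f : Ω → ℝ} (hf : LowerSemicontinuous f) (f_nn : 0 ≤ f)
    (h_opens : ∀ G, IsOpen G → μ G ≤ atTop.liminf (fun i ↦ μs i G)) :
    ∫⁻ x, ENNReal.ofReal (f x) ∂μ ≤ atTop.liminf (fun i ↦ ∫⁻ x, ENNReal.ofReal (f x) ∂(μs i)) := by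
  simp_rw [lintegral_eq_lintegral_meas_lt _ (Eventually.of_forall f_nn) hf.measurable.aemeasurable]
  calc ∫⁻ (t : ℝ) in Set.Ioi 0, μ {a | t < f a}
      ≤ ∫⁻ (t : ℝ) in Set.Ioi 0, atTop.liminf (fun i ↦ (μs i) {a | t < f a}) := ?_
    _ ≤ atTop.liminf (fun i ↦ ∫⁻ (t : ℝ) in Set.Ioi 0, (μs i) {a | t < f a}) := ?_
  · exact (lintegral_mono (fun t ↦ h_opens _ (hf.isOpen_preimage t)))
  · exact lintegral_liminf_le (fun n ↦ Antitone.measurable (fun s t hst ↦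
            measure_mono (fun ω hω ↦ lt_of_le_of_lt hst hω)))

/-- Linearised transport-entropy inequality, in approximate-coupling form. -/
def TEIneq {X : Type*} [MeasurableSpace X] (C : X × X → ℝ) (b : ℝ≥0∞) (μ : Measure X) : Prop :=
  ∀ ν : Measure X, IsProbabilityMeasure ν → ∀ ε : ℝ≥0∞, ε ≠ 0 →
    ∃ π : Measure (X × X), π.map Prod.fst = ν ∧ π.map Prod.snd = μ ∧
      ∫⁻ p, ENNReal.ofReal (C p) ∂π ≤ klDiv ν μ + b + ε

lemma te_approx {X Y ι : Type*} [MeasurableSpace X] [MeasurableSpace Y] [StandardBorelSpace Y]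
    [Nonempty Y]
    [MeasurableSpace ι] [Finite ι] [MeasurableSingletonClass ι]
    (C₁ : X × X → ℝ) (C₂ : Y × Y → ℝ) (hC₁ : Measurable C₁) (hC₂ : Measurable C₂)
    (hC₁0 : 0 ≤ C₁) (hC₂0 : 0 ≤ C₂)
    (b : ℝ≥0∞) (μ₁ : Measure X) (μ₂ : Measure Y)
    [IsProbabilityMeasure μ₁] [IsProbabilityMeasure μ₂]
    (h₂ : TEIneq C₂ b μ₂) (ν : Measure (X × Y)) [IsProbabilityMeasure ν]
    (γ : Measure (X × X)) (hγ1 : γ.map Prod.fst = ν.fst) (hγ2 : γ.map Prod.snd = μ₁)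
    (q : X → ι) (hq : Measurable q) (ε : ℝ≥0∞) (hε : ε ≠ 0) :
    ∃ π : Measure ((X × Y) × (X × Y)), IsProbabilityMeasure π ∧
      π.fst.fst = ν.fst ∧
      (∀ (S : Set ι) (B : Set Y), MeasurableSet B →
        π.fst ((q ⁻¹' S) ×ˢ B) = ν ((q ⁻¹' S) ×ˢ B)) ∧
      π.snd = μ₁.prod μ₂ ∧
      ∫⁻ p, ENNReal.ofReal (C₁ (p.1.1, p.2.1) + C₂ (p.1.2, p.2.2)) ∂π ≤
        ∫⁻ p, ENNReal.ofReal (C₁ p) ∂γ + (klDiv ν (ν.fst.prod μ₂) + b + ε) := by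
  have : IsProbabilityMeasure γ := by
    have : IsProbabilityMeasure (γ.map Prod.snd) := by rw [hγ2]; infer_instance
    exact Measure.isProbabilityMeasure_of_map Prod.snd
  set ρ : Measure (ι × Y) := ν.map (Prod.map q id) with hρ
  have hqid : Measurable (Prod.map q (id : Y → Y)) := hq.prodMap measurable_id
  have : IsProbabilityMeasure ρ := Measure.isProbabilityMeasure_map hqid.aemeasurable
  set κ := ρ.condKernel with hκ
  have hdis : ρ.fst ⊗ₘ κ = ρ := ρ.disintegrate _
  have hρ1 : ρ.fst = ν.fst.map q := by
    rw [Measure.fst, Measure.fst, hρ, Measure.map_map measurable_fst hqid,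
      Measure.map_map hq measurable_fst]; rfl
  choose g hg1 hg2 hg3 using fun i => h₂ (κ i) inferInstance ε hε
  have hgp : ∀ i, IsProbabilityMeasure (g i) := fun i => by
    have : IsProbabilityMeasure ((g i).map Prod.snd) := by rw [hg2]; infer_instance
    exact Measure.isProbabilityMeasure_of_map Prod.snd
  let G : Kernel ι (Y × Y) := ⟨g, measurable_of_finite g⟩
  have hG : IsMarkovKernel G := ⟨hgp⟩
  have hqf : Measurable (fun p : X × X => q p.1) := hq.comp measurable_fst
  let K : Kernel (X × X) (Y × Y) := G.comap (fun p => q p.1) hqf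
  have hK : IsMarkovKernel K := inferInstance
  let sh : (X × X) × (Y × Y) → (X × Y) × (X × Y) := fun p => ((p.1.1, p.2.1), (p.1.2, p.2.2))
  have hsh : Measurable sh := by fun_prop
  have hπ : IsProbabilityMeasure ((γ ⊗ₘ K).map sh) :=
    Measure.isProbabilityMeasure_map hsh.aemeasurable
  have hfst : ∀ (A : Set X) (B : Set Y), MeasurableSet A → MeasurableSet B →
      ((γ ⊗ₘ K).map sh).fst (A ×ˢ B) = ∫⁻ x in A, κ (q x) B ∂ν.fst := by
    intro A B hA hB
    rw [Measure.fst_apply (hA.prod hB), Measure.map_apply hsh (measurable_fst (hA.prod hB))]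
    have : sh ⁻¹' (Prod.fst ⁻¹' (A ×ˢ B)) = (Prod.fst ⁻¹' A) ×ˢ (Prod.fst ⁻¹' B) := by
      ext; simp [sh]
    rw [this, Measure.compProd_apply_prod (measurable_fst hA) (measurable_fst hB), ← hγ1,
      setLIntegral_map hA _ measurable_fst]
    · apply lintegral_congr
      intro p
      simp only [K, Kernel.comap_apply]
      change g (q p.1) _ = _
      rw [← hg1, Measure.map_apply measurable_fst hB]
    · exact (κ.measurable_coe hB).comp hq
  refine ⟨(γ ⊗ₘ K).map sh, hπ, ?_, ?_, ?_, ?_⟩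
  · ext A hA
    rw [Measure.fst_apply hA, ← Set.prod_univ, hfst _ _ hA MeasurableSet.univ]
    simp
  · intro S B hB
    have hS : MeasurableSet S := S.toFinite.measurableSet
    rw [hfst _ _ (hq hS) hB, ← setLIntegral_map hS (κ.measurable_coe hB) hq, ← hρ1,
      ← Measure.compProd_apply_prod hS hB, hdis, hρ, Measure.map_apply hqid (hS.prod hB)]
    congr 1
  · symm
    apply Measure.prod_eq
    intro A B hA hB
    rw [Measure.snd_apply (hA.prod hB), Measure.map_apply hsh (measurable_snd (hA.prod hB))]
    have : sh ⁻¹' (Prod.snd ⁻¹' (A ×ˢ B)) = (Prod.snd ⁻¹' A) ×ˢ (Prod.snd ⁻¹' B) := by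
      ext; simp [sh]
    rw [this, Measure.compProd_apply_prod (measurable_snd hA) (measurable_snd hB)]
    have : ∀ p, K p (Prod.snd ⁻¹' B) = μ₂ B := by
      intro p
      simp only [K, Kernel.comap_apply]
      change g (q p.1) _ = _
      rw [← hg2 (q p.1), Measure.map_apply measurable_snd hB]
    simp_rw [this]
    rw [lintegral_const, Measure.restrict_apply_univ, ← Measure.map_apply measurable_snd hA, hγ2,
      mul_comm]
  · rw [lintegral_map (by fun_prop) hsh, Measure.lintegral_compProd (by fun_prop)]
    simp only [sh]
    have e1 : ∀ (a : X × X) (c : Y × Y), ENNReal.ofReal (C₁ (a.1, a.2) + C₂ (c.1, c.2)) =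
      ENNReal.ofReal (C₁ a) + ENNReal.ofReal (C₂ c) := fun a c => ENNReal.ofReal_add (hC₁0 _) (hC₂0 _)
    simp_rw [e1]
    have e2 : ∀ a, ∫⁻ c, (ENNReal.ofReal (C₁ a) + ENNReal.ofReal (C₂ c)) ∂(K a) ≤
        ENNReal.ofReal (C₁ a) + (klDiv (κ (q a.1)) μ₂ + b + ε) := by
      intro a
      rw [lintegral_add_left (by fun_prop), lintegral_const, measure_univ, mul_one]
      gcongr
      exact hg3 (q a.1)
    refine (lintegral_mono e2).trans ?_
    rw [lintegral_add_left (by fun_prop)]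
    gcongr
    have mk : Measurable (fun i => klDiv (κ i) μ₂) := measurable_of_finite _
    rw [lintegral_add_right _ measurable_const, lintegral_add_right _ measurable_const]
    simp only [lintegral_const, measure_univ, mul_one]
    gcongr
    have : ∫⁻ a, klDiv (κ (q a.1)) μ₂ ∂γ = ∫⁻ i, klDiv (κ i) μ₂ ∂ρ.fst := by
      rw [hρ1, lintegral_map mk hq, ← hγ1]
      exact (lintegral_map (mk.comp hq) measurable_fst).symm
    rw [this]
    refine (te_klcond ρ.fst κ μ₂).trans ?_
    rw [hdis]
    have : ρ.fst.prod μ₂ = (ν.fst.prod μ₂).map (Prod.map q id) := by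
      rw [hρ1, ← Measure.map_prod_map _ _ hq measurable_id, Measure.map_id]
    rw [this]
    exact klDiv_map_le _ _ hqid

lemma te_prod {X Y : Type*} [TopologicalSpace X] [PolishSpace X] [MeasurableSpace X] [BorelSpace X]
    [TopologicalSpace Y] [PolishSpace Y] [MeasurableSpace Y] [BorelSpace Y]
    (C₁ : X × X → ℝ) (C₂ : Y × Y → ℝ) (hC₁ : LowerSemicontinuous C₁)
    (hC₂ : LowerSemicontinuous C₂)
    (hC₁0 : 0 ≤ C₁) (hC₂0 : 0 ≤ C₂)
    (b₁ b₂ : ℝ≥0∞) (μ₁ : Measure X) (μ₂ : Measure Y)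
    [IsProbabilityMeasure μ₁] [IsProbabilityMeasure μ₂]
    (h₁ : TEIneq C₁ b₁ μ₁) (h₂ : TEIneq C₂ b₂ μ₂) :
    TEIneq (fun p : (X × Y) × (X × Y) => C₁ (p.1.1, p.2.1) + C₂ (p.1.2, p.2.2)) (b₁ + b₂)
      (μ₁.prod μ₂) := by
  intro ν hν ε hε
  have : Nonempty X := nonempty_of_isProbabilityMeasure μ₁
  have : Nonempty Y := nonempty_of_isProbabilityMeasure μ₂
  have hε2 : ε / 2 ≠ 0 := by simpa using hε
  obtain ⟨γ, hγ1, hγ2, hγ3⟩ := h₁ ν.fst inferInstance (ε / 2) hε2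
  -- basis
  obtain ⟨U, hU⟩ : ∃ U : ℕ → Set X, TopologicalSpace.IsTopologicalBasis (Set.range U) := by
    have hb := TopologicalSpace.isBasis_countableBasis X
    obtain ⟨U, hU⟩ := (TopologicalSpace.countable_countableBasis X).exists_eq_range
      (by
        obtain ⟨x⟩ := ‹Nonempty X›
        obtain ⟨v, hv, -⟩ := hb.exists_subset_of_mem_open (Set.mem_univ x) isOpen_univ
        exact ⟨v, hv⟩)
    exact ⟨U, hU ▸ hb⟩
  have hUo : ∀ j, IsOpen (U j) := fun j => hU.isOpen ⟨j, rfl⟩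
  let q : (k : ℕ) → X → (Fin k → Prop) := fun k x j => x ∈ U j
  have hq : ∀ k, Measurable (q k) := fun k => by
    rw [measurable_pi_iff]
    intro j
    exact measurableSet_setOfPred.1 (hUo j).measurableSet
  choose π hπp hπ1 hπ2 hπ3 hπ4 using fun k => te_approx C₁ C₂ hC₁.measurable hC₂.measurable hC₁0 hC₂0
    b₂ μ₁ μ₂ h₂ ν γ hγ1 hγ2 (q k) (hq k) (ε / 2) hε2
  have hπ1' : ∀ k, (π k).fst.snd = ν.snd := fun k => by
    ext B hB
    rw [Measure.snd_apply hB, Measure.snd_apply hB, ← Set.univ_prod]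
    simpa using hπ2 k Set.univ B hB
  -- cost bound
  have hbound : ∀ k, ∫⁻ p, ENNReal.ofReal (C₁ (p.1.1, p.2.1) + C₂ (p.1.2, p.2.2)) ∂(π k) ≤
      klDiv ν (μ₁.prod μ₂) + (b₁ + b₂) + ε := by
    intro k
    refine (hπ4 k).trans ?_
    have hchain : klDiv ν (μ₁.prod μ₂) = klDiv ν.fst μ₁ + klDiv ν (ν.fst.prod μ₂) := by
      have := klDiv_compProd_eq_add ν.fst μ₁ ν.condKernel (Kernel.const X μ₂)
      rwa [Measure.disintegrate, Measure.compProd_const, Measure.compProd_const] at this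
    rw [hchain]
    calc _ ≤ (klDiv ν.fst μ₁ + b₁ + ε / 2) + (klDiv ν (ν.fst.prod μ₂) + b₂ + ε / 2) := by gcongr
      _ = klDiv ν.fst μ₁ + klDiv ν (ν.fst.prod μ₂) + (b₁ + b₂) + (ε / 2 + ε / 2) := by ring
      _ = _ := by rw [ENNReal.add_halves]
  -- weak convergence of first marginals
  let P : ℕ → ProbabilityMeasure ((X × Y) × (X × Y)) := fun k => ⟨π k, hπp k⟩
  have hfp : ∀ k, IsProbabilityMeasure (π k).fst := fun k => inferInstance
  let F : ℕ → ProbabilityMeasure (X × Y) := fun k => ⟨(π k).fst, hfp k⟩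
  let N : ProbabilityMeasure (X × Y) := ⟨ν, hν⟩
  have hF : Tendsto F atTop (𝓝 N) := by
    let 𝒜 : Set (Set X) := {A | MeasurableSet A ∧ ∀ᶠ k in atTop, ∃ S, A = q k ⁻¹' S}
    let S : Set (Set (X × Y)) := {s | ∃ A ∈ 𝒜, ∃ B, MeasurableSet B ∧ s = A ×ˢ B}
    have hS : IsPiSystem S := by
      rintro _ ⟨A, ⟨hAm, hA⟩, B, hB, rfl⟩ _ ⟨A', ⟨hAm', hA'⟩, B', hB', rfl⟩ -
      refine ⟨A ∩ A', ⟨hAm.inter hAm', ?_⟩, B ∩ B', hB.inter hB', Set.prod_inter_prod⟩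
      filter_upwards [hA, hA'] with k ⟨T, hT⟩ ⟨T', hT'⟩
      exact ⟨T ∩ T', by rw [hT, hT', Set.preimage_inter]⟩
    refine hS.tendsto_probabilityMeasure_of_tendsto_of_mem ?_ ?_ ?_
    · rintro _ ⟨A, ⟨hAm, hA⟩, B, hB, rfl⟩
      exact hAm.prod hB
    · rintro u hu ⟨x, y⟩ hxy
      obtain ⟨V, W, hV, hW, hxV, hyW, hVW⟩ := isOpen_prod_iff.1 hu x y hxy
      obtain ⟨_, ⟨j, rfl⟩, hxj, hjV⟩ := hU.exists_subset_of_mem_open hxV hV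
      refine ⟨U j ×ˢ W, ⟨U j, ⟨(hUo j).measurableSet, ?_⟩, W, hW.measurableSet, rfl⟩, ?_, ?_⟩
      · filter_upwards [eventually_gt_atTop j] with k hk
        exact ⟨{f | f ⟨j, hk⟩}, rfl⟩
      · exact ((hUo j).prod hW).mem_nhds ⟨hxj, hyW⟩
      · exact (Set.prod_mono hjV le_rfl).trans hVW
    · rintro _ ⟨A, ⟨hAm, hA⟩, B, hB, rfl⟩
      apply tendsto_const_nhds.congr'
      filter_upwards [hA] with k ⟨T, hT⟩
      have := hπ2 k T B hB
      rw [← hT] at this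
      exact congrArg ENNReal.toNNReal this.symm
  -- tightness
  have ht : IsTightMeasureSet {((μ : ProbabilityMeasure ((X × Y) × (X × Y))) :
      Measure ((X × Y) × (X × Y))) | μ ∈ Set.range P} := by
    apply IsTightMeasureSet.prodMk
    · apply IsTightMeasureSet.prodMk
      · refine (isTightMeasureSet_singleton (μ := ν.fst)).subset ?_
        rintro _ ⟨_, ⟨_, ⟨_, ⟨k, rfl⟩, rfl⟩, rfl⟩, rfl⟩
        exact hπ1 k
      · refine (isTightMeasureSet_singleton (μ := ν.snd)).subset ?_
        rintro _ ⟨_, ⟨_, ⟨_, ⟨k, rfl⟩, rfl⟩, rfl⟩, rfl⟩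
        exact hπ1' k
    · refine (isTightMeasureSet_singleton (μ := μ₁.prod μ₂)).subset ?_
      rintro _ ⟨_, ⟨_, ⟨k, rfl⟩, rfl⟩, rfl⟩
      exact hπ3 k
  let _ := TopologicalSpace.upgradeIsCompletelyMetrizable X
  let _ := TopologicalSpace.upgradeIsCompletelyMetrizable Y
  have hc := isCompact_closure_of_isTightMeasureSet ht
  obtain ⟨Q, -, φ, hφ, hlim⟩ := hc.tendsto_subseq (x := P) (fun k => subset_closure ⟨k, rfl⟩)
  refine ⟨Q, ?_, ?_, ?_⟩
  · have h1 := ((ProbabilityMeasure.continuous_map (Ω := (X × Y) × (X × Y)) (Ω' := X × Y)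
      continuous_fst).tendsto Q).comp hlim
    have h2 := hF.comp hφ.tendsto_atTop
    have := tendsto_nhds_unique h1 h2
    exact congrArg (fun R : ProbabilityMeasure (X × Y) => (R : Measure (X × Y))) this
  · have h1 := ((ProbabilityMeasure.continuous_map (Ω := (X × Y) × (X × Y)) (Ω' := X × Y)
      continuous_snd).tendsto Q).comp hlim
    let M : ProbabilityMeasure (X × Y) := ⟨μ₁.prod μ₂, inferInstance⟩
    have h2 : Tendsto (fun _ : ℕ => M) atTop (𝓝 M) := tendsto_const_nhds
    have h3 : Tendsto (fun _ : ℕ => M) atTop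
        (𝓝 (Q.map (Ω' := X × Y) continuous_snd.measurable.aemeasurable)) :=
      h1.congr (fun k => Subtype.ext (hπ3 (φ k)))
    have := tendsto_nhds_unique h3 h2
    exact congrArg (fun R : ProbabilityMeasure (X × Y) => (R : Measure (X × Y))) this
  · refine (te_lsc (μs := fun k => π (φ k)) ?_ ?_ ?_).trans ?_
    · exact (hC₁.comp (g := fun p : (X × Y) × (X × Y) => (p.1.1, p.2.1)) (by fun_prop)).add
        (hC₂.comp (g := fun p : (X × Y) × (X × Y) => (p.1.2, p.2.2)) (by fun_prop))
    · intro p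
      exact add_nonneg (hC₁0 _) (hC₂0 _)
    · intro O hO
      exact ProbabilityMeasure.le_liminf_measure_open_of_tendsto hlim hO
    · refine liminf_le_of_le (by isBoundedDefault) ?_
      intro a ha
      obtain ⟨k, hk⟩ := ha.exists
      exact hk.trans (hbound _)

lemma te_equiv {Z Z' : Type*} [MeasurableSpace Z] [MeasurableSpace Z'] (e : Z' ≃ᵐ Z)
    (C : Z × Z → ℝ) (hC : Measurable C) (b : ℝ≥0∞) (μ' : Measure Z') [IsProbabilityMeasure μ']
    (h : TEIneq C b (μ'.map e)) : TEIneq (fun p : Z' × Z' => C (e p.1, e p.2)) b μ' := by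
  intro ν hν ε hε
  obtain ⟨π, h1, h2, h3⟩ := h (ν.map e) (Measure.isProbabilityMeasure_map e.measurable.aemeasurable)
    ε hε
  have hm : Measurable (Prod.map e.symm e.symm) := e.symm.measurable.prodMap e.symm.measurable
  refine ⟨π.map (Prod.map e.symm e.symm), ?_, ?_, ?_⟩
  · rw [Measure.map_map measurable_fst hm]
    have : Prod.fst ∘ Prod.map e.symm e.symm = e.symm ∘ Prod.fst := rfl
    rw [this, ← Measure.map_map e.symm.measurable measurable_fst, h1]
    simp
  · rw [Measure.map_map measurable_snd hm]
    have : Prod.snd ∘ Prod.map e.symm e.symm = e.symm ∘ Prod.snd := rfl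
    rw [this, ← Measure.map_map e.symm.measurable measurable_snd, h2]
    simp
  · rw [lintegral_map (by have := e.measurable; fun_prop) hm]
    simp only [Prod.map_fst, Prod.map_snd, MeasurableEquiv.apply_symm_apply]
    refine h3.trans ?_
    gcongr
    exact klDiv_map_le _ _ e.measurable

lemma te_pi {X : Type*} [TopologicalSpace X] [PolishSpace X] [MeasurableSpace X] [BorelSpace X]
    (C : X × X → ℝ) (hC : LowerSemicontinuous C) (hC0 : 0 ≤ C) (b : ℝ≥0∞)
    (μ : Measure X) [IsProbabilityMeasure μ] (h : TEIneq C b μ) (n : ℕ) :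
    TEIneq (fun p : (Fin n → X) × (Fin n → X) => ∑ i, C (p.1 i, p.2 i)) (n * b)
      (Measure.pi fun _ : Fin n => μ) := by
  induction n with
  | zero =>
    intro ν hν ε hε
    refine ⟨ν.prod (Measure.pi fun _ : Fin 0 => μ), ?_, ?_, ?_⟩
    · change Measure.fst _ = _
      simp
    · change Measure.snd _ = _
      simp
    · simp
  | succ n ih =>
    have hC' : LowerSemicontinuous
        (fun p : (Fin n → X) × (Fin n → X) => ∑ i, C (p.1 i, p.2 i)) :=
      lowerSemicontinuous_sum fun i _ =>
        hC.comp (g := fun p : (Fin n → X) × (Fin n → X) => (p.1 i, p.2 i)) (by fun_prop)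
    have hp := te_prod C _ hC hC' hC0 (fun p => Finset.sum_nonneg fun i _ => hC0 _) b (n * b) μ
      (Measure.pi fun _ : Fin n => μ) h ih
    have hmp := measurePreserving_piFinSuccAbove (fun _ : Fin (n + 1) => μ) 0
    have := te_equiv (MeasurableEquiv.piFinSuccAbove (fun _ : Fin (n + 1) => X) 0) _ (by
      have h1 := hC.measurable
      have h2 := hC'.measurable
      have h3 : Measurable fun p : (X × (Fin n → X)) × (X × (Fin n → X)) =>
        ∑ i, C (p.1.2 i, p.2.2 i) := h2.comp (g := fun p : (Fin n → X) × (Fin n → X) =>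
          ∑ i, C (p.1 i, p.2 i)) (f := fun p : (X × (Fin n → X)) × (X × (Fin n → X)) =>
          (p.1.2, p.2.2)) (by fun_prop)
      exact (h1.comp (by fun_prop)).add h3) (b + n * b)
      (Measure.pi fun _ : Fin (n + 1) => μ) (hmp.map_eq ▸ hp)
    have hb : ((n + 1 : ℕ) : ℝ≥0∞) * b = b + n * b := by push_cast; ring
    rw [hb]
    simp only [Fin.sum_univ_succ]
    exact this

lemma te_support (α : ℝ → ℝ)
    (hα_cvx : ConvexOn ℝ (Set.Ici 0) α) (hα_mono : MonotoneOn α (Set.Ici 0))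
    (hα_zero : α 0 = 0) (t : ℝ) (ht : 0 < t) :
    ∃ m : ℝ, 0 ≤ m ∧ α t ≤ m * t ∧ ∀ s, 0 ≤ s → α t + m * (s - t) ≤ α s := by
  have hi : t ∈ interior (Set.Ici (0 : ℝ)) := by simpa using ht
  set m := derivWithin α (Set.Ioi t) t with hm
  have key : ∀ s, 0 ≤ s → α t + m * (s - t) ≤ α s := by
    intro s hs
    rcases lt_trichotomy s t with h | h | h
    · have h1 := hα_cvx.slope_le_leftDeriv_of_mem_interior (x := s) (y := t) hs hi h
      have h2 := hα_cvx.leftDeriv_le_rightDeriv_of_mem_interior hi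
      have h3 := h1.trans h2
      rw [slope_def_field, div_le_iff₀ (by linarith)] at h3
      linarith
    · subst h; simp
    · have h1 := hα_cvx.rightDeriv_le_slope_of_mem_interior (x := t) (y := s) hi hs h
      rw [slope_def_field, le_div_iff₀ (by linarith)] at h1
      linarith
  have h0 := key 0 le_rfl
  have hpos : 0 ≤ α t := hα_zero ▸ hα_mono (Set.mem_Ici.2 le_rfl) (Set.mem_Ici.2 ht.le) ht.le
  rw [hα_zero] at h0
  refine ⟨m, ?_, by linarith, key⟩
  by_contra hneg
  push Not at hneg
  nlinarith

lemma te_relEntropy {X : Type*} [MeasurableSpace X] (ν μ : Measure X) [IsProbabilityMeasure ν]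
    [IsProbabilityMeasure μ] : relEntropy ν μ = klDiv ν μ := by
  rw [klDiv_eq_lintegral_klFun, relEntropy]
  congr 1
  apply lintegral_congr
  intro x
  congr 1
  rw [klFun_apply]
  ring

lemma te_base {X : Type*} [MeasurableSpace X]
    (c : X → X → ℝ) (hcm : Measurable fun p : X × X => c p.1 p.2)
    (α : ℝ → ℝ) (μ : Measure X) [IsProbabilityMeasure μ]
    (hT : ∀ ν : Measure X, IsProbabilityMeasure ν →
      extRealFun α (optCost c ν μ) ≤ relEntropy ν μ)
    (m d : ℝ) (hm : 0 ≤ m) (h : ∀ s, 0 ≤ s → m * s ≤ α s + d) :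
    TEIneq (fun p : X × X => m * c p.1 p.2) (ENNReal.ofReal d) μ := by
  intro ν hν ε hε
  have hprod : (ν.prod μ).map Prod.fst = ν ∧ (ν.prod μ).map Prod.snd = μ := by
    constructor
    · change Measure.fst _ = _
      simp
    · change Measure.snd _ = _
      simp
  by_cases hk : klDiv ν μ = ∞
  · exact ⟨ν.prod μ, hprod.1, hprod.2, by simp [hk]⟩
  rcases hm.eq_or_lt with rfl | hm
  · exact ⟨ν.prod μ, hprod.1, hprod.2, by simp⟩
  have hm0 : ENNReal.ofReal m ≠ 0 := by simpa using hm
  have hle : optCost c ν μ ≤ (klDiv ν μ + ENNReal.ofReal d) / ENNReal.ofReal m := by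
    apply ENNReal.le_of_forall_nnreal_lt
    intro r hr
    rw [ENNReal.le_div_iff_mul_le (Or.inl hm0) (Or.inl ENNReal.ofReal_ne_top)]
    have h1 : ENNReal.ofReal (α r) ≤ klDiv ν μ := by
      rw [← te_relEntropy]
      refine le_trans ?_ (hT ν hν)
      exact le_iSup₂_of_le (r : ℝ) ⟨r.2, by simpa using hr.le⟩ le_rfl
    calc (r : ℝ≥0∞) * ENNReal.ofReal m = ENNReal.ofReal (m * r) := by
          rw [ENNReal.ofReal_mul hm.le, mul_comm, ENNReal.ofReal_coe_nnreal]
      _ ≤ ENNReal.ofReal (α r + d) := ENNReal.ofReal_le_ofReal (h r r.2)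
      _ ≤ ENNReal.ofReal (α r) + ENNReal.ofReal d := ENNReal.ofReal_add_le
      _ ≤ _ := by gcongr
  have hlt : optCost c ν μ < (klDiv ν μ + ENNReal.ofReal d + ε) / ENNReal.ofReal m := by
    refine hle.trans_lt ?_
    apply ENNReal.div_lt_div_right hm0 ENNReal.ofReal_ne_top
    exact ENNReal.lt_add_right (by simp [hk]) hε
  rw [optCost] at hlt
  simp only [iInf_lt_iff] at hlt
  obtain ⟨π, hπ, hlt⟩ := hlt
  refine ⟨π, hπ.1, hπ.2, ?_⟩
  simp_rw [ENNReal.ofReal_mul hm.le]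
  rw [lintegral_const_mul _ (by fun_prop)]
  have := hlt.le
  rw [ENNReal.le_div_iff_mul_le (Or.inl hm0) (Or.inl ENNReal.ofReal_ne_top)] at this
  rwa [mul_comm]

end TEHelpers

/-- `n`-fold tensorization: if `μ` satisfies `α(𝒯_c) ≤ H` with `α` convex increasing
and `α(0) = 0`, then the product measure `μⁿ` satisfies
`n·α(𝒯_{c^{⊕n}}(ν, μⁿ)/n) ≤ H(ν|μⁿ)` for all probability measures `ν` on `𝒳ⁿ`. -/
theorem transport_entropy_tensorization_n
    {X : Type*} [TopologicalSpace X] [PolishSpace X] [MeasurableSpace X] [BorelSpace X]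
    (c : X → X → ℝ) (hc_nonneg : ∀ x y, 0 ≤ c x y)
    (hc_lsc : LowerSemicontinuous fun p : X × X => c p.1 p.2)
    (α : ℝ → ℝ)
    (hα_cvx : ConvexOn ℝ (Set.Ici 0) α) (hα_mono : MonotoneOn α (Set.Ici 0))
    (hα_zero : α 0 = 0)
    (μ : Measure X) [IsProbabilityMeasure μ]
    (hT : ∀ ν : Measure X, IsProbabilityMeasure ν →
      extRealFun α (optCost c ν μ) ≤ relEntropy ν μ)
    (n : ℕ) (hn : 1 ≤ n)
    (ν : Measure (Fin n → X)) [IsProbabilityMeasure ν] :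
    extRealFun (fun t => (n : ℝ) * α (t / n))
        (optCost (fun x y => ∑ i, c (x i) (y i)) ν (Measure.pi fun _ : Fin n => μ)) ≤
      relEntropy ν (Measure.pi fun _ : Fin n => μ) := by
  refine iSup₂_le ?_
  rintro t ⟨ht0, ht⟩
  rw [te_relEntropy]
  rcases ht0.eq_or_lt with rfl | htpos
  · simp [hα_zero]
  have hn0 : (0 : ℝ) < n := by exact_mod_cast hn
  have hs : 0 < t / n := div_pos htpos hn0
  obtain ⟨m, hm, hmt, hsup⟩ := te_support α hα_cvx hα_mono hα_zero (t / n) hs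
  have hcm := hc_lsc.measurable
  have hbase := te_base c hcm α μ hT m (m * (t / n) - α (t / n)) hm
    (fun s hs => by have := hsup s hs; linarith)
  have hlsc : LowerSemicontinuous (fun p : X × X => m * c p.1 p.2) :=
    (continuous_const_mul m).comp_lowerSemicontinuous hc_lsc
      (fun _ _ hab => mul_le_mul_of_nonneg_left hab hm)
  have hpi := te_pi _ hlsc (fun p => mul_nonneg hm (hc_nonneg _ _)) _ μ hbase n
  have hle : ENNReal.ofReal (m * t) ≤ InformationTheory.klDiv ν (Measure.pi fun _ : Fin n => μ) +
      n * ENNReal.ofReal (m * (t / n) - α (t / n)) := by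
    apply ENNReal.le_of_forall_pos_le_add
    intro ε hε _
    obtain ⟨π, h1, h2, h3⟩ := hpi ν inferInstance ε (by exact_mod_cast hε.ne')
    refine le_trans ?_ h3
    have h4 : ENNReal.ofReal t ≤ ∫⁻ p, ENNReal.ofReal (∑ i, c (p.1 i) (p.2 i)) ∂π :=
      ht.trans (iInf₂_le π ⟨h1, h2⟩)
    simp_rw [← Finset.mul_sum, ENNReal.ofReal_mul hm]
    rw [lintegral_const_mul' _ _ ENNReal.ofReal_ne_top]
    gcongr
  have hd : 0 ≤ (n : ℝ) * (m * (t / n) - α (t / n)) := mul_nonneg hn0.le (by linarith)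
  have e : (n : ℝ) * α (t / n) = m * t - n * (m * (t / n) - α (t / n)) := by
    field_simp
    ring
  have e2 : (n : ℝ≥0∞) * ENNReal.ofReal (m * (t / n) - α (t / n)) =
      ENNReal.ofReal (n * (m * (t / n) - α (t / n))) := by
    rw [ENNReal.ofReal_mul hn0.le, ENNReal.ofReal_natCast]
  change ENNReal.ofReal ((n : ℝ) * α (t / n)) ≤ _
  rw [e, ENNReal.ofReal_sub _ hd, tsub_le_iff_right, ← e2]
  exact hle
end
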